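/- arXiv:1208.0441 — 3 statements merged into one kernel-verified Lean document; each statement's English description precedes it below -/
import Mathlib

section
/- Let p ∈ ℝ[x₁,…,xₙ] be a real-zero polynomial with respect to e ∈ ℝⁿ and assume its rigidly convex set S_e(p) is compact. Assume further that for each boundary point a of S_e(p) and each irreducible factor p_i of p with p_i(a) = 0, the point a is a smooth point of p_i and p_i does not vanish identically on any full affine line through a. Then S_e(p) is a spectrahedral shadow. -/
open MvPolynomial

/-- The univariate polynomial `t ↦ h(a + t·v)` obtained by restricting a multivariate
polynomial `h` to the line through `a` with direction `v`. -/
noncomputable def linePoly {n : ℕ} (h : MvPolynomial (Fin n) ℝ) (a v : Fin n → ℝ) :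
    Polynomial ℝ :=
  MvPolynomial.aeval (fun i => Polynomial.C (a i) + Polynomial.C (v i) * Polynomial.X) h

/-- A real univariate polynomial has only real roots. -/
def RealRooted (q : Polynomial ℝ) : Prop :=
  ∀ z : ℂ, Polynomial.aeval z q = 0 → z.im = 0

/-- A real univariate polynomial has only non-negative real roots. -/
def NonnegRealRooted (q : Polynomial ℝ) : Prop :=
  ∀ z : ℂ, Polynomial.aeval z q = 0 → z.im = 0 ∧ 0 ≤ z.re

/-- `h` is hyperbolic in direction `e`: `h(e) ≠ 0` and for all `a` the univariate
polynomial `t ↦ h(a - t·e)` has only real roots. -/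
def IsHyperbolic {n : ℕ} (h : MvPolynomial (Fin n) ℝ) (e : Fin n → ℝ) : Prop :=
  MvPolynomial.eval e h ≠ 0 ∧ ∀ a : Fin n → ℝ, RealRooted (linePoly h a (-e))

/-- The hyperbolicity cone `Λ_e(h)`. -/
def hypCone {n : ℕ} (h : MvPolynomial (Fin n) ℝ) (e : Fin n → ℝ) : Set (Fin n → ℝ) :=
  {a | NonnegRealRooted (linePoly h a (-e))}

/-- multiplicity (order of vanishing) of `h` at `a`: the smallest `m` such that the
degree-`m` homogeneous component of `h(x + a)` is non-zero. -/
noncomputable def multAt {n : ℕ} (h : MvPolynomial (Fin n) ℝ) (a : Fin n → ℝ) : ℕ :=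
  sInf {m | MvPolynomial.homogeneousComponent m
    (MvPolynomial.aeval (fun i => MvPolynomial.X i + MvPolynomial.C (a i)) h) ≠ 0}

/-- `p` is a real-zero polynomial with respect to `e`. -/
def IsRealZero {n : ℕ} (p : MvPolynomial (Fin n) ℝ) (e : Fin n → ℝ) : Prop :=
  MvPolynomial.eval e p ≠ 0 ∧ ∀ v : Fin n → ℝ, RealRooted (linePoly p e v)

/-- The rigidly convex set `S_e(p)` of a real-zero polynomial. -/
def rigidSet {n : ℕ} (p : MvPolynomial (Fin n) ℝ) (e : Fin n → ℝ) : Set (Fin n → ℝ) :=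
  {a | ∀ t : ℝ, 0 ≤ t → t < 1 → ¬ (linePoly p e (a - e)).IsRoot t}

/-- A polynomial is strictly quasi-concave at `a` if its Hessian at `a` is negative
definite on the orthogonal complement of its gradient at `a`. -/
def StrictQuasiConcaveAt {n : ℕ} (g : MvPolynomial (Fin n) ℝ) (a : Fin n → ℝ) : Prop :=
  ∀ v : Fin n → ℝ, v ≠ 0 →
    (∑ i, v i * MvPolynomial.eval a (MvPolynomial.pderiv i g)) = 0 →
    (∑ i, ∑ j, v i * v j *
      MvPolynomial.eval a (MvPolynomial.pderiv i (MvPolynomial.pderiv j g))) < 0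

/-- A spectrahedral shadow (cone version): a linear image of
`{a : a₁M₁ + ⋯ + aₘMₘ ⪰ 0}` for real symmetric matrices `Mᵢ`. -/
def IsSpectrahedralShadowCone {n : ℕ} (S : Set (Fin n → ℝ)) : Prop :=
  ∃ (m d : ℕ) (M : Fin m → Matrix (Fin d) (Fin d) ℝ)
    (L : (Fin m → ℝ) →ₗ[ℝ] (Fin n → ℝ)),
      (∀ i, (M i).IsSymm) ∧ S = L '' {a | (∑ i, a i • M i).PosSemidef}

/-- A spectrahedral shadow: a linear image of
`{b : M₀ + b₁M₁ + ⋯ + bₘMₘ ⪰ 0}` for real symmetric matrices `Mᵢ`. -/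
def IsSpectrahedralShadow {n : ℕ} (S : Set (Fin n → ℝ)) : Prop :=
  ∃ (m d : ℕ) (M₀ : Matrix (Fin d) (Fin d) ℝ) (M : Fin m → Matrix (Fin d) (Fin d) ℝ)
    (L : (Fin m → ℝ) →ₗ[ℝ] (Fin n → ℝ)),
      M₀.IsSymm ∧ (∀ i, (M i).IsSymm) ∧
      S = L '' {b | (M₀ + ∑ i, b i • M i).PosSemidef}

/-- A convex set is pointed if it contains no affine line. -/
def PointedSet {n : ℕ} (S : Set (Fin n → ℝ)) : Prop :=
  ¬ ∃ (a v : Fin n → ℝ), v ≠ 0 ∧ ∀ t : ℝ, a + t • v ∈ S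

/-- Directional derivative `∂_e h = Σᵢ eᵢ ∂h/∂xᵢ`. -/
noncomputable def dirDeriv {n : ℕ} (e : Fin n → ℝ) (h : MvPolynomial (Fin n) ℝ) :
    MvPolynomial (Fin n) ℝ :=
  ∑ i, e i • MvPolynomial.pderiv i h

namespace RCS

/-! ### Spectrahedra and shadows in coordinate-free form -/

/-- A spectrahedron in a real vector space `W`. -/
def Spec {W : Type} [AddCommGroup W] [Module ℝ W] (C : Set W) : Prop :=
  ∃ (J : Type) (_ : Fintype J) (M₀ : Matrix J J ℝ) (M : W →ₗ[ℝ] Matrix J J ℝ),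
    M₀.IsSymm ∧ (∀ w, (M w).IsSymm) ∧ C = {w | (M₀ + M w).PosSemidef}

/-- A shadow of a spectrahedron, coordinate free. -/
def Shadow {E : Type} [AddCommGroup E] [Module ℝ E] (S : Set E) : Prop :=
  ∃ (W : Type) (_ : AddCommGroup W) (_ : Module ℝ W) (_ : Module.Finite ℝ W)
    (T : W →ₗ[ℝ] E) (C : Set W), Spec C ∧ S = T '' C

theorem posSemidef_real_iff {J : Type} [Fintype J] (A : Matrix J J ℝ) :
    A.PosSemidef ↔ A.IsSymm ∧ ∀ x : J → ℝ, 0 ≤ dotProduct x (A.mulVec x) := by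
  rw [Matrix.posSemidef_iff_dotProduct_mulVec]
  have h : A.IsHermitian ↔ A.IsSymm := by
    rw [Matrix.IsHermitian, Matrix.IsSymm, Matrix.conjTranspose_eq_transpose_of_trivial]
  rw [h]; simp

theorem posSemidef_blocks {J K : Type} [Fintype J] [Fintype K]
    (A : Matrix J J ℝ) (B : Matrix K K ℝ) :
    (Matrix.fromBlocks A 0 0 B).PosSemidef ↔ A.PosSemidef ∧ B.PosSemidef := by
  simp only [posSemidef_real_iff]
  constructor
  · rintro ⟨hs, h⟩
    rw [Matrix.isSymm_fromBlocks_iff] at hs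
    refine ⟨⟨hs.1, fun x => ?_⟩, ⟨hs.2.2.2, fun x => ?_⟩⟩
    · have := h (Sum.elim x 0)
      simpa [Matrix.fromBlocks_mulVec, dotProduct, Fintype.sum_sum_type] using this
    · have := h (Sum.elim 0 x)
      simpa [Matrix.fromBlocks_mulVec, dotProduct, Fintype.sum_sum_type] using this
  · rintro ⟨⟨h1, h2⟩, ⟨h3, h4⟩⟩
    refine ⟨Matrix.isSymm_fromBlocks_iff.2 ⟨h1, by simp, by simp, h3⟩, fun x => ?_⟩
    have e1 := h2 (x ∘ Sum.inl)
    have e2 := h4 (x ∘ Sum.inr)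
    have : dotProduct x ((Matrix.fromBlocks A 0 0 B).mulVec x) =
        dotProduct (x ∘ Sum.inl) (A.mulVec (x ∘ Sum.inl)) +
        dotProduct (x ∘ Sum.inr) (B.mulVec (x ∘ Sum.inr)) := by
      simp [Matrix.fromBlocks_mulVec, dotProduct, Fintype.sum_sum_type]
    linarith

section
variable {W V : Type} [AddCommGroup W] [Module ℝ W] [AddCommGroup V] [Module ℝ V]

theorem Spec.inter {C D : Set W} (hC : Spec C) (hD : Spec D) : Spec (C ∩ D) := by
  obtain ⟨J, _, M₀, M, h1, h2, rfl⟩ := hC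
  obtain ⟨K, _, N₀, N, h3, h4, rfl⟩ := hD
  refine ⟨J ⊕ K, inferInstance, Matrix.fromBlocks M₀ 0 0 N₀,
    { toFun := fun w => Matrix.fromBlocks (M w) 0 0 (N w)
      map_add' := fun a b => by simp [Matrix.fromBlocks_add]
      map_smul' := fun a b => by simp [Matrix.fromBlocks_smul] }, ?_, ?_, ?_⟩
  · exact Matrix.isSymm_fromBlocks_iff.2 ⟨h1, by simp, by simp, h3⟩
  · intro w
    exact Matrix.isSymm_fromBlocks_iff.2 ⟨h2 w, by simp, by simp, h4 w⟩
  · ext w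
    simp [Matrix.fromBlocks_add, posSemidef_blocks]

theorem Spec.comap {C : Set W} (hC : Spec C) (T : V →ₗ[ℝ] W) (w₀ : W) :
    Spec {v | w₀ + T v ∈ C} := by
  obtain ⟨J, _, M₀, M, h1, h2, rfl⟩ := hC
  refine ⟨J, inferInstance, M₀ + M w₀, M ∘ₗ T, h1.add (h2 _), fun w => h2 _, ?_⟩
  ext w
  simp [add_assoc]

theorem Spec.ineq {J : Type} [Fintype J] (c : J → ℝ) (l : W →ₗ[ℝ] (J → ℝ)) :
    Spec {w | ∀ j, 0 ≤ c j + l w j} := by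
  classical
  refine ⟨J, inferInstance, Matrix.diagonal c, Matrix.diagonalLinearMap J ℝ ℝ ∘ₗ l,
    Matrix.isSymm_diagonal _, fun w => by simp, ?_⟩
  ext w
  simp [Matrix.diagonal_add, Matrix.posSemidef_diagonal_iff]

theorem Spec.univ : Spec (Set.univ : Set W) := by
  have := Spec.ineq (W := W) (J := Empty) 0 0
  simpa using this

theorem Spec.iInter {K : Type} [Fintype K] {C : K → Set W} (h : ∀ k, Spec (C k)) :
    Spec (⋂ k, C k) := by
  classical
  have : ∀ s : Finset K, Spec (⋂ k ∈ s, C k) := by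
    intro s
    induction s using Finset.induction_on with
    | empty => simpa using Spec.univ
    | insert a s ha ih =>
      rw [Finset.set_biInter_insert]
      exact (h a).inter ih
  simpa using this Finset.univ

theorem Shadow.inter {S T : Set W} (hS : Shadow S) (hT : Shadow T) : Shadow (S ∩ T) := by
  obtain ⟨W₁, _, _, _, T₁, C₁, h1, rfl⟩ := hS
  obtain ⟨W₂, _, _, _, T₂, C₂, h2, rfl⟩ := hT
  let K := LinearMap.ker (T₁ ∘ₗ LinearMap.fst ℝ W₁ W₂ - T₂ ∘ₗ LinearMap.snd ℝ W₁ W₂)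
  refine ⟨K, inferInstance, inferInstance, inferInstance,
    T₁ ∘ₗ LinearMap.fst ℝ W₁ W₂ ∘ₗ K.subtype, _,
    (h1.comap (LinearMap.fst ℝ W₁ W₂ ∘ₗ K.subtype) 0).inter
      (h2.comap (LinearMap.snd ℝ W₁ W₂ ∘ₗ K.subtype) 0), ?_⟩
  ext x
  constructor
  · rintro ⟨⟨a, ha, rfl⟩, ⟨b, hb, hab⟩⟩
    refine ⟨⟨(a, b), ?_⟩, ?_, ?_⟩
    · simp [K, hab]
    · simp [ha, hb]
    · simp
  · rintro ⟨⟨⟨a, b⟩, hK⟩, ⟨h1, h2⟩, rfl⟩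
    simp only [K, LinearMap.mem_ker, LinearMap.sub_apply, LinearMap.comp_apply,
      LinearMap.fst_apply, LinearMap.snd_apply, sub_eq_zero] at hK
    refine ⟨⟨a, by simpa using h1, rfl⟩, ⟨b, by simpa using h2, ?_⟩⟩
    simp [hK]

end

theorem Shadow.toFrozen {n : ℕ} {S : Set (Fin n → ℝ)} (h : Shadow S) :
    IsSpectrahedralShadow S := by
  obtain ⟨W, _, _, _, T, C, ⟨J, _, M₀, M, h1, h2, rfl⟩, rfl⟩ := h
  let b := Module.finBasis ℝ W
  let eJ := Fintype.equivFin J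
  refine ⟨Module.finrank ℝ W, Fintype.card J, M₀.submatrix eJ.symm eJ.symm,
    fun i => (M (b i)).submatrix eJ.symm eJ.symm, T ∘ₗ b.equivFun.symm.toLinearMap,
    h1.submatrix _, fun i => (h2 _).submatrix _, ?_⟩
  have key : ∀ c : Fin (Module.finrank ℝ W) → ℝ,
      (M₀.submatrix eJ.symm eJ.symm + ∑ i, c i • (M (b i)).submatrix eJ.symm eJ.symm) =
      (M₀ + M (b.equivFun.symm c)).submatrix eJ.symm eJ.symm := by
    intro c
    rw [Module.Basis.equivFun_symm_apply, map_sum]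
    ext i j
    simp [Matrix.sum_apply]
  simp only [key, Matrix.posSemidef_submatrix_equiv]
  ext x
  constructor
  · rintro ⟨w, hw, rfl⟩
    refine ⟨b.equivFun w, ?_, ?_⟩
    · rw [Set.mem_ofPred_eq, LinearEquiv.symm_apply_apply]
      exact hw
    · simp
  · rintro ⟨c, hc, rfl⟩
    exact ⟨_, hc, rfl⟩

/-- closed boxes are shadows -/
theorem shadow_closedBall {n : ℕ} (a : Fin n → ℝ) {ε : ℝ} (hε : 0 ≤ ε) :
    Shadow (Metric.closedBall a ε) := by
  refine ⟨Fin n → ℝ, inferInstance, inferInstance, inferInstance, LinearMap.id, _,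
    Spec.ineq (J := Fin n ⊕ Fin n) (Sum.elim (fun i => ε - a i) (fun i => ε + a i))
      { toFun := fun x => Sum.elim x (-x)
        map_add' := fun x y => by ext (j | j) <;> simp [add_comm]
        map_smul' := fun c x => by ext (j | j) <;> simp }, ?_⟩
  ext x
  simp only [Metric.mem_closedBall, LinearMap.id_coe, Set.image_id, Set.mem_ofPred_eq,
    dist_pi_le_iff hε, Real.dist_eq, abs_le, LinearMap.coe_mk, AddHom.coe_mk, Sum.forall,
    Sum.elim_inl, Sum.elim_inr, Pi.neg_apply]
  constructor
  · intro h
    exact ⟨fun i => by linarith [(h i).1], fun i => by linarith [(h i).2]⟩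
  · rintro ⟨h1, h2⟩ i
    exact ⟨by linarith [h1 i], by linarith [h2 i]⟩

/-- Joining two bounded nonempty shadows inside a convex set. -/
theorem Shadow.join {n : ℕ} {S A B : Set (Fin n → ℝ)} (hS : Convex ℝ S)
    (hb : Bornology.IsBounded S) (hA : Shadow A) (hB : Shadow B) (hA0 : A.Nonempty)
    (hB0 : B.Nonempty) (hAS : A ⊆ S) (hBS : B ⊆ S) :
    ∃ C, Shadow C ∧ A ⊆ C ∧ B ⊆ C ∧ C ⊆ S := by
  obtain ⟨W₁, _, _, _, T₁, C₁, ⟨J, _, M₀, M, h1, h2, rfl⟩, rfl⟩ := hA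
  obtain ⟨W₂, _, _, _, T₂, C₂, ⟨K, _, N₀, N, h3, h4, rfl⟩, rfl⟩ := hB
  -- recession directions are killed
  have hrec : ∀ {W : Type} [AddCommGroup W] [Module ℝ W] {J : Type} [Fintype J]
      (M₀ : Matrix J J ℝ) (M : W →ₗ[ℝ] Matrix J J ℝ) (T : W →ₗ[ℝ] (Fin n → ℝ)),
      (T '' {w | (M₀ + M w).PosSemidef}).Nonempty →
      T '' {w | (M₀ + M w).PosSemidef} ⊆ S → ∀ w, (M w).PosSemidef → T w = 0 := by
    intro W _ _ J _ M₀ M T hne hsub w hw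
    obtain ⟨_, w₀, hw₀, rfl⟩ := hne
    obtain ⟨R, hR⟩ := hb.exists_norm_le
    have hmem : ∀ t : ℝ, 0 ≤ t → ‖T w₀ + t • T w‖ ≤ R := by
      intro t ht
      apply hR
      apply hsub
      refine ⟨w₀ + t • w, ?_, by simp⟩
      have : M₀ + M (w₀ + t • w) = (M₀ + M w₀) + t • M w := by simp [add_assoc]
      simp only [Set.mem_ofPred_eq, this]
      exact Matrix.PosSemidef.add hw₀ (hw.smul ht)
    by_contra hne
    have hpos : 0 < ‖T w‖ := norm_pos_iff.2 hne
    have hR0 : 0 ≤ R := (norm_nonneg _).trans (hmem 0 le_rfl)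
    have h5 := hmem ((2 * R + 1) / ‖T w‖) (by positivity)
    have h6 := hmem 0 le_rfl
    have h7 : ‖((2 * R + 1) / ‖T w‖) • T w‖ = 2 * R + 1 := by
      rw [norm_smul, Real.norm_of_nonneg (by positivity)]
      field_simp
    have h8 : ‖((2 * R + 1) / ‖T w‖) • T w‖ ≤ ‖T w₀ + ((2 * R + 1) / ‖T w‖) • T w‖ + ‖T w₀‖ := by
      have := norm_sub_le (T w₀ + ((2 * R + 1) / ‖T w‖) • T w) (T w₀)
      simpa using this
    simp only [zero_smul, add_zero] at h6
    linarith
  have r1 := hrec M₀ M T₁ hA0 hAS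
  have r2 := hrec N₀ N T₂ hB0 hBS
  -- homogenized spectrahedra
  let HM : Set (W₁ × ℝ) := {w | (w.2 • M₀ + M w.1).PosSemidef}
  let HN : Set (W₂ × ℝ) := {w | (w.2 • N₀ + N w.1).PosSemidef}
  have sM : Spec HM := by
    refine ⟨J, inferInstance, 0, { toFun := fun w => w.2 • M₀ + M w.1
                                   map_add' := fun a b => by simp [add_smul]; abel
                                   map_smul' := fun a b => by simp [mul_smul] }, by simp, ?_, ?_⟩
    · intro w
      exact (h1.smul _).add (h2 _)
    · ext w; simp [HM]
  have sN : Spec HN := by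
    refine ⟨K, inferInstance, 0, { toFun := fun w => w.2 • N₀ + N w.1
                                   map_add' := fun a b => by simp [add_smul]; abel
                                   map_smul' := fun a b => by simp [mul_smul] }, by simp, ?_, ?_⟩
    · intro w
      exact (h3.smul _).add (h4 _)
    · ext w; simp [HN]
  let p1 : (W₁ × W₂ × ℝ) →ₗ[ℝ] (W₁ × ℝ) := LinearMap.prod (LinearMap.fst ℝ W₁ (W₂ × ℝ))
    (LinearMap.snd ℝ W₂ ℝ ∘ₗ LinearMap.snd ℝ W₁ (W₂ × ℝ))
  let p2 : (W₁ × W₂ × ℝ) →ₗ[ℝ] (W₂ × ℝ) := LinearMap.prod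
    (LinearMap.fst ℝ W₂ ℝ ∘ₗ LinearMap.snd ℝ W₁ (W₂ × ℝ))
    (-(LinearMap.snd ℝ W₂ ℝ ∘ₗ LinearMap.snd ℝ W₁ (W₂ × ℝ)))
  let l : (W₁ × W₂ × ℝ) →ₗ[ℝ] (Bool → ℝ) := LinearMap.pi (fun t => if t then
      (LinearMap.snd ℝ W₂ ℝ ∘ₗ LinearMap.snd ℝ W₁ (W₂ × ℝ)) else
      -(LinearMap.snd ℝ W₂ ℝ ∘ₗ LinearMap.snd ℝ W₁ (W₂ × ℝ)))
  have hspec := ((sM.comap p1 0).inter (sN.comap p2 (0, 1))).inter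
    (Spec.ineq (fun t : Bool => if t then (0 : ℝ) else 1) l)
  let T : (W₁ × W₂ × ℝ) →ₗ[ℝ] (Fin n → ℝ) := T₁ ∘ₗ (LinearMap.fst ℝ W₁ (W₂ × ℝ)) +
    T₂ ∘ₗ (LinearMap.fst ℝ W₂ ℝ ∘ₗ LinearMap.snd ℝ W₁ (W₂ × ℝ))
  refine ⟨_, ⟨W₁ × W₂ × ℝ, inferInstance, inferInstance, inferInstance, T, _, hspec, rfl⟩, ?_, ?_, ?_⟩
  · rintro _ ⟨w, hw, rfl⟩
    refine ⟨(w, 0, 1), ⟨⟨?_, ?_⟩, ?_⟩, ?_⟩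
    · simpa [HM, p1] using hw
    · simpa [HN, p2] using Matrix.PosSemidef.zero
    · rintro (_ | _) <;> simp [l]
    · simp [T]
  · rintro _ ⟨w, hw, rfl⟩
    refine ⟨(0, w, 0), ⟨⟨?_, ?_⟩, ?_⟩, ?_⟩
    · simpa [HM, p1] using Matrix.PosSemidef.zero
    · simpa [HN, p2] using hw
    · rintro (_ | _) <;> simp [l]
    · simp [T]
  · rintro _ ⟨⟨w₁, w₂, t⟩, ⟨⟨e1, e2⟩, e3⟩, rfl⟩
    have t0 : 0 ≤ t := by simpa [l] using e3 true
    have t1 : 0 ≤ 1 - t := by simpa [l, sub_eq_add_neg] using e3 false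
    have f1 : (t • M₀ + M w₁).PosSemidef := by simpa [HM, p1] using e1
    have f2 : ((1 - t) • N₀ + N w₂).PosSemidef := by
      simpa [HN, p2, sub_eq_add_neg] using e2
    have hT : T (w₁, w₂, t) = T₁ w₁ + T₂ w₂ := by simp [T]
    rw [hT]
    -- generic scaling
    have scale : ∀ {W : Type} [AddCommGroup W] [Module ℝ W] {J : Type} [Fintype J]
      (M₀ : Matrix J J ℝ) (M : W →ₗ[ℝ] Matrix J J ℝ) (T : W →ₗ[ℝ] (Fin n → ℝ)) (w : W) (t : ℝ),
      0 ≤ t → (t • M₀ + M w).PosSemidef → (∀ w, (M w).PosSemidef → T w = 0) →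
      (T '' {w | (M₀ + M w).PosSemidef}).Nonempty →
      ∃ y ∈ T '' {w | (M₀ + M w).PosSemidef}, T w = t • y := by
      intro W _ _ J _ M₀ M T w t ht hp hr hne
      rcases ht.eq_or_lt with h0 | h0
      · subst h0
        obtain ⟨y, hy⟩ := hne
        refine ⟨y, hy, ?_⟩
        rw [zero_smul]
        exact hr w (by simpa using hp)
      · refine ⟨_, ⟨t⁻¹ • w, ?_, rfl⟩, ?_⟩
        · have : M₀ + M (t⁻¹ • w) = t⁻¹ • (t • M₀ + M w) := by
            rw [smul_add, smul_smul, inv_mul_cancel₀ h0.ne', one_smul, map_smul]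
          simp only [Set.mem_ofPred_eq, this]
          exact hp.smul (inv_nonneg.2 ht)
        · rw [map_smul, smul_smul, mul_inv_cancel₀ h0.ne', one_smul]
    obtain ⟨y, hy, hy'⟩ := scale M₀ M T₁ w₁ t t0 f1 r1 hA0
    obtain ⟨z, hz, hz'⟩ := scale N₀ N T₂ w₂ (1 - t) t1 f2 r2 hB0
    rw [hy', hz']
    exact hS (hAS hy) (hBS hz) t0 t1 (by ring)

/-- Locally shadow implies globally shadow, for compact convex sets. -/
theorem shadow_of_local {n : ℕ} {S : Set (Fin n → ℝ)} (hS : Convex ℝ S) (hc : IsCompact S)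
    (hne : S.Nonempty)
    (hloc : ∀ x ∈ S, ∃ ε > 0, Shadow (S ∩ Metric.closedBall x ε)) : Shadow S := by
  have hb := hc.isBounded
  have main : ∃ C, Shadow C ∧ C.Nonempty ∧ S ⊆ C ∧ C ⊆ S := by
    refine hc.induction_on (p := fun s => ∃ C, Shadow C ∧ C.Nonempty ∧ s ⊆ C ∧ C ⊆ S) ?_ ?_ ?_ ?_
    · obtain ⟨e, he⟩ := hne
      refine ⟨Metric.closedBall e 0, shadow_closedBall e le_rfl, ?_, by simp, by simpa using he⟩
      simp
    · rintro s t hst ⟨C, h1, h2, h3, h4⟩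
      exact ⟨C, h1, h2, hst.trans h3, h4⟩
    · rintro s t ⟨C, h1, h2, h3, h4⟩ ⟨D, k1, k2, k3, k4⟩
      obtain ⟨E, e1, e2, e3, e4⟩ := Shadow.join hS hb h1 k1 h2 k2 h4 k4
      exact ⟨E, e1, h2.mono e2, Set.union_subset (h3.trans e2) (k3.trans e3), e4⟩
    · intro x hx
      obtain ⟨ε, hε, h⟩ := hloc x hx
      exact ⟨S ∩ Metric.closedBall x ε,
        Filter.inter_mem self_mem_nhdsWithin
          (mem_nhdsWithin_of_mem_nhds (Metric.closedBall_mem_nhds x hε)),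
        _, h, ⟨x, hx, Metric.mem_closedBall_self hε.le⟩, subset_rfl, Set.inter_subset_left⟩
  obtain ⟨C, h1, -, h3, h4⟩ := main
  rwa [Set.Subset.antisymm h3 h4]

end RCS

namespace RCS

/-! ### Local moment relaxation -/

section local_relax
variable {n : ℕ}

/-- The functional `P ↦ L (g P)`. -/
noncomputable def mulF (L : MvPolynomial (Fin n) ℝ →ₗ[ℝ] ℝ) (g : MvPolynomial (Fin n) ℝ) :
    MvPolynomial (Fin n) ℝ →ₗ[ℝ] ℝ := L ∘ₗ LinearMap.mulLeft ℝ g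

@[simp] theorem mulF_apply (L : MvPolynomial (Fin n) ℝ →ₗ[ℝ] ℝ) (g P : MvPolynomial (Fin n) ℝ) :
    mulF L g P = L (g * P) := rfl

/-- `N`-valid pseudo-moment functionals for the box of radius `ε` around `a`. -/
def Valid (a : Fin n → ℝ) (ε : ℝ) : ℕ → (MvPolynomial (Fin n) ℝ →ₗ[ℝ] ℝ) → Prop
  | 0, L => ∀ (c : ℝ) (v : Fin n → ℝ), 0 ≤ L ((C c + ∑ i, C (v i) * X i) ^ 2)
  | N + 1, L => Valid a ε N L ∧ ∀ k, Valid a ε N (mulF L (C ε + (X k - C (a k)))) ∧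
      Valid a ε N (mulF L (C ε - (X k - C (a k))))

theorem Valid.mono {a : Fin n → ℝ} {ε : ℝ} {N M : ℕ} (h : N ≤ M)
    {L : MvPolynomial (Fin n) ℝ →ₗ[ℝ] ℝ} (hL : Valid a ε M L) : Valid a ε N L := by
  induction h with
  | refl => exact hL
  | step _ ih => exact ih hL.1

/-- sum of squared coordinates of `X - x` -/
noncomputable def Dq (x : Fin n → ℝ) : MvPolynomial (Fin n) ℝ := ∑ i, (X i - C (x i)) ^ 2

/-- first order Taylor remainder at `x` -/
noncomputable def Rem (m : MvPolynomial (Fin n) ℝ) (x : Fin n → ℝ) : MvPolynomial (Fin n) ℝ :=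
  m - C (eval x m) - ∑ i, C (eval x (pderiv i m)) * (X i - C (x i))

/-- Hessian at `a` applied to `X - x` -/
noncomputable def Quad (a : Fin n → ℝ) (m : MvPolynomial (Fin n) ℝ) (x : Fin n → ℝ) :
    MvPolynomial (Fin n) ℝ :=
  ∑ i, ∑ j, C (eval a (pderiv i (pderiv j m))) * ((X i - C (x i)) * (X j - C (x j)))

theorem Valid.sq_nonneg {a : Fin n → ℝ} {ε : ℝ} {N : ℕ}
    {L : MvPolynomial (Fin n) ℝ →ₗ[ℝ] ℝ} (hL : Valid a ε N L) (x w : Fin n → ℝ) :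
    0 ≤ L ((∑ i, C (w i) * (X i - C (x i))) ^ 2) := by
  have h0 : Valid a ε 0 L := hL.mono (Nat.zero_le _)
  have := h0 (-∑ i, w i * x i) w
  convert this using 3
  simp only [mul_sub, Finset.sum_sub_distrib, map_neg, map_sum, map_mul]
  ring

theorem Valid.sq_single {a : Fin n → ℝ} {ε : ℝ} {N : ℕ}
    {L : MvPolynomial (Fin n) ℝ →ₗ[ℝ] ℝ} (hL : Valid a ε N L) (x : Fin n → ℝ) (i : Fin n) :
    0 ≤ L ((X i - C (x i)) ^ 2) := by
  have := hL.sq_nonneg x (Pi.single i 1)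
  simpa [Pi.single_apply, apply_ite C] using this

theorem Valid.single_le {a : Fin n → ℝ} {ε : ℝ} {N : ℕ}
    {L : MvPolynomial (Fin n) ℝ →ₗ[ℝ] ℝ} (hL : Valid a ε N L) (x : Fin n → ℝ) (i : Fin n) :
    L ((X i - C (x i)) ^ 2) ≤ L (Dq x) := by
  rw [Dq, map_sum]
  exact Finset.single_le_sum (f := fun i => L ((X i - C (x i)) ^ 2))
    (fun j _ => hL.sq_single x j) (Finset.mem_univ i)

theorem Valid.Dq_nonneg {a : Fin n → ℝ} {ε : ℝ} {N : ℕ}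
    {L : MvPolynomial (Fin n) ℝ →ₗ[ℝ] ℝ} (hL : Valid a ε N L) (x : Fin n → ℝ) :
    0 ≤ L (Dq x) := by
  rw [Dq, map_sum]
  exact Finset.sum_nonneg (fun j _ => hL.sq_single x j)

theorem Valid.cross {a : Fin n → ℝ} {ε : ℝ} {N : ℕ}
    {L : MvPolynomial (Fin n) ℝ →ₗ[ℝ] ℝ} (hL : Valid a ε N L) (x : Fin n → ℝ) (i j : Fin n) :
    |L ((X i - C (x i)) * (X j - C (x j)))| ≤ L (Dq x) := by
  have h1 := hL.sq_nonneg x (Pi.single i 1 + Pi.single j 1)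
  have h2 := hL.sq_nonneg x (Pi.single i 1 - Pi.single j 1)
  simp only [Pi.add_apply, Pi.sub_apply, Pi.single_apply, map_add, map_sub, apply_ite C, map_one,
    map_zero, add_mul, sub_mul, Finset.sum_add_distrib, Finset.sum_sub_distrib, ite_mul, one_mul,
    zero_mul, Finset.sum_ite_eq', Finset.mem_univ, if_true] at h1 h2
  have e1 : ((X i - C (x i)) + (X j - C (x j))) ^ 2 = (X i - C (x i)) ^ 2 + (X j - C (x j)) ^ 2
    + (2 : ℝ) • ((X i - C (x i)) * (X j - C (x j)) : MvPolynomial (Fin n) ℝ) := by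
    rw [two_smul]; ring
  have e2 : ((X i - C (x i)) - (X j - C (x j))) ^ 2 = (X i - C (x i)) ^ 2 + (X j - C (x j)) ^ 2
    - (2 : ℝ) • ((X i - C (x i)) * (X j - C (x j)) : MvPolynomial (Fin n) ℝ) := by
    rw [two_smul]; ring
  rw [e1, map_add, map_add, map_smul, smul_eq_mul] at h1
  rw [e2, map_sub, map_add, map_smul, smul_eq_mul] at h2
  have h3 := hL.single_le x i
  have h4 := hL.single_le x j
  rw [abs_le]
  constructor <;> linarith

theorem L_C_mul (L : MvPolynomial (Fin n) ℝ →ₗ[ℝ] ℝ) (c : ℝ) (P : MvPolynomial (Fin n) ℝ) :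
    L (C c * P) = c * L P := by
  rw [← smul_eq_C_mul, map_smul, smul_eq_mul]

theorem lip_eval (a : Fin n → ℝ) (g : MvPolynomial (Fin n) ℝ) :
    ∃ K : ℝ, 0 ≤ K ∧ ∀ ε : ℝ, 0 < ε → ε ≤ 1 → ∀ x ∈ Metric.closedBall a ε,
      |eval x g - eval a g| ≤ K * ε := by
  induction g using MvPolynomial.induction_on with
  | C c => exact ⟨0, le_rfl, fun ε _ _ x _ => by simp⟩
  | add p q hp hq =>
    obtain ⟨K, hK, h1⟩ := hp
    obtain ⟨K', hK', h2⟩ := hq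
    refine ⟨K + K', by positivity, fun ε h3 h4 x hx => ?_⟩
    have := h1 ε h3 h4 x hx
    have := h2 ε h3 h4 x hx
    simp only [map_add]
    have e : eval x p + eval x q - (eval a p + eval a q) =
      (eval x p - eval a p) + (eval x q - eval a q) := by ring
    rw [e]
    refine (abs_add_le _ _).trans ?_
    linarith
  | mul_X p k hp =>
    obtain ⟨K, hK, h1⟩ := hp
    refine ⟨K * (|a k| + 1) + |eval a p|, by positivity, fun ε h3 h4 x hx => ?_⟩
    have h5 := h1 ε h3 h4 x hx
    have h6 : |x k - a k| ≤ ε := by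
      rw [Metric.mem_closedBall, dist_pi_le_iff h3.le] at hx
      exact hx k
    have h7 : |x k| ≤ |a k| + 1 := by
      have := abs_add_le (x k - a k) (a k)
      rw [sub_add_cancel] at this
      linarith
    simp only [map_mul, eval_X]
    have e : eval x p * x k - eval a p * a k =
      (eval x p - eval a p) * x k + eval a p * (x k - a k) := by ring
    rw [e]
    refine (abs_add_le _ _).trans ?_
    rw [abs_mul, abs_mul]
    have h8 : |eval x p - eval a p| * |x k| ≤ (K * ε) * (|a k| + 1) := by gcongr
    have h9 : |eval a p| * |x k - a k| ≤ |eval a p| * ε := by gcongr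
    linarith

theorem Rem_add (p q : MvPolynomial (Fin n) ℝ) (x : Fin n → ℝ) :
    Rem (p + q) x = Rem p x + Rem q x := by
  simp only [Rem, map_add, add_mul, Finset.sum_add_distrib]
  ring

theorem Quad_add (a : Fin n → ℝ) (p q : MvPolynomial (Fin n) ℝ) (x : Fin n → ℝ) :
    Quad a (p + q) x = Quad a p x + Quad a q x := by
  simp only [Quad, map_add, add_mul, Finset.sum_add_distrib]

theorem Rem_mul_X (a : Fin n → ℝ) (m : MvPolynomial (Fin n) ℝ) (k : Fin n) (x : Fin n → ℝ) :
    Rem (m * X k) x = (X k - C (a k)) * Rem m x +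
      ∑ i, C (eval x (pderiv i m)) * ((X k - C (x k)) * (X i - C (x i))) +
      C (a k) * Rem m x := by
  have h1 : ∑ i, C (eval x (pderiv i (m * X k))) * (X i - C (x i)) =
      C (x k) * ∑ i, C (eval x (pderiv i m)) * (X i - C (x i)) +
      C (eval x m) * (X k - C (x k)) := by
    simp only [Derivation.leibniz, pderiv_X, smul_eq_mul, map_add, map_mul, eval_X, add_mul,
      Finset.sum_add_distrib, Pi.single_apply, apply_ite (eval x), map_one, map_zero, apply_ite C,
      mul_ite, mul_one, mul_zero, ite_mul, zero_mul, Finset.mul_sum]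
    simp [mul_assoc, add_comm]
  have h2 : ∑ i, C (eval x (pderiv i m)) * ((X k - C (x k)) * (X i - C (x i))) =
      (X k - C (x k)) * ∑ i, C (eval x (pderiv i m)) * (X i - C (x i)) := by
    rw [Finset.mul_sum]
    exact Finset.sum_congr rfl (fun i _ => by ring)
  rw [h2, Rem, Rem, h1]
  simp only [map_mul, eval_X]
  ring

theorem Quad_mul_X (a : Fin n → ℝ) (m : MvPolynomial (Fin n) ℝ) (k : Fin n) (x : Fin n → ℝ) :
    Quad a (m * X k) x =
      2 * ∑ i, C (eval a (pderiv i m)) * ((X k - C (x k)) * (X i - C (x i))) +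
      C (a k) * Quad a m x := by
  have h : ∀ i j, eval a (pderiv i (pderiv j (m * X k))) =
      a k * eval a (pderiv i (pderiv j m)) + (if j = k then eval a (pderiv i m) else 0)
      + (if i = k then eval a (pderiv j m) else 0) := by
    intro i j
    by_cases hj : j = k <;> by_cases hi : i = k <;>
      simp [Derivation.leibniz, pderiv_X, Pi.single_apply, hi, hj, eq_comm (a := k)] <;> ring
  simp only [Quad, h, map_add, add_mul, Finset.sum_add_distrib, apply_ite C, map_zero, ite_mul,
    zero_mul, map_mul]
  have e1 : ∀ i : Fin n, (∑ j, if i = k then C (eval a (pderiv j m)) * ((X i - C (x i)) * (X j - C (x j)))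
      else 0) = if i = k then ∑ j, C (eval a (pderiv j m)) * ((X i - C (x i)) * (X j - C (x j)))
      else 0 := by
    intro i
    split_ifs <;> simp
  simp only [e1, Finset.sum_ite_eq', Finset.mem_univ, if_true, Finset.mul_sum]
  have e2 : ∀ i : Fin n, C (eval a (pderiv i m)) * ((X i - C (x i)) * (X k - C (x k))) =
     C (eval a (pderiv i m)) * ((X k - C (x k)) * (X i - C (x i))) := fun i => by ring
  simp only [e2, ← Finset.mul_sum, mul_assoc]
  ring

theorem Quad_bound (a : Fin n → ℝ) (m : MvPolynomial (Fin n) ℝ) :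
    ∃ K : ℝ, 0 ≤ K ∧ ∀ (ε : ℝ) (N : ℕ) (x : Fin n → ℝ) (L : MvPolynomial (Fin n) ℝ →ₗ[ℝ] ℝ),
      Valid a ε N L → |L (Quad a m x)| ≤ K * L (Dq x) := by
  refine ⟨∑ i, ∑ j, |eval a (pderiv i (pderiv j m))|, by positivity, fun ε N x L hL => ?_⟩
  rw [Quad, map_sum, Finset.sum_mul]
  refine (Finset.abs_sum_le_sum_abs _ _).trans (Finset.sum_le_sum fun i _ => ?_)
  rw [map_sum, Finset.sum_mul]
  refine (Finset.abs_sum_le_sum_abs _ _).trans (Finset.sum_le_sum fun j _ => ?_)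
  rw [L_C_mul, abs_mul]
  exact mul_le_mul_of_nonneg_left (hL.cross x i j) (abs_nonneg _)

theorem Rem_bound (a : Fin n → ℝ) (m : MvPolynomial (Fin n) ℝ) :
    ∃ (N : ℕ) (K : ℝ), 0 ≤ K ∧ ∀ ε : ℝ, 0 < ε → ε ≤ 1 → ∀ x ∈ Metric.closedBall a ε,
      ∀ L : MvPolynomial (Fin n) ℝ →ₗ[ℝ] ℝ, Valid a ε N L →
        |L (Rem m x) - 1 / 2 * L (Quad a m x)| ≤ K * ε * L (Dq x) := by
  induction m using MvPolynomial.induction_on with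
  | C c =>
    refine ⟨0, 0, le_rfl, fun ε _ _ x _ L _ => ?_⟩
    simp [Rem, Quad]
  | add p q hp hq =>
    obtain ⟨N, K, hK, h1⟩ := hp
    obtain ⟨N', K', hK', h2⟩ := hq
    refine ⟨max N N', K + K', by positivity, fun ε h3 h4 x hx L hL => ?_⟩
    have e1 := h1 ε h3 h4 x hx L (hL.mono (le_max_left _ _))
    have e2 := h2 ε h3 h4 x hx L (hL.mono (le_max_right _ _))
    rw [Rem_add, Quad_add, map_add, map_add]
    rw [abs_le] at *
    constructor <;> linarith [e1.1, e1.2, e2.1, e2.2]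
  | mul_X m k hm =>
    obtain ⟨N, K, hK, h1⟩ := hm
    obtain ⟨Q, hQ, h2⟩ := Quad_bound a m
    choose G hG h3 using fun i => lip_eval a (pderiv i m)
    refine ⟨N + 1, (K + Q) + ∑ i, G i + |a k| * K, ?_, fun ε e0 e1 x hx L hL => ?_⟩
    · have := Finset.sum_nonneg (s := Finset.univ) (fun i _ => hG i)
      positivity
    have hD := hL.Dq_nonneg x
    have hL0 := hL.1
    obtain ⟨hLp, hLm⟩ := hL.2 k
    -- bound for each valid functional
    have hB : ∀ L : MvPolynomial (Fin n) ℝ →ₗ[ℝ] ℝ, Valid a ε N L →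
        |L (Rem m x)| ≤ (K + Q) * L (Dq x) := by
      intro L hL
      have f1 := h1 ε e0 e1 x hx L hL
      have f2 := h2 ε N x L hL
      have f3 := hL.Dq_nonneg x
      have f4 : K * ε * L (Dq x) ≤ K * L (Dq x) := by
        apply mul_le_mul_of_nonneg_right _ f3
        nlinarith
      have f5 : 0 ≤ Q * L (Dq x) := by positivity
      rw [abs_le] at *
      constructor <;> linarith [f1.1, f1.2, f2.1, f2.2]
    have b1 := hB _ hLp
    have b2 := hB _ hLm
    simp only [mulF_apply, add_mul, sub_mul, map_add, map_sub, L_C_mul] at b1 b2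
    have b3 : |L ((X k - C (a k)) * Rem m x)| ≤ (K + Q) * ε * L (Dq x) := by
      simp only [sub_mul, map_sub, L_C_mul]
      rw [abs_le] at *
      constructor <;> linarith [b1.1, b1.2, b2.1, b2.2]
    have b4 := h1 ε e0 e1 x hx L hL0
    have b5 : |∑ i, (eval x (pderiv i m) - eval a (pderiv i m)) *
        L ((X k - C (x k)) * (X i - C (x i)))| ≤ (∑ i, G i) * ε * L (Dq x) := by
      rw [Finset.sum_mul, Finset.sum_mul]
      refine (Finset.abs_sum_le_sum_abs _ _).trans (Finset.sum_le_sum fun i _ => ?_)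
      rw [abs_mul]
      exact mul_le_mul (h3 i ε e0 e1 x hx) (hL.cross x k i) (abs_nonneg _)
        (mul_nonneg (hG i) e0.le)
    have key : L (Rem (m * X k) x) - 1 / 2 * L (Quad a (m * X k) x) =
        L ((X k - C (a k)) * Rem m x) +
        ∑ i, (eval x (pderiv i m) - eval a (pderiv i m)) *
          L ((X k - C (x k)) * (X i - C (x i))) +
        a k * (L (Rem m x) - 1 / 2 * L (Quad a m x)) := by
      rw [Rem_mul_X a, Quad_mul_X]
      have two : (2 : MvPolynomial (Fin n) ℝ) = C 2 := (map_ofNat C 2).symm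
      simp only [two, map_add, L_C_mul, map_sum, sub_mul, Finset.sum_sub_distrib]
      ring
    rw [key]
    have b6 : |a k * (L (Rem m x) - 1 / 2 * L (Quad a m x))| ≤ |a k| * (K * ε * L (Dq x)) := by
      rw [abs_mul]
      exact mul_le_mul_of_nonneg_left b4 (abs_nonneg _)
    refine (abs_add_three _ _ _).trans ?_
    linarith

/-- Evaluation functionals are valid. -/
theorem valid_of_eval (a : Fin n → ℝ) {ε : ℝ} (hε : 0 ≤ ε) (x : Fin n → ℝ)
    (hx : x ∈ Metric.closedBall a ε) (N : ℕ) : ∀ (c : ℝ) (L : MvPolynomial (Fin n) ℝ →ₗ[ℝ] ℝ),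
    0 ≤ c → (∀ P : MvPolynomial (Fin n) ℝ, P.totalDegree ≤ N + 2 → L P = c * eval x P) →
      Valid a ε N L := by
  have haff : ∀ (c : ℝ) (v : Fin n → ℝ),
      (C c + ∑ i, C (v i) * X i : MvPolynomial (Fin n) ℝ).totalDegree ≤ 1 := by
    intro c v
    refine (totalDegree_add _ _).trans (max_le (by simp) ?_)
    refine totalDegree_finsetSum_le fun i _ => ?_
    refine (totalDegree_mul _ _).trans ?_
    simp
  induction N with
  | zero =>
    intro c L hc h d v
    rw [h]
    · rw [map_pow]; positivity
    · refine (totalDegree_pow _ _).trans ?_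
      have := haff d v
      omega
  | succ N ih =>
    intro c L hc h
    rw [Metric.mem_closedBall, dist_pi_le_iff hε] at hx
    refine ⟨ih c L hc fun P hP => h P (by omega), fun k => ⟨?_, ?_⟩⟩
    · have hk := abs_le.1 (hx k)
      refine ih (c * (ε + (x k - a k))) _ (mul_nonneg hc (by linarith [hk.1])) fun P hP => ?_
      rw [mulF_apply, h]
      · simp; ring
      · refine (totalDegree_mul _ _).trans ?_
        have : (C ε + (X k - C (a k)) : MvPolynomial (Fin n) ℝ).totalDegree ≤ 1 := by
          refine (totalDegree_add _ _).trans (max_le (by simp) ?_)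
          exact (totalDegree_sub _ _).trans (max_le (by simp) (by simp))
        omega
    · have hk := abs_le.1 (hx k)
      refine ih (c * (ε - (x k - a k))) _ (mul_nonneg hc (by linarith [hk.2])) fun P hP => ?_
      rw [mulF_apply, h]
      · simp; ring
      · refine (totalDegree_mul _ _).trans ?_
        have : (C ε - (X k - C (a k)) : MvPolynomial (Fin n) ℝ).totalDegree ≤ 1 := by
          refine (totalDegree_sub _ _).trans (max_le (by simp) ?_)
          exact (totalDegree_sub _ _).trans (max_le (by simp) (by simp))
        omega

/-- The set of valid functionals in a linear family is a spectrahedron. -/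
theorem spec_valid {W : Type} [AddCommGroup W] [Module ℝ W] (a : Fin n → ℝ) (ε : ℝ) (N : ℕ) :
    ∀ Λ : W →ₗ[ℝ] (MvPolynomial (Fin n) ℝ →ₗ[ℝ] ℝ), Spec {w | Valid a ε N (Λ w)} := by
  induction N with
  | zero =>
    intro Λ
    let z : Option (Fin n) → MvPolynomial (Fin n) ℝ := fun o => o.elim 1 X
    refine ⟨Option (Fin n), inferInstance, 0,
      { toFun := fun w => Matrix.of fun i j => Λ w (z i * z j)
        map_add' := fun u v => by ext i j; simp
        map_smul' := fun u v => by ext i j; simp }, by simp, ?_, ?_⟩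
    · intro w
      ext i j
      simp [mul_comm]
    · ext w
      have hsymm : (Matrix.of fun i j => Λ w (z i * z j)).IsSymm := by
        ext i j
        simp [mul_comm]
      have hq : ∀ y : Option (Fin n) → ℝ,
          dotProduct y ((Matrix.of fun i j => Λ w (z i * z j)).mulVec y) =
          Λ w ((C (y none) + ∑ i, C (y (some i)) * X i) ^ 2) := by
        intro y
        have : (C (y none) + ∑ i, C (y (some i)) * X i : MvPolynomial (Fin n) ℝ) =
            ∑ o, C (y o) * z o := by
          simp [Fintype.sum_option, z]
        rw [this, sq, Finset.sum_mul_sum, map_sum]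
        simp only [dotProduct, Matrix.mulVec, Matrix.of_apply, Finset.mul_sum, map_sum]
        refine Finset.sum_congr rfl fun i _ => Finset.sum_congr rfl fun j _ => ?_
        have : (C (y i) * z i * (C (y j) * z j) : MvPolynomial (Fin n) ℝ) =
          C (y i) * (C (y j) * (z i * z j)) := by ring
        rw [this, L_C_mul, L_C_mul]
        ring
      simp only [Set.mem_ofPred_eq, LinearMap.coe_mk, AddHom.coe_mk, zero_add,
        posSemidef_real_iff, hq]
      constructor
      · intro h
        exact ⟨hsymm, fun y => h _ _⟩
      · rintro ⟨-, h⟩ c v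
        exact h (fun o => o.elim c v)
  | succ N ih =>
    intro Λ
    let Ml : MvPolynomial (Fin n) ℝ → W →ₗ[ℝ] (MvPolynomial (Fin n) ℝ →ₗ[ℝ] ℝ) := fun g =>
      { toFun := fun w => mulF (Λ w) g
        map_add' := fun u v => by ext; simp
        map_smul' := fun u v => by ext; simp }
    have h := (ih Λ).inter (Spec.iInter (K := Fin n) fun k =>
      (ih (Ml (C ε + (X k - C (a k))))).inter (ih (Ml (C ε - (X k - C (a k))))))
    convert h using 1
    ext w
    simp [Valid, Ml]

theorem psd_decomp (A : Matrix (Fin n) (Fin n) ℝ) (hA : A.PosSemidef) :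
    ∃ B : Matrix (Fin n) (Fin n) ℝ, ∀ i j, A i j = ∑ k, B k i * B k j := by
  open scoped MatrixOrder in
  obtain ⟨B, hB⟩ := CStarAlgebra.nonneg_iff_eq_star_mul_self.1 hA.nonneg
  refine ⟨B, fun i j => ?_⟩
  rw [hB]
  simp [Matrix.mul_apply, Matrix.star_apply]

/-- A negative definite Hessian stays negative under pseudo-moments. -/
theorem Valid.quad_le {a : Fin n → ℝ} {ε : ℝ} {N : ℕ}
    {L : MvPolynomial (Fin n) ℝ →ₗ[ℝ] ℝ} (hL : Valid a ε N L) (f : MvPolynomial (Fin n) ℝ) {δ : ℝ}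
    (hH : ∀ v : Fin n → ℝ, δ * ∑ i, v i ^ 2 ≤
      - (1 / 2) * ∑ i, ∑ j, v i * v j * eval a (pderiv i (pderiv j f))) (x : Fin n → ℝ) :
    1 / 2 * L (Quad a f x) ≤ - δ * L (Dq x) := by
  classical
  let h : Fin n → Fin n → ℝ := fun i j => eval a (pderiv i (pderiv j f))
  let A : Matrix (Fin n) (Fin n) ℝ := Matrix.of fun i j =>
    -(1 / 4) * (h i j + h j i) - δ * (if i = j then 1 else 0)
  have hA : A.PosSemidef := by
    rw [posSemidef_real_iff]
    constructor
    · ext i j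
      simp [A, eq_comm, add_comm]
    · intro v
      have h1 := hH v
      have h2 : dotProduct v (A.mulVec v) =
          -(1 / 4) * (∑ i, ∑ j, v i * v j * h i j) - (1 / 4) * (∑ i, ∑ j, v i * v j * h j i)
          - δ * ∑ i, v i ^ 2 := by
        simp only [dotProduct, Matrix.mulVec, A, Matrix.of_apply, Finset.mul_sum,
          ← Finset.sum_sub_distrib]
        refine Finset.sum_congr rfl fun i _ => ?_
        have : δ * v i ^ 2 = ∑ j, δ * (v i * v j * if i = j then 1 else 0) := by
          simp [sq]
        rw [this, ← Finset.sum_sub_distrib]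
        refine Finset.sum_congr rfl fun j _ => ?_
        ring
      have h3 : (∑ i, ∑ j, v i * v j * h j i) = ∑ i, ∑ j, v i * v j * h i j := by
        rw [Finset.sum_comm]
        exact Finset.sum_congr rfl fun i _ => Finset.sum_congr rfl fun j _ => by ring
      rw [h2, h3]
      simp only [h]
      linarith
  obtain ⟨B, hB⟩ := psd_decomp A hA
  have key : ∑ k, L ((∑ i, C (B k i) * (X i - C (x i))) ^ 2) =
      - (1 / 2) * L (Quad a f x) - δ * L (Dq x) := by
    have e1 : ∀ k, L ((∑ i, C (B k i) * (X i - C (x i))) ^ 2) =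
        ∑ i, ∑ j, B k i * B k j * L ((X i - C (x i)) * (X j - C (x j))) := by
      intro k
      rw [sq, Finset.sum_mul_sum, map_sum]
      refine Finset.sum_congr rfl fun i _ => ?_
      rw [map_sum]
      refine Finset.sum_congr rfl fun j _ => ?_
      rw [← L_C_mul, C_mul]
      congr 1
      ring
    simp only [e1]
    rw [Finset.sum_comm]
    have e2 : ∀ i, ∑ k, ∑ j, B k i * B k j * L ((X i - C (x i)) * (X j - C (x j))) =
        ∑ j, A i j * L ((X i - C (x i)) * (X j - C (x j))) := by
      intro i
      rw [Finset.sum_comm]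
      refine Finset.sum_congr rfl fun j _ => ?_
      rw [hB, Finset.sum_mul]
    simp only [e2]
    have e3 : L (Quad a f x) = ∑ i, ∑ j, h i j * L ((X i - C (x i)) * (X j - C (x j))) := by
      simp only [Quad, map_sum, L_C_mul, h]
    have e4 : L (Quad a f x) = ∑ i, ∑ j, h j i * L ((X i - C (x i)) * (X j - C (x j))) := by
      rw [e3, Finset.sum_comm]
      refine Finset.sum_congr rfl fun i _ => Finset.sum_congr rfl fun j _ => ?_
      rw [mul_comm (X i - C (x i))]
    have e5 : -(1 / 2) * L (Quad a f x) = -(1 / 4) * L (Quad a f x) + -(1 / 4) * L (Quad a f x) := by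
      ring
    rw [e5]
    nth_rewrite 1 [e3]
    rw [e4, Dq, map_sum]
    simp only [Finset.mul_sum, ← Finset.sum_sub_distrib, ← Finset.sum_add_distrib]
    refine Finset.sum_congr rfl fun i _ => ?_
    have e6 : δ * L ((X i - C (x i)) ^ 2) =
        ∑ j, δ * (if i = j then 1 else 0) * L ((X i - C (x i)) * (X j - C (x j))) := by
      simp [sq]
    rw [e6, ← Finset.sum_sub_distrib]
    refine Finset.sum_congr rfl fun j _ => ?_
    simp only [A, Matrix.of_apply]
    ring
  have := Finset.sum_nonneg (s := Finset.univ) fun k _ => hL.sq_nonneg x (B k)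
  rw [key] at this
  linarith

theorem Valid.ball {a : Fin n → ℝ} {ε : ℝ} (hε : 0 ≤ ε) {N : ℕ}
    {L : MvPolynomial (Fin n) ℝ →ₗ[ℝ] ℝ} (hL : Valid a ε (N + 1) L) (h1 : L 1 = 1) :
    (fun i => L (X i)) ∈ Metric.closedBall a ε := by
  have hC : ∀ c : ℝ, L (C c) = c := by
    intro c
    have := L_C_mul L c 1
    rwa [mul_one, h1, mul_one] at this
  rw [Metric.mem_closedBall, dist_pi_le_iff hε]
  intro k
  obtain ⟨hp, hm⟩ := hL.2 k
  have e1 := hp.mono (Nat.zero_le _) 1 0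
  have e2 := hm.mono (Nat.zero_le _) 1 0
  simp [hC] at e1 e2
  rw [Real.dist_eq, abs_le]
  constructor <;> linarith

theorem jensen (f : MvPolynomial (Fin n) ℝ) (a : Fin n → ℝ) {ε δ K : ℝ} (hε : 0 ≤ ε) {N : ℕ}
    {L : MvPolynomial (Fin n) ℝ →ₗ[ℝ] ℝ} (hL : Valid a ε (N + 1) L) (h1 : L 1 = 1)
    (hH : ∀ v : Fin n → ℝ, δ * ∑ i, v i ^ 2 ≤
      - (1 / 2) * ∑ i, ∑ j, v i * v j * eval a (pderiv i (pderiv j f)))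
    (e3 : K * ε ≤ δ)
    (hrem : ∀ x ∈ Metric.closedBall a ε,
        |L (Rem f x) - 1 / 2 * L (Quad a f x)| ≤ K * ε * L (Dq x)) :
    L f ≤ eval (fun i => L (X i)) f := by
  have hC : ∀ c : ℝ, L (C c) = c := by
    intro c
    have := L_C_mul L c 1
    rwa [mul_one, h1, mul_one] at this
  have hb := hL.ball hε h1
  have hr := (abs_le.1 (hrem _ hb)).2
  have hq := hL.quad_le f hH (fun i => L (X i))
  have hD := hL.Dq_nonneg (fun i => L (X i))
  have hR : L (Rem f (fun i => L (X i))) = L f - eval (fun i => L (X i)) f := by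
    simp [Rem, L_C_mul, hC]
  have : K * ε * L (Dq fun i => L (X i)) ≤ δ * L (Dq fun i => L (X i)) :=
    mul_le_mul_of_nonneg_right e3 hD
  linarith

/-- Truncated linear functionals indexed by a finite set of monomials. -/
noncomputable def Lam (F : Finset (Fin n →₀ ℕ)) :
    (F → ℝ) →ₗ[ℝ] (MvPolynomial (Fin n) ℝ →ₗ[ℝ] ℝ) where
  toFun := fun b => ∑ s : F, b s • MvPolynomial.lcoeff ℝ (s : Fin n →₀ ℕ)
  map_add' := fun u v => by simp [add_smul, Finset.sum_add_distrib]
  map_smul' := fun u v => by simp [mul_smul, Finset.smul_sum]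

theorem Lam_apply (F : Finset (Fin n →₀ ℕ)) (b : F → ℝ) (P : MvPolynomial (Fin n) ℝ) :
    Lam F b P = ∑ s : F, b s * coeff (s : Fin n →₀ ℕ) P := by
  simp [Lam, LinearMap.sum_apply]

theorem Lam_eval (F : Finset (Fin n →₀ ℕ)) (x : Fin n → ℝ) (P : MvPolynomial (Fin n) ℝ)
    (hP : P.support ⊆ F) : Lam F (fun s => ∏ i, x i ^ (s : Fin n →₀ ℕ) i) P = eval x P := by
  rw [Lam_apply, eval_eq', Finset.sum_coe_sort F (fun s => (∏ i, x i ^ s i) * coeff s P)]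
  rw [← Finset.sum_subset hP]
  · exact Finset.sum_congr rfl fun s _ => mul_comm _ _
  · intro s _ hs
    simp [notMem_support_iff.1 hs]

theorem exists_monomials (D : ℕ) : ∃ F : Finset (Fin n →₀ ℕ),
    ∀ P : MvPolynomial (Fin n) ℝ, P.totalDegree ≤ D → P.support ⊆ F := by
  classical
  refine ⟨Finset.Iic (Finsupp.equivFunOnFinite.symm (fun _ => D)), ?_⟩
  intro P hP s hs
  simp only [Finset.mem_Iic]
  intro i
  have h1 := le_totalDegree hs
  have h2 : s i ≤ s.sum fun _ e => e := by
    rw [Finsupp.sum_fintype _ _ (by simp)]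
    exact Finset.single_le_sum (f := fun i => s i) (fun _ _ => Nat.zero_le _) (Finset.mem_univ i)
  simp only [Finsupp.equivFunOnFinite_symm_apply_apply]
  omega

theorem exists_Lam (D : ℕ) : ∃ (W : Type) (_ : AddCommGroup W) (_ : Module ℝ W)
    (_ : Module.Finite ℝ W) (Λ : W →ₗ[ℝ] (MvPolynomial (Fin n) ℝ →ₗ[ℝ] ℝ)),
    ∀ x : Fin n → ℝ, ∃ w, ∀ P : MvPolynomial (Fin n) ℝ, P.totalDegree ≤ D → Λ w P = eval x P := by
  obtain ⟨F, hF⟩ := exists_monomials (n := n) D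
  exact ⟨F → ℝ, inferInstance, inferInstance, inferInstance, Lam F, fun x =>
    ⟨fun s => ∏ i, x i ^ (s : Fin n →₀ ℕ) i, fun P hP => Lam_eval F x P (hF P hP)⟩⟩

theorem spec_lin {W : Type} [AddCommGroup W] [Module ℝ W] (f : MvPolynomial (Fin n) ℝ)
    (Λ : W →ₗ[ℝ] (MvPolynomial (Fin n) ℝ →ₗ[ℝ] ℝ)) : Spec {w | Λ w 1 = 1 ∧ 0 ≤ Λ w f} := by
  let l : W →ₗ[ℝ] (Fin 3 → ℝ) :=
    { toFun := fun b => ![Λ b 1, - Λ b 1, Λ b f]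
      map_add' := fun u v => by ext i; fin_cases i <;> simp [add_comm]
      map_smul' := fun u v => by ext i; fin_cases i <;> simp }
  convert Spec.ineq ![-1, 1, 0] l using 1
  ext w
  constructor
  · rintro ⟨h1, h2⟩ j
    fin_cases j <;> simp [l, h1, h2]
  · intro hl
    have e1 := hl 0
    have e2 := hl 1
    have e3 := hl 2
    simp [l] at e1 e2 e3
    exact ⟨by linarith, e3⟩

theorem local_shadow (a : Fin n → ℝ) (f : MvPolynomial (Fin n) ℝ) {δ : ℝ} (hδ : 0 < δ)
    (hH : ∀ v : Fin n → ℝ, δ * ∑ i, v i ^ 2 ≤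
      - (1 / 2) * ∑ i, ∑ j, v i * v j * eval a (pderiv i (pderiv j f))) :
    ∃ ε₀ > 0, ∀ ε, 0 < ε → ε ≤ ε₀ → Shadow {x | x ∈ Metric.closedBall a ε ∧ 0 ≤ eval x f} := by
  obtain ⟨N, K, hK, hrem⟩ := Rem_bound a f
  refine ⟨min 1 (δ / (K + 1)), by positivity, fun ε e0 e1 => ?_⟩
  have e2 : ε ≤ 1 := e1.trans (min_le_left _ _)
  have e3 : K * ε ≤ δ := by
    have := e1.trans (min_le_right _ _)
    rw [le_div_iff₀ (by positivity)] at this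
    nlinarith
  obtain ⟨W, _, _, _, Λ, hΛ⟩ := exists_Lam (n := n) (N + 3 + f.totalDegree)
  have hspec := (spec_valid a ε (N + 1) Λ).inter (spec_lin f Λ)
  let T : W →ₗ[ℝ] (Fin n → ℝ) :=
    { toFun := fun b i => Λ b (X i)
      map_add' := fun u v => by ext i; simp
      map_smul' := fun u v => by ext i; simp }
  refine ⟨W, inferInstance, inferInstance, inferInstance, T, _, hspec, ?_⟩
  ext x
  constructor
  · rintro ⟨hx, hfx⟩
    obtain ⟨w, hw⟩ := hΛ x
    refine ⟨w, ⟨?_, ?_, ?_⟩, ?_⟩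
    · refine valid_of_eval a e0.le x hx (N + 1) 1 _ zero_le_one fun P hP => ?_
      rw [one_mul]
      exact hw P (by omega)
    · rw [hw 1 (by simp)]; simp
    · rw [hw f (by omega)]; exact hfx
    · ext i
      have := hw (X i) (by rw [totalDegree_X]; omega)
      simpa [T] using this
  · rintro ⟨b, ⟨hv, h1, h2⟩, rfl⟩
    have hj := jensen f a e0.le hv h1 hH e3 fun x hx => hrem ε e0 e2 x hx (Λ b) hv.1
    exact ⟨Valid.ball e0.le hv h1, h2.trans hj⟩

end local_relax
end RCS

namespace RCS
section finsler
variable {n : ℕ}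

theorem finsler (g : Fin n → ℝ) (h : Fin n → Fin n → ℝ)
    (H : ∀ v : Fin n → ℝ, v ≠ 0 → ∑ i, v i * g i = 0 → ∑ i, ∑ j, v i * v j * h i j < 0) :
    ∃ c : ℝ, ∃ δ > 0, ∀ v : Fin n → ℝ, δ * ∑ i, v i ^ 2 ≤
      - (1 / 2) * ∑ i, ∑ j, v i * v j * h i j + c * (∑ i, v i * g i) ^ 2 := by
  let Q : (Fin n → ℝ) → ℝ := fun v => ∑ i, ∑ j, v i * v j * h i j
  let l : (Fin n → ℝ) → ℝ := fun v => ∑ i, v i * g i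
  let s : (Fin n → ℝ) → ℝ := fun v => ∑ i, v i ^ 2
  have hQ : Continuous Q := by fun_prop
  have hl : Continuous l := by fun_prop
  have hs : Continuous s := by fun_prop
  have hK : IsCompact {v | s v = 1} := by
    refine Metric.isCompact_of_isClosed_isBounded (isClosed_eq hs continuous_const) ?_
    refine (Metric.isBounded_closedBall (x := 0) (r := 1)).subset ?_
    intro v hv
    rw [mem_closedBall_zero_iff, pi_norm_le_iff_of_nonneg zero_le_one]
    intro i
    have h1 : v i ^ 2 ≤ s v :=
      Finset.single_le_sum (f := fun i => v i ^ 2) (fun i _ => sq_nonneg (v i)) (Finset.mem_univ i)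
    rw [hv] at h1
    rw [Real.norm_eq_abs]
    exact (sq_le_one_iff_abs_le_one _).1 h1
  let O : ℕ → Set (Fin n → ℝ) := fun N => {v | 1 / ((N : ℝ) + 1) < - (1 / 2) * Q v + N * l v ^ 2}
  have hO : ∀ N, IsOpen (O N) := fun N => isOpen_lt continuous_const (by fun_prop)
  have hcov : {v | s v = 1} ⊆ ⋃ N, O N := by
    intro v hv
    have hv0 : v ≠ 0 := by
      rintro rfl
      simp [s] at hv
    rw [Set.mem_iUnion]
    by_cases h0 : l v = 0
    · have h1 : Q v < 0 := H v hv0 h0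
      obtain ⟨N, hN⟩ := exists_nat_one_div_lt (show (0 : ℝ) < - (1 / 2) * Q v by linarith)
      refine ⟨N, ?_⟩
      simp only [O, Set.mem_ofPred_eq, h0]
      linarith
    · have h1 : 0 < l v ^ 2 := by positivity
      obtain ⟨N, hN⟩ := exists_nat_gt ((1 + (1 / 2) * Q v) / l v ^ 2)
      rw [div_lt_iff₀ h1] at hN
      refine ⟨N, ?_⟩
      have h2 : 1 / ((N : ℝ) + 1) ≤ 1 := by
        rw [div_le_one (by positivity)]
        linarith [Nat.cast_nonneg (α := ℝ) N]
      simp only [O, Set.mem_ofPred_eq]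
      linarith
  have hmono : Monotone O := by
    intro N M hNM v hv
    have hNM' : (N : ℝ) ≤ M := by exact_mod_cast hNM
    simp only [O, Set.mem_ofPred_eq] at hv ⊢
    have h1 : 1 / ((M : ℝ) + 1) ≤ 1 / ((N : ℝ) + 1) := by gcongr
    have h2 : (N : ℝ) * l v ^ 2 ≤ M * l v ^ 2 := by gcongr
    linarith
  obtain ⟨N, hN⟩ := hK.elim_directed_cover O hO hcov hmono.directed_le
  refine ⟨N, 1 / ((N : ℝ) + 1), by positivity, fun v => ?_⟩
  change 1 / ((N : ℝ) + 1) * s v ≤ - (1 / 2) * Q v + N * l v ^ 2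
  have hs0 : 0 ≤ s v := Finset.sum_nonneg fun i _ => sq_nonneg (v i)
  rcases hs0.eq_or_lt with h0 | h0
  · have hv : v = 0 := by
      ext i
      have := (Finset.sum_eq_zero_iff_of_nonneg (fun i _ => sq_nonneg (v i))).1 h0.symm i
        (Finset.mem_univ i)
      simpa using this
    subst hv
    simp [s, Q, l]
  · set r := Real.sqrt (s v) with hr
    have hr0 : 0 < r := Real.sqrt_pos.2 h0
    have hr2 : r ^ 2 = s v := Real.sq_sqrt hs0
    have e1 : s (r⁻¹ • v) = (r ^ 2)⁻¹ * s v := by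
      simp only [s, Pi.smul_apply, smul_eq_mul, Finset.mul_sum]
      exact Finset.sum_congr rfl fun i _ => by ring
    have e2 : Q (r⁻¹ • v) = (r ^ 2)⁻¹ * Q v := by
      simp only [Q, Pi.smul_apply, smul_eq_mul, Finset.mul_sum]
      exact Finset.sum_congr rfl fun i _ => Finset.sum_congr rfl fun j _ => by ring
    have e3 : l (r⁻¹ • v) = r⁻¹ * l v := by
      simp only [l, Pi.smul_apply, smul_eq_mul, Finset.mul_sum]
      exact Finset.sum_congr rfl fun i _ => by ring
    have hmem : r⁻¹ • v ∈ {v | s v = 1} := by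
      rw [Set.mem_ofPred_eq, e1, hr2]
      exact inv_mul_cancel₀ h0.ne'
    have := hN hmem
    simp only [O, Set.mem_ofPred_eq, e2, e3] at this
    have h3 : - (1 / 2) * ((r ^ 2)⁻¹ * Q v) + N * (r⁻¹ * l v) ^ 2 =
      (- (1 / 2) * Q v + N * l v ^ 2) / r ^ 2 := by
      field_simp
    rw [h3, lt_div_iff₀ (by positivity), hr2] at this
    exact this.le

theorem local_set (a : Fin n → ℝ) (q : MvPolynomial (Fin n) ℝ) (h0 : eval a q = 0)
    (H : ∀ v : Fin n → ℝ, v ≠ 0 → ∑ i, v i * eval a (pderiv i q) = 0 →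
      ∑ i, ∑ j, v i * v j * eval a (pderiv i (pderiv j q)) < 0) :
    ∃ ε₀ > 0, ∀ ε, 0 < ε → ε ≤ ε₀ → Shadow ({x | 0 ≤ eval x q} ∩ Metric.closedBall a ε) := by
  obtain ⟨c, δ, hδ, hc⟩ := finsler _ _ H
  obtain ⟨ε₁, h1, h2⟩ := local_shadow a (q - C c * q ^ 2) hδ (by
    intro v
    refine (hc v).trans (le_of_eq ?_)
    have e : ∀ i j, eval a (pderiv i (pderiv j (q - C c * q ^ 2))) =
        eval a (pderiv i (pderiv j q)) - 2 * c * eval a (pderiv i q) * eval a (pderiv j q) := by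
      intro i j
      simp [Derivation.leibniz, h0, sq]
      ring
    simp only [e]
    rw [sq (∑ i, v i * eval a (pderiv i q)), Finset.sum_mul_sum]
    simp only [Finset.mul_sum, ← Finset.sum_add_distrib]
    refine Finset.sum_congr rfl fun i _ => Finset.sum_congr rfl fun j _ => ?_
    ring)
  have hcont : Continuous fun x : Fin n → ℝ => 1 - c * eval x q := by
    have := MvPolynomial.continuous_eval q
    fun_prop
  have hop : {x : Fin n → ℝ | 0 < 1 - c * eval x q} ∈ nhds a :=
    (isOpen_lt continuous_const hcont).mem_nhds (by simp [h0])
  obtain ⟨ε₂, h3, h4⟩ := Metric.nhds_basis_closedBall.mem_iff.1 hop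
  refine ⟨min ε₁ ε₂, lt_min h1 h3, fun ε e0 e1 => ?_⟩
  convert h2 ε e0 (e1.trans (min_le_left _ _)) using 1
  ext x
  have key : x ∈ Metric.closedBall a ε → (0 ≤ eval x q ↔ 0 ≤ eval x (q - C c * q ^ 2)) := by
    intro hx
    have h5 : 0 < 1 - c * eval x q :=
      h4 (Metric.closedBall_subset_closedBall (e1.trans (min_le_right _ _)) hx)
    have h6 : eval x (q - C c * q ^ 2) = (1 - c * eval x q) * eval x q := by
      simp; ring
    rw [h6, mul_nonneg_iff_of_pos_left h5]
  simp only [Set.mem_inter_iff, Set.mem_ofPred_eq]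
  constructor
  · rintro ⟨h5, h6⟩
    exact ⟨h6, (key h6).1 h5⟩
  · rintro ⟨h5, h6⟩
    exact ⟨(key h5).2 h6, h5⟩
end finsler
end RCS

namespace RCS

/-! ### Homotopy lemma -/

theorem homotopy (F : ℝ → ℂ → ℂ) (hF : Continuous fun x : ℝ × ℂ => F x.1 x.2)
    (hd : ∀ γ, Differentiable ℂ (F γ)) (c : ℂ) {r : ℝ} (hr : 0 < r)
    (hs : ∀ γ ∈ Set.Icc (0 : ℝ) 1, ∀ w ∈ Metric.sphere c r, F γ w ≠ 0)
    (h0 : ∀ w ∈ Metric.closedBall c r, F 0 w ≠ 0) :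
    ∀ γ ∈ Set.Icc (0 : ℝ) 1, ∀ w ∈ Metric.closedBall c r, F γ w ≠ 0 := by
  have hK : IsCompact (Set.Icc (0 : ℝ) 1 ×ˢ Metric.sphere c r) :=
    isCompact_Icc.prod (isCompact_sphere c r)
  have hne : (Set.Icc (0 : ℝ) 1 ×ˢ Metric.sphere c r).Nonempty :=
    ⟨(0, c + r), by simp [hr.le]⟩
  obtain ⟨⟨γ₀, w₀⟩, ⟨hγ₀, hw₀⟩, hmin⟩ := hK.exists_isMinOn hne hF.norm.continuousOn
  set m := ‖F γ₀ w₀‖ with hm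
  have hm0 : 0 < m := norm_pos_iff.2 (hs γ₀ hγ₀ w₀ hw₀)
  have hmin' : ∀ γ ∈ Set.Icc (0 : ℝ) 1, ∀ w ∈ Metric.sphere c r, m ≤ ‖F γ w‖ :=
    fun γ hγ w hw => hmin (show (γ, w) ∈ _ from ⟨hγ, hw⟩)
  let G : Set ℝ := {γ | ∀ w ∈ Metric.closedBall c r, m ≤ ‖F γ w‖}
  have hFγ : ∀ w, Continuous fun γ => F γ w := fun w =>
    hF.comp (continuous_id.prodMk continuous_const)
  have hG : IsClosed G := by
    have : G = ⋂ w ∈ Metric.closedBall c r, {γ | m ≤ ‖F γ w‖} := by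
      ext γ; simp [G]
    rw [this]
    exact isClosed_biInter fun w _ => isClosed_le continuous_const (hFγ w).norm
  have hmax : ∀ γ ∈ Set.Icc (0 : ℝ) 1, (∀ w ∈ Metric.closedBall c r, F γ w ≠ 0) → γ ∈ G := by
    intro γ hγ h w hw
    have hdc : DiffContOnCl ℂ (fun w => (F γ w)⁻¹) (Metric.ball c r) := by
      apply DifferentiableOn.diffContOnCl
      rw [closure_ball c hr.ne']
      exact (hd γ).differentiableOn.inv h
    have := Complex.norm_le_of_forall_mem_frontier_norm_le (C := m⁻¹) Metric.isBounded_ball hdc (by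
      intro z hz
      rw [frontier_ball c hr.ne'] at hz
      rw [norm_inv]
      exact inv_anti₀ hm0 (hmin' γ hγ z hz)) (by rw [closure_ball c hr.ne']; exact hw)
    rw [norm_inv] at this
    exact (inv_le_inv₀ (norm_pos_iff.2 (h w hw)) hm0).1 this
  have hsub : Set.Icc (0 : ℝ) 1 ⊆ G := by
    refine IsClosed.Icc_subset_of_forall_mem_nhdsWithin (hG.inter isClosed_Icc)
      (hmax 0 (by simp) h0) ?_
    rintro γ ⟨hγG, hγ⟩
    have hev : ∀ᶠ γ' in nhds γ, ∀ w ∈ Metric.closedBall c r, F γ' w ≠ 0 := by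
      refine (isCompact_closedBall c r).eventually_forall_of_forall_eventually fun w hw => ?_
      refine hF.continuousAt.eventually_ne ?_
      exact norm_pos_iff.1 (hm0.trans_le (hγG w hw))
    have h2 : ∀ᶠ γ' in nhdsWithin γ (Set.Ioi γ), γ' ∈ Set.Ioc γ 1 :=
      Ioc_mem_nhdsGT hγ.2
    filter_upwards [hev.filter_mono nhdsWithin_le_nhds, h2] with γ' h3 h4
    exact hmax γ' ⟨hγ.1.trans h4.1.le, h4.2⟩ h3
  intro γ hγ w hw
  exact norm_pos_iff.1 (hm0.trans_le (hsub hγ w hw))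

/-! ### Evaluations along lines -/
section lines
variable {n : ℕ}

/-- evaluation at a complex point -/
noncomputable def cev (q : MvPolynomial (Fin n) ℝ) (z : Fin n → ℂ) : ℂ := aeval z q

theorem aeval_linePoly (q : MvPolynomial (Fin n) ℝ) (a v : Fin n → ℝ) (z : ℂ) :
    Polynomial.aeval z (linePoly q a v) = cev q (fun i => a i + v i * z) := by
  rw [linePoly, cev, ← AlgHom.comp_apply, MvPolynomial.comp_aeval]
  congr 1
  congr 1
  ext i
  simp

theorem eval_linePoly (q : MvPolynomial (Fin n) ℝ) (a v : Fin n → ℝ) (t : ℝ) :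
    (linePoly q a v).eval t = eval (a + t • v) q := by
  rw [linePoly, ← Polynomial.coe_aeval_eq_eval, ← MvPolynomial.coe_aeval_eq_eval]
  change (Polynomial.aeval t) _ = (aeval (a + t • v)) q
  rw [← AlgHom.comp_apply, MvPolynomial.comp_aeval]
  congr 1
  congr 1
  ext i
  simp only [map_add, map_mul, Polynomial.aeval_C, Polynomial.aeval_X, Pi.add_apply,
    Pi.smul_apply, smul_eq_mul]
  change a i + v i * t = _
  ring

theorem cev_real (q : MvPolynomial (Fin n) ℝ) (x : Fin n → ℝ) :
    cev q (fun i => (x i : ℂ)) = ((eval x q : ℝ) : ℂ) := by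
  have := MvPolynomial.aeval_algebraMap_apply ℂ x q
  exact this

theorem continuous_cev (q : MvPolynomial (Fin n) ℝ) : Continuous (cev q) := by
  unfold cev
  induction q using MvPolynomial.induction_on with
  | C c => simpa using continuous_const
  | add p q hp hq => simp only [map_add]; exact hp.add hq
  | mul_X p k hp => simp only [map_mul, aeval_X]; exact hp.mul (continuous_apply k)

theorem differentiable_cev (q : MvPolynomial (Fin n) ℝ) (b c : Fin n → ℂ) :
    Differentiable ℂ fun w : ℂ => cev q (fun i => b i + c i * w) := by
  unfold cev
  induction q using MvPolynomial.induction_on with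
  | C c => simp
  | add p q hp hq => simp only [map_add]; exact Differentiable.add hp hq
  | mul_X p k hp =>
    simp only [map_mul, aeval_X]
    exact Differentiable.mul hp (by fun_prop)

/-- Real-zero, unfolded. -/
def RZ (q : MvPolynomial (Fin n) ℝ) (e : Fin n → ℝ) : Prop :=
  eval e q ≠ 0 ∧ ∀ (v : Fin n → ℝ) (z : ℂ), cev q (fun i => e i + v i * z) = 0 → z.im = 0

/-- Points seen from `e` without crossing a zero of `q`. -/
def U (q : MvPolynomial (Fin n) ℝ) (e : Fin n → ℝ) : Set (Fin n → ℝ) :=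
  {b | ∀ t ∈ Set.Icc (0 : ℝ) 1, eval (e + t • (b - e)) q ≠ 0}

theorem U_self {q : MvPolynomial (Fin n) ℝ} {e b : Fin n → ℝ} (hb : b ∈ U q e) :
    eval b q ≠ 0 := by
  have := hb 1 (by simp)
  simpa using this

theorem U_star {q : MvPolynomial (Fin n) ℝ} {e b : Fin n → ℝ} (hb : b ∈ U q e) {s : ℝ}
    (hs : s ∈ Set.Icc (0 : ℝ) 1) : e + s • (b - e) ∈ U q e := by
  intro t ht
  have := hb (t * s) ⟨mul_nonneg ht.1 hs.1, mul_le_one₀ ht.2 hs.1 hs.2⟩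
  rwa [add_sub_cancel_left, smul_smul]

theorem mem_disc {s : ℂ} : s ∈ Metric.closedBall (1 / 2 : ℂ) (1 / 2) ↔ s.re ^ 2 + s.im ^ 2 ≤ s.re := by
  rw [Metric.mem_closedBall, Complex.dist_eq, ← sq_le_sq₀ (norm_nonneg _) (by norm_num),
    Complex.sq_norm, Complex.normSq_apply]
  have h1 : (1 / 2 : ℂ).re = 1 / 2 := by norm_num
  have h2 : (1 / 2 : ℂ).im = 0 := by norm_num
  rw [Complex.sub_re, Complex.sub_im, h1, h2]
  constructor <;> intro h <;> nlinarith

theorem mem_circle {s : ℂ} : s ∈ Metric.sphere (1 / 2 : ℂ) (1 / 2) ↔ s.re ^ 2 + s.im ^ 2 = s.re := by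
  rw [Metric.mem_sphere, Complex.dist_eq, ← sq_eq_sq₀ (norm_nonneg _) (by norm_num),
    Complex.sq_norm, Complex.normSq_apply]
  have h1 : (1 / 2 : ℂ).re = 1 / 2 := by norm_num
  have h2 : (1 / 2 : ℂ).im = 0 := by norm_num
  rw [Complex.sub_re, Complex.sub_im, h1, h2]
  constructor <;> intro h <;> nlinarith

theorem cev_line_real (q : MvPolynomial (Fin n) ℝ) (a v : Fin n → ℝ) (s : ℂ) (hs : s.im = 0) :
    cev q (fun i => a i + v i * s) = ((eval (a + s.re • v) q : ℝ) : ℂ) := by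
  rw [← cev_real]
  congr 1
  ext i
  have : s = (s.re : ℂ) := by apply Complex.ext <;> simp [hs]
  rw [this]
  simp [mul_comm]

/-- zero-free on the disc -/
theorem disc_ne {q : MvPolynomial (Fin n) ℝ} {e b : Fin n → ℝ} (hq : RZ q e) (hb : b ∈ U q e)
    {s : ℂ} (hs : s ∈ Metric.closedBall (1 / 2 : ℂ) (1 / 2)) :
    cev q (fun i => e i + ((b - e) i : ℝ) * s) ≠ 0 := by
  intro h
  have him := hq.2 _ _ h
  rw [cev_line_real _ _ _ _ him] at h
  rw [mem_disc, him] at hs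
  exact hb s.re ⟨by nlinarith, by nlinarith⟩ (by exact_mod_cast h)

theorem circle_rep {s : ℂ} (hs : s ∈ Metric.sphere (1 / 2 : ℂ) (1 / 2)) (h1 : s ≠ 1) :
    (Complex.I * (s - 1)).im ≠ 0 ∧ ∃ τ : ℝ, s = Complex.I * (s - 1) * τ := by
  rw [mem_circle] at hs
  have hre : s.re ≠ 1 := by
    intro h
    apply h1
    rw [h] at hs
    have : s.im = 0 := by nlinarith
    apply Complex.ext <;> simp [h, this]
  have hne : 1 - s.re ≠ 0 := fun h => hre (by linarith)
  obtain ⟨τ, hτ⟩ : ∃ τ : ℝ, τ * (1 - s.re) = - s.im := ⟨- s.im / (1 - s.re), by field_simp⟩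
  refine ⟨by simpa [sub_eq_zero] using hre, τ, ?_⟩
  apply Complex.ext
  · simp
    apply mul_left_cancel₀ hne
    linear_combination s.im * hτ - hs
  · simp
    linarith

theorem step1 {q : MvPolynomial (Fin n) ℝ} {e b : Fin n → ℝ} (hq : RZ q e) (hb : b ∈ U q e)
    (v : Fin n → ℝ) (β : ℝ) {s : ℂ} (hs : s ∈ Metric.closedBall (1 / 2 : ℂ) (1 / 2)) :
    cev q (fun i => (e i - Complex.I * (1 * β : ℝ) * v i) +
      ((b i - e i) + Complex.I * (1 * β : ℝ) * v i) * s) ≠ 0 := by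
  refine homotopy (fun γ s => cev q (fun i => (e i - Complex.I * (γ * β : ℝ) * v i) +
      ((b i - e i) + Complex.I * (γ * β : ℝ) * v i) * s)) ?_ ?_ (1 / 2) (r := 1 / 2) (by norm_num)
      ?_ ?_ 1 (by simp) s hs
  · refine (continuous_cev q).comp ?_
    fun_prop
  · intro γ
    exact differentiable_cev q _ _
  · intro γ hγ w hw h
    by_cases h1 : w = 1
    · subst h1
      have : cev q (fun i => (b i : ℂ)) = 0 := by
        rw [← h]
        congr 1
        ext i
        ring
      rw [cev_real] at this
      exact U_self hb (by exact_mod_cast this)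
    · obtain ⟨h2, τ, h3⟩ := circle_rep hw h1
      apply h2
      apply hq.2 (τ • (b - e) + (γ * β) • v)
      rw [← h]
      congr 1
      ext i
      simp only [Pi.add_apply, Pi.smul_apply, Pi.sub_apply, smul_eq_mul]
      push_cast
      linear_combination (-(b i - e i : ℂ)) * h3
  · intro w hw
    have := disc_ne hq hb hw
    convert this using 3 with i
    simp

theorem step2 {q : MvPolynomial (Fin n) ℝ} {e b : Fin n → ℝ} (hq : RZ q e) (hb : b ∈ U q e)
    (v : Fin n → ℝ) {η : ℝ} (hη : 0 < η) {z : ℂ} (hz : z.im ≤ - η * (z.re ^ 2 + z.im ^ 2)) :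
    cev q (fun i => b i + (v i - Complex.I * η * (b i - e i)) * z) ≠ 0 := by
  have hs : 1 - Complex.I * η * z ∈ Metric.closedBall (1 / 2 : ℂ) (1 / 2) := by
    rw [mem_disc]
    simp
    nlinarith
  have := step1 hq hb v (1 / η) hs
  convert this using 3 with i
  have hη' : (η : ℂ) ≠ 0 := by exact_mod_cast hη.ne'
  push_cast
  field_simp
  linear_combination ((η : ℂ) * v i * z) * Complex.I_sq

theorem lower_ne {q : MvPolynomial (Fin n) ℝ} {e b : Fin n → ℝ} (hq : RZ q e) (hb : b ∈ U q e)
    (v : Fin n → ℝ) {z : ℂ} (hz : z.im < 0) : cev q (fun i => b i + v i * z) ≠ 0 := by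
  intro h0
  have hP0 : linePoly q b v ≠ 0 := by
    intro h
    have h1 := eval_linePoly q b v 0
    rw [h] at h1
    simp at h1
    exact U_self hb h1.symm
  have hfin : {w : ℂ | Polynomial.aeval w (linePoly q b v) = 0}.Finite := by
    refine ((linePoly q b v).rootSet_finite ℂ).subset fun w hw => ?_
    exact (Polynomial.mem_rootSet).2 ⟨hP0, hw⟩
  have hop : IsOpen ({w : ℂ | Polynomial.aeval w (linePoly q b v) = 0} \ {z})ᶜ :=
    (hfin.subset Set.sdiff_subset).isClosed.isOpen_compl
  have hop2 : IsOpen {w : ℂ | w.im < z.im / 2} := isOpen_lt Complex.continuous_im continuous_const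
  obtain ⟨r, hr, hsub⟩ := Metric.nhds_basis_closedBall.mem_iff.1
    ((hop.inter hop2).mem_nhds (show z ∈ _ from ⟨by simp, by
      simp only [Set.mem_ofPred_eq]; linarith⟩))
  obtain ⟨R, hR⟩ := (isCompact_closedBall z r).bddAbove_image
    (f := fun w : ℂ => w.re ^ 2 + w.im ^ 2) (by fun_prop)
  have hR' : ∀ w ∈ Metric.closedBall z r, w.re ^ 2 + w.im ^ 2 ≤ R := fun w hw =>
    hR (Set.mem_image_of_mem _ hw)
  have hR0 : 0 ≤ R := le_trans (by positivity) (hR' z (by simp [hr.le]))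
  obtain ⟨η, hη, hηR⟩ : ∃ η : ℝ, 0 < η ∧ η * R ≤ - z.im / 2 := by
    refine ⟨(- z.im / 2) / (R + 1), div_pos (by linarith) (by linarith), ?_⟩
    rw [div_mul_eq_mul_div, div_le_iff₀ (by linarith)]
    nlinarith
  have hin : ∀ γ : ℝ, 0 ≤ γ → γ < 1 → ∀ w ∈ Metric.closedBall z r,
      cev q (fun i => b i + (v i - Complex.I * (η * (1 - γ) : ℝ) * (b i - e i)) * w) ≠ 0 := by
    intro γ h1 h2 w hw
    refine step2 hq hb v (mul_pos hη (by linarith)) ?_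
    have h3 : w.im < z.im / 2 := (hsub hw).2
    have h4 := hR' w hw
    have h5 : η * (1 - γ) * (w.re ^ 2 + w.im ^ 2) ≤ η * R := by
      have : η * (1 - γ) ≤ η := by nlinarith
      gcongr
    linarith
  have := homotopy (fun γ w => cev q (fun i => b i +
      (v i - Complex.I * (η * (1 - γ) : ℝ) * (b i - e i)) * w)) (by
        refine (continuous_cev q).comp ?_
        fun_prop) (fun γ => differentiable_cev q _ _) z hr (by
        intro γ hγ w hw
        rcases hγ.2.eq_or_lt with h1 | h1
        · intro h
          have h2 := (hsub (Metric.sphere_subset_closedBall hw)).1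
          apply h2
          refine ⟨?_, ?_⟩
          · rw [Set.mem_ofPred_eq, aeval_linePoly, ← h, h1]
            congr 1
            ext i
            simp
          · rintro rfl
            simp at hw
            exact hr.ne hw
        · exact hin γ hγ.1 h1 w (Metric.sphere_subset_closedBall hw))
      (hin 0 le_rfl one_pos) 1 (by simp) z (by simp [hr.le])
  apply this
  rw [← h0]
  congr 1
  ext i
  simp

theorem RZ.interior {q : MvPolynomial (Fin n) ℝ} {e b : Fin n → ℝ} (hq : RZ q e)
    (hb : b ∈ U q e) : RZ q b := by
  refine ⟨U_self hb, fun v z h => ?_⟩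
  rcases lt_trichotomy z.im 0 with h1 | h1 | h1
  · exact absurd h (lower_ne hq hb v h1)
  · exact h1
  · exfalso
    refine lower_ne hq hb (-v) (z := -z) (by simpa using h1) ?_
    rw [← h]
    congr 1
    ext i
    simp

theorem segment_ne {q : MvPolynomial (Fin n) ℝ} {e b c : Fin n → ℝ} (hq : RZ q e)
    (hb : b ∈ U q e) (hc : c ∈ U q e) {w : ℝ} (hw : w ∈ Set.Icc (0 : ℝ) 1) :
    eval (b + w • (c - b)) q ≠ 0 := by
  have hqb := hq.interior hb
  have := homotopy (fun τ w => cev q (fun i => b i + ((e + τ • (c - e) - b) i : ℝ) * w))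
    (by
      refine (continuous_cev q).comp ?_
      simp only [Pi.sub_apply, Pi.add_apply, Pi.smul_apply]
      fun_prop) (fun γ => differentiable_cev q _ _) (1 / 2) (r := 1 / 2) (by norm_num)
    (by
      intro γ hγ w hw h
      have him := hqb.2 _ _ h
      rw [cev_line_real _ _ _ _ him] at h
      have h' : eval (b + w.re • (e + γ • (c - e) - b)) q = 0 := by exact_mod_cast h
      rw [mem_circle, him] at hw
      have : w.re = 0 ∨ w.re = 1 := by
        have : w.re * (w.re - 1) = 0 := by nlinarith
        rcases mul_eq_zero.1 this with h | h
        · exact Or.inl h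
        · exact Or.inr (by linarith)
      rcases this with h1 | h1
      · rw [h1] at h'
        simp at h'
        exact U_self hb h'
      · rw [h1, one_smul, add_sub_cancel] at h'
        exact hc γ hγ h')
    (by
      intro w hw h
      have him := hqb.2 _ _ h
      rw [cev_line_real _ _ _ _ him] at h
      have h' : eval (b + w.re • (e + (0 : ℝ) • (c - e) - b)) q = 0 := by exact_mod_cast h
      rw [mem_disc, him] at hw
      refine hb (1 - w.re) ⟨by nlinarith, by nlinarith⟩ ?_
      rw [← h']
      congr 2
      ext i
      simp
      ring) 1 (by simp) (w : ℂ) (by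
        rw [mem_disc]
        simp
        nlinarith [hw.1, hw.2])
  intro h
  apply this
  rw [cev_line_real _ _ _ _ (by simp)]
  simp only [one_smul, add_sub_cancel, Complex.ofReal_re]
  rw [h]
  simp

theorem convex_U {q : MvPolynomial (Fin n) ℝ} {e : Fin n → ℝ} (hq : RZ q e) :
    Convex ℝ (U q e) := by
  intro b hb c hc s t hs ht hst u hu
  have := segment_ne hq (U_star hb hu) (U_star hc hu) (w := t) ⟨ht, by linarith⟩
  convert this using 3
  have : s = 1 - t := by linarith
  subst this
  ext i
  simp
  ring

end lines
end RCS

namespace RCS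

/-! ### Real rooted univariate polynomials -/

theorem RealRooted.exists_root {φ : Polynomial ℝ} (h : RealRooted φ) (hd : φ.natDegree ≠ 0) :
    ∃ r : ℝ, φ.IsRoot r := by
  have hdeg : φ.degree ≠ 0 := by
    intro h
    exact hd (Polynomial.natDegree_eq_of_degree_eq_some h)
  obtain ⟨z, hz⟩ := IsAlgClosed.exists_aeval_eq_zero ℂ φ hdeg
  have him := h z hz
  have hzr : z = (z.re : ℂ) := by apply Complex.ext <;> simp [him]
  refine ⟨z.re, ?_⟩
  rw [hzr] at hz
  have := Polynomial.aeval_algebraMap_apply ℂ z.re φ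
  rw [Complex.coe_algebraMap, hz] at this
  rw [Polynomial.IsRoot]
  have h2 : ((Polynomial.aeval z.re φ : ℝ) : ℂ) = 0 := this.symm
  exact_mod_cast h2

theorem laguerre (d : ℕ) : ∀ φ : Polynomial ℝ, φ.natDegree ≤ d → RealRooted φ →
    φ.eval 0 ≠ 0 →
    0 ≤ φ.derivative.eval 0 ^ 2 - φ.eval 0 * φ.derivative.derivative.eval 0 ∧
    ∀ M : ℝ, 0 ≤ M → φ.derivative.eval 0 ^ 2 - φ.eval 0 * φ.derivative.derivative.eval 0 ≤
      M ^ 2 * φ.eval 0 ^ 2 → ∀ s : ℝ, |φ.eval s| ≤ |φ.eval 0| * (1 + |s| * M) ^ d := by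
  induction d with
  | zero =>
    intro φ hd _ _
    rw [Polynomial.eq_C_of_natDegree_le_zero hd]
    simp
  | succ d ih =>
    intro φ hd hr h0
    by_cases hd0 : φ.natDegree = 0
    · rw [Polynomial.eq_C_of_natDegree_eq_zero hd0]
      refine ⟨by simp, fun M hM _ s => ?_⟩
      simp only [Polynomial.eval_C]
      have : 1 ≤ (1 + |s| * M) ^ (d + 1) := one_le_pow₀ (by nlinarith [abs_nonneg s, mul_nonneg (abs_nonneg s) hM])
      nlinarith [abs_nonneg (φ.coeff 0)]
    · obtain ⟨r, hroot⟩ := RealRooted.exists_root hr hd0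
      obtain ⟨ψ, hψ⟩ := Polynomial.dvd_iff_isRoot.2 hroot
      have hψ0 : ψ ≠ 0 := by rintro rfl; simp [hψ] at h0
      have hdeg : ψ.natDegree ≤ d := by
        rw [hψ, Polynomial.natDegree_mul (Polynomial.X_sub_C_ne_zero r) hψ0,
          Polynomial.natDegree_X_sub_C] at hd
        omega
      have hrψ : RealRooted ψ := by
        intro z hz
        apply hr z
        rw [hψ, map_mul, hz, mul_zero]
      have ev : ∀ s, φ.eval s = (s - r) * ψ.eval s := by intro s; rw [hψ]; simp
      have d1 : φ.derivative.eval 0 = ψ.eval 0 - r * ψ.derivative.eval 0 := by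
        rw [hψ]; simp [Polynomial.derivative_mul]; ring
      have d2 : φ.derivative.derivative.eval 0 =
          2 * ψ.derivative.eval 0 - r * ψ.derivative.derivative.eval 0 := by
        rw [hψ]; simp [Polynomial.derivative_mul]; ring
      have d0 := ev 0
      rw [zero_sub] at d0
      have hr0 : r ≠ 0 := by rintro rfl; simp [d0] at h0
      have hp0 : ψ.eval 0 ≠ 0 := by intro h; simp [d0, h] at h0
      obtain ⟨ih1, ih2⟩ := ih ψ hdeg hrψ hp0
      set p0 := ψ.eval 0
      set p1 := ψ.derivative.eval 0
      set p2 := ψ.derivative.derivative.eval 0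
      have hLag : φ.derivative.eval 0 ^ 2 - φ.eval 0 * φ.derivative.derivative.eval 0 =
          p0 ^ 2 + r ^ 2 * (p1 ^ 2 - p0 * p2) := by
        rw [d0, d1, d2]; ring
      rw [hLag]
      have hr2 : 0 < r ^ 2 := by positivity
      have hp2 : 0 < p0 ^ 2 := by positivity
      refine ⟨by positivity, fun M hM hle s => ?_⟩
      rw [d0] at hle
      have hm1 : 1 ≤ (M * |r|) ^ 2 := by
        have : p0 ^ 2 * 1 ≤ p0 ^ 2 * (M * |r|) ^ 2 := by
          rw [mul_pow, sq_abs]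
          nlinarith
        exact le_of_mul_le_mul_left this hp2
      have hm2 : 1 ≤ M * |r| := by
        have : 0 ≤ M * |r| := by positivity
        nlinarith
      have hm3 : p1 ^ 2 - p0 * p2 ≤ M ^ 2 * p0 ^ 2 := by
        have : r ^ 2 * (p1 ^ 2 - p0 * p2) ≤ r ^ 2 * (M ^ 2 * p0 ^ 2) := by nlinarith
        exact le_of_mul_le_mul_left this hr2
      have hb := ih2 M hM hm3 s
      rw [ev s, d0, abs_mul, abs_mul, abs_neg]
      have h1 : |s - r| ≤ |r| * (1 + |s| * M) := by
        have := abs_sub s r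
        nlinarith [abs_nonneg s]
      calc |s - r| * |ψ.eval s| ≤ (|r| * (1 + |s| * M)) * (|p0| * (1 + |s| * M) ^ d) := by
            gcongr
        _ = _ := by ring

/-! ### Derivatives along lines -/
section deriv
variable {n : ℕ}

/-- directional derivative -/
noncomputable def dD (v : Fin n → ℝ) (q : MvPolynomial (Fin n) ℝ) : MvPolynomial (Fin n) ℝ :=
  ∑ i, C (v i) * pderiv i q

theorem eval_dD (v : Fin n → ℝ) (q : MvPolynomial (Fin n) ℝ) (a : Fin n → ℝ) :
    eval a (dD v q) = ∑ i, v i * eval a (pderiv i q) := by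
  simp [dD]

theorem eval_dD_dD (v : Fin n → ℝ) (q : MvPolynomial (Fin n) ℝ) (a : Fin n → ℝ) :
    eval a (dD v (dD v q)) = ∑ i, ∑ j, v i * v j * eval a (pderiv i (pderiv j q)) := by
  rw [eval_dD]
  refine Finset.sum_congr rfl fun i _ => ?_
  simp [dD, Derivation.leibniz, Finset.mul_sum, mul_assoc]

theorem derivative_linePoly (q : MvPolynomial (Fin n) ℝ) (a v : Fin n → ℝ) :
    (linePoly q a v).derivative = linePoly (dD v q) a v := by
  unfold linePoly
  induction q using MvPolynomial.induction_on with
  | C c => simp [dD]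
  | add p q hp hq =>
    have : dD v (p + q) = dD v p + dD v q := by
      simp [dD, mul_add, Finset.sum_add_distrib]
    rw [this, map_add, map_add, map_add, hp, hq]
  | mul_X p k hp =>
    have : dD v (p * X k) = dD v p * X k + C (v k) * p := by
      simp only [dD, Derivation.leibniz, pderiv_X, smul_eq_mul, Pi.single_apply, mul_add,
        Finset.sum_add_distrib, Finset.sum_mul]
      simp only [mul_ite, mul_one, mul_zero, Finset.sum_ite_eq', Finset.sum_ite_eq,
        Finset.mem_univ, if_true]
      rw [add_comm]
      congr 1
      exact Finset.sum_congr rfl fun i _ => by ring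
    have h2 : ∀ (φ : MvPolynomial (Fin n) ℝ →ₐ[ℝ] Polynomial ℝ),
        φ (C (v k)) = Polynomial.C (v k) := fun φ => φ.commutes (v k)
    rw [this, map_mul, Polynomial.derivative_mul, map_add, map_mul, map_mul, hp, h2, aeval_X]
    simp
    ring

theorem natDegree_linePoly (q : MvPolynomial (Fin n) ℝ) (a v : Fin n → ℝ) :
    (linePoly q a v).natDegree ≤ q.totalDegree := by
  unfold linePoly
  rw [aeval_def, eval₂_eq']
  refine Polynomial.natDegree_sum_le_of_forall_le _ _ fun d hd => ?_
  refine (Polynomial.natDegree_C_mul_le _ _).trans ?_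
  refine (Polynomial.natDegree_prod_le _ _).trans ?_
  refine le_trans ?_ (le_totalDegree hd)
  rw [Finsupp.sum_fintype _ _ (by simp)]
  refine Finset.sum_le_sum fun i _ => ?_
  refine Polynomial.natDegree_pow_le.trans ?_
  have : (Polynomial.C (a i) + Polynomial.C (v i) * Polynomial.X).natDegree ≤ 1 := by
    compute_degree
  nlinarith

theorem hasDerivAt_line (q : MvPolynomial (Fin n) ℝ) (a v : Fin n → ℝ) (t : ℝ) :
    HasDerivAt (fun t : ℝ => eval (a + t • v) q) (eval (a + t • v) (dD v q)) t := by
  have := (linePoly q a v).hasDerivAt t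
  rw [derivative_linePoly, eval_linePoly] at this
  simpa only [eval_linePoly] using this

theorem line_factor (q : MvPolynomial (Fin n) ℝ) (a v : Fin n → ℝ) :
    ∃ R : Polynomial ℝ, R.eval 0 = eval a (dD v q) ∧
      ∀ t : ℝ, eval (a + t • v) q = eval a q + t * R.eval t := by
  refine ⟨(linePoly q a v).divX, ?_, fun t => ?_⟩
  · have h := derivative_linePoly q a v
    have h2 := congrArg (Polynomial.eval 0) h
    rw [eval_linePoly, zero_smul, add_zero] at h2
    rw [← h2, ← Polynomial.coeff_zero_eq_eval_zero, ← Polynomial.coeff_zero_eq_eval_zero]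
    simp [Polynomial.coeff_divX, Polynomial.coeff_derivative]
  · have h := congrArg (Polynomial.eval t) (Polynomial.divX_mul_X_add (linePoly q a v))
    rw [eval_linePoly] at h
    rw [← h, Polynomial.coeff_zero_eq_eval_zero, eval_linePoly]
    simp
    ring

theorem sqc {q : MvPolynomial (Fin n) ℝ} {e a : Fin n → ℝ}
    (hrz : ∀ δ ∈ Set.Ioc (0 : ℝ) 1, RZ q (a + δ • (e - a)))
    (h0 : eval a q = 0) (hc : 0 < eval a (dD (e - a) q)) (v : Fin n → ℝ)
    (hv : eval a (dD v q) = 0) (hline : ∃ t : ℝ, eval (a + t • v) q ≠ 0) :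
    eval a (dD v (dD v q)) < 0 := by
  by_contra hcon
  push Not at hcon
  set c := eval a (dD (e - a) q) with hcdef
  obtain ⟨R0, hR0, f0⟩ := line_factor q a (e - a)
  obtain ⟨R1, -, f1⟩ := line_factor (dD v q) a (e - a)
  obtain ⟨R2, -, f2⟩ := line_factor (dD v (dD v q)) a (e - a)
  rw [h0] at f0
  rw [hv] at f1
  simp only [zero_add] at f0 f1
  obtain ⟨k1, hk1⟩ := (isCompact_Icc (a := (0 : ℝ)) (b := 1)).exists_bound_of_continuousOn
    R1.continuous.continuousOn
  obtain ⟨k2, hk2⟩ := (isCompact_Icc (a := (0 : ℝ)) (b := 1)).exists_bound_of_continuousOn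
    R2.continuous.continuousOn
  set k := max k1 k2
  have hk0 : 0 ≤ k := le_trans (norm_nonneg _) ((hk1 0 (by simp)).trans (le_max_left _ _))
  have hR0pos : ∀ᶠ t in nhdsWithin (0 : ℝ) (Set.Ioi 0), c / 2 < R0.eval t := by
    refine Filter.Eventually.filter_mono nhdsWithin_le_nhds ?_
    refine (R0.continuous.tendsto 0).eventually_const_lt ?_
    rw [hR0]; linarith
  have hsmall : ∀ᶠ t in nhdsWithin (0 : ℝ) (Set.Ioi 0), t ∈ Set.Ioc (0 : ℝ) 1 :=
    Ioc_mem_nhdsGT one_pos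
  set m := 2 * k / c with hm
  have hm0 : 0 ≤ m := by positivity
  obtain ⟨s, hs⟩ := hline
  apply hs
  have hbound : ∀ᶠ δ in nhdsWithin (0 : ℝ) (Set.Ioi 0),
      |eval (a + δ • (e - a) + s • v) q| ≤
        |eval (a + δ • (e - a)) q| * (1 + |s| * (m + 1)) ^ q.totalDegree := by
    filter_upwards [hR0pos, hsmall] with δ hδ1 hδ2
    have hrz' := hrz δ hδ2
    set b := a + δ • (e - a) with hb
    have g0 : (linePoly q b v).eval 0 = eval b q := by rw [eval_linePoly]; simp
    have g1 : (linePoly q b v).derivative.eval 0 = eval b (dD v q) := by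
      rw [derivative_linePoly, eval_linePoly]; simp
    have g2 : (linePoly q b v).derivative.derivative.eval 0 = eval b (dD v (dD v q)) := by
      rw [derivative_linePoly, derivative_linePoly, eval_linePoly]; simp
    have := (laguerre q.totalDegree (linePoly q b v) (natDegree_linePoly _ _ _)
      (fun z hz => hrz'.2 v z (by rwa [aeval_linePoly] at hz)) (by rw [g0]; exact hrz'.1)).2
      (m + 1) (by linarith) ?_ s
    · rwa [g0, eval_linePoly] at this
    · rw [g0, g1, g2]
      have p0 : eval b q = δ * R0.eval δ := f0 δ
      have p1 : |eval b (dD v q)| ≤ k * δ := by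
        rw [hb, f1 δ, abs_mul, abs_of_pos hδ2.1, mul_comm]
        exact mul_le_mul_of_nonneg_right ((hk1 δ ⟨hδ2.1.le, hδ2.2⟩).trans (le_max_left _ _))
          hδ2.1.le
      have p2 : - (k * δ) ≤ eval b (dD v (dD v q)) := by
        rw [hb, f2 δ]
        have := (abs_le.1 ((hk2 δ ⟨hδ2.1.le, hδ2.2⟩).trans (le_max_right k1 k2))).1
        nlinarith [hδ2.1]
      have p3 : k * δ ≤ m * eval b q := by
        rw [p0, hm, div_mul_eq_mul_div, le_div_iff₀ hc]
        have : k * δ * (c / 2) ≤ k * δ * R0.eval δ :=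
          mul_le_mul_of_nonneg_left hδ1.le (mul_nonneg hk0 hδ2.1.le)
        linarith
      have p4 : 0 < eval b q := by
        rw [p0]; exact mul_pos hδ2.1 (by linarith)
      set α := eval b q
      set β := eval b (dD v q)
      set κ := eval b (dD v (dD v q))
      have q1 : β ^ 2 ≤ (m * α) ^ 2 := by
        rw [← sq_abs β]
        exact pow_le_pow_left₀ (abs_nonneg _) (p1.trans p3) 2
      have q2 : - (α * κ) ≤ α * (m * α) := by nlinarith
      nlinarith [mul_nonneg hm0 (sq_nonneg α), sq_nonneg α]
  have hcont : Continuous fun x : Fin n → ℝ => eval x q := MvPolynomial.continuous_eval q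
  have l1 : Filter.Tendsto (fun δ : ℝ => |eval (a + δ • (e - a) + s • v) q|)
      (nhdsWithin (0 : ℝ) (Set.Ioi 0)) (nhds |eval (a + s • v) q|) := by
    have : Continuous (fun δ : ℝ => |eval (a + δ • (e - a) + s • v) q|) :=
      (hcont.comp (by fun_prop)).abs
    have := (this.tendsto 0).mono_left (nhdsWithin_le_nhds (s := Set.Ioi 0))
    simpa using this
  have l2 : Filter.Tendsto (fun δ : ℝ => |eval (a + δ • (e - a)) q| *
      (1 + |s| * (m + 1)) ^ q.totalDegree) (nhdsWithin (0 : ℝ) (Set.Ioi 0)) (nhds 0) := by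
    have : Continuous (fun δ : ℝ => |eval (a + δ • (e - a)) q| *
      (1 + |s| * (m + 1)) ^ q.totalDegree) :=
      ((hcont.comp (by fun_prop : Continuous fun δ : ℝ => a + δ • (e - a))).abs).mul continuous_const
    have := (this.tendsto 0).mono_left (nhdsWithin_le_nhds (s := Set.Ioi 0))
    simpa [h0] using this
  have := le_of_tendsto_of_tendsto l1 l2 hbound
  exact abs_nonpos_iff.1 this

end deriv
end RCS

namespace RCS

/-! ### The rigidly convex set -/
section final
variable {n : ℕ}

theorem mem_rigidSet {p : MvPolynomial (Fin n) ℝ} {e a : Fin n → ℝ} :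
    a ∈ rigidSet p e ↔ ∀ t : ℝ, 0 ≤ t → t < 1 → eval (e + t • (a - e)) p ≠ 0 := by
  simp only [rigidSet, Set.mem_ofPred_eq, Polynomial.IsRoot, eval_linePoly, ne_eq]

theorem rz_of {p : MvPolynomial (Fin n) ℝ} {e : Fin n → ℝ} (h : IsRealZero p e) : RZ p e :=
  ⟨h.1, fun v z hz => h.2 v z (by rw [aeval_linePoly]; exact hz)⟩

theorem isOpen_U (q : MvPolynomial (Fin n) ℝ) (e : Fin n → ℝ) : IsOpen (U q e) := by
  rw [isOpen_iff_eventually]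
  intro b hb
  refine isCompact_Icc.eventually_forall_of_forall_eventually fun t ht => ?_
  have hc : Continuous fun z : (Fin n → ℝ) × ℝ => eval (e + z.2 • (z.1 - e)) q :=
    (MvPolynomial.continuous_eval q).comp (by fun_prop)
  exact hc.continuousAt.eventually_ne (hb t ht)

theorem self_mem_U {q : MvPolynomial (Fin n) ℝ} {e : Fin n → ℝ} (h : eval e q ≠ 0) : e ∈ U q e := by
  intro t _
  simpa using h

theorem U_subset_rigid (p : MvPolynomial (Fin n) ℝ) (e : Fin n → ℝ) : U p e ⊆ rigidSet p e :=
  fun _ hb => mem_rigidSet.2 fun t h0 h1 => hb t ⟨h0, h1.le⟩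

theorem rigid_subset (p : MvPolynomial (Fin n) ℝ) (e : Fin n → ℝ) :
    rigidSet p e ⊆ closure (U p e) := by
  intro a ha
  rw [mem_rigidSet] at ha
  have h1 : ∀ᶠ t in nhdsWithin (1 : ℝ) (Set.Iio 1), e + t • (a - e) ∈ U p e := by
    have : ∀ᶠ t in nhdsWithin (1 : ℝ) (Set.Iio 1), t ∈ Set.Ico (0 : ℝ) 1 := Ico_mem_nhdsLT one_pos
    filter_upwards [this] with t ht s hs
    rw [add_sub_cancel_left, smul_smul]
    refine ha _ (mul_nonneg hs.1 ht.1) ?_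
    nlinarith [hs.1, hs.2, ht.1, ht.2]
  have h2 : Filter.Tendsto (fun t : ℝ => e + t • (a - e)) (nhdsWithin (1 : ℝ) (Set.Iio 1))
      (nhds a) := by
    have : Continuous fun t : ℝ => e + t • (a - e) := by fun_prop
    have := (this.tendsto 1).mono_left (nhdsWithin_le_nhds (s := Set.Iio 1))
    simpa using this
  exact mem_closure_of_tendsto h2 h1

theorem cev_mul (q r : MvPolynomial (Fin n) ℝ) (z : Fin n → ℂ) :
    cev (q * r) z = cev q z * cev r z := by simp [cev]

theorem RZ.factor {p q : MvPolynomial (Fin n) ℝ} {e : Fin n → ℝ} (h : RZ p e) (hd : q ∣ p) :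
    RZ q e := by
  obtain ⟨r, rfl⟩ := hd
  refine ⟨fun h0 => h.1 (by rw [map_mul, h0, zero_mul]), fun v z hz => h.2 v z ?_⟩
  rw [cev_mul, hz, zero_mul]

theorem U_factor {p q : MvPolynomial (Fin n) ℝ} (e : Fin n → ℝ) (hd : q ∣ p) :
    U p e ⊆ U q e := by
  obtain ⟨r, rfl⟩ := hd
  intro b hb t ht h0
  exact hb t ht (by rw [map_mul, h0, zero_mul])

theorem pos_on_U {q : MvPolynomial (Fin n) ℝ} {e b : Fin n → ℝ} (he : 0 < eval e q)
    (hb : b ∈ U q e) : 0 < eval b q := by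
  by_contra hcon
  push Not at hcon
  have hc : Continuous fun t : ℝ => eval (e + t • (b - e)) q :=
    (MvPolynomial.continuous_eval q).comp (by fun_prop)
  have := intermediate_value_Icc' (zero_le_one (α := ℝ)) hc.continuousOn
  obtain ⟨t, ht, h0⟩ := this (show (0 : ℝ) ∈ _ from ⟨by simpa using hcon, by simpa using he.le⟩)
  exact hb t ht h0

theorem nonneg_on_closure {q : MvPolynomial (Fin n) ℝ} {e b : Fin n → ℝ} (he : 0 < eval e q)
    (hb : b ∈ closure (U q e)) : 0 ≤ eval b q := by
  have : closure (U q e) ⊆ {b | 0 ≤ eval b q} :=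
    closure_minimal (fun b hb => (pos_on_U he hb).le)
      (isClosed_le continuous_const (MvPolynomial.continuous_eval q))
  exact this hb

theorem seg_mem {V : Set (Fin n → ℝ)} (hV : Convex ℝ V) (hVo : IsOpen V) {a x : Fin n → ℝ}
    (ha : a ∈ closure V) (hx : x ∈ V) {t : ℝ} (ht : t ∈ Set.Ioc (0 : ℝ) 1) :
    a + t • (x - a) ∈ V := by
  rcases ht.2.eq_or_lt with h | h
  · subst h; simpa using hx
  · have := hV.openSegment_closure_interior_subset_interior ha (by rwa [hVo.interior_eq])
    rw [hVo.interior_eq] at this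
    apply this
    refine ⟨1 - t, t, by linarith, ht.1, by ring, ?_⟩
    ext i
    simp
    ring

theorem grad_pos {q : MvPolynomial (Fin n) ℝ} {e a : Fin n → ℝ} {V : Set (Fin n → ℝ)}
    (hV : Convex ℝ V) (hVo : IsOpen V) (he : e ∈ V) (hpos : ∀ x ∈ V, 0 < eval x q)
    (ha : a ∈ closure V) (h0 : eval a q = 0)
    (hg : (fun i => eval a (pderiv i q)) ≠ 0) : 0 < eval a (dD (e - a) q) := by
  have key : ∀ x ∈ V, 0 ≤ eval a (dD (x - a) q) := by
    intro x hx
    obtain ⟨R, hR, f⟩ := line_factor q a (x - a)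
    rw [← hR]
    have h1 : ∀ᶠ t in nhdsWithin (0 : ℝ) (Set.Ioi 0), 0 ≤ R.eval t := by
      filter_upwards [Ioc_mem_nhdsGT (zero_lt_one (α := ℝ))] with t ht
      have h2 := hpos _ (seg_mem hV hVo ha hx ht)
      rw [f t, h0, zero_add] at h2
      exact (pos_of_mul_pos_right h2 ht.1.le).le
    exact ge_of_tendsto ((R.continuous.tendsto 0).mono_left nhdsWithin_le_nhds) h1
  set g : Fin n → ℝ := fun i => eval a (pderiv i q) with hgdef
  have hgs : 0 < ∑ i, g i * g i := by
    obtain ⟨i, hi⟩ := Function.ne_iff.1 hg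
    exact Finset.sum_pos' (fun i _ => mul_self_nonneg _)
      ⟨i, Finset.mem_univ i, mul_self_pos.2 hi⟩
  have hc : Continuous fun t : ℝ => e - t • g := by fun_prop
  have hev : ∀ᶠ t in nhdsWithin (0 : ℝ) (Set.Ioi 0), e - t • g ∈ V := by
    refine Filter.Eventually.filter_mono nhdsWithin_le_nhds ?_
    refine hc.continuousAt.eventually_mem (hVo.mem_nhds ?_)
    simpa using he
  obtain ⟨t, ht1, ht2⟩ := (hev.and self_mem_nhdsWithin).exists
  have h3 := key _ ht1
  have h4 : eval a (dD (e - t • g - a) q) = eval a (dD (e - a) q) - t * ∑ i, g i * g i := by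
    rw [eval_dD, eval_dD, Finset.mul_sum, ← Finset.sum_sub_distrib]
    refine Finset.sum_congr rfl fun i _ => ?_
    simp [hgdef]
    ring
  rw [h4] at h3
  have : 0 < t * ∑ i, g i * g i := mul_pos ht2 hgs
  linarith

/-- nearby uniformity -/
theorem near {P : (Fin n → ℝ) → ℝ → Prop} {a : Fin n → ℝ}
    (h : ∀ᶠ z in nhds (a, (0 : ℝ)), P z.1 z.2) :
    ∃ ε > 0, ∀ x ∈ Metric.closedBall a ε, ∀ s ∈ Set.Icc (0 : ℝ) ε, P x s := by
  obtain ⟨ε, h1, h2⟩ := Metric.nhds_basis_closedBall.eventually_iff.1 h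
  refine ⟨ε, h1, fun x hx s hs => ?_⟩
  refine @h2 (x, s) ?_
  rw [Metric.mem_closedBall, Prod.dist_eq]
  refine max_le hx ?_
  rw [Real.dist_eq, sub_zero, abs_of_nonneg hs.1]
  exact hs.2

/-- The local description of a factor at `a`. -/
def Good (S : Set (Fin n → ℝ)) (e a : Fin n → ℝ) (g : MvPolynomial (Fin n) ℝ) : Prop :=
  ∃ ε₀ > 0, ∃ T : Set (Fin n → ℝ),
    (∀ ε, 0 < ε → ε ≤ ε₀ → Shadow (T ∩ Metric.closedBall a ε)) ∧ S ⊆ T ∧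
    ∀ x ∈ T, x ∈ Metric.closedBall a ε₀ → ∀ s ∈ Set.Ioc (0 : ℝ) ε₀, eval (x + s • (e - x)) g ≠ 0

theorem good_inactive (S : Set (Fin n → ℝ)) (e a : Fin n → ℝ) {g : MvPolynomial (Fin n) ℝ}
    (h : eval a g ≠ 0) : Good S e a g := by
  have hc : Continuous fun z : (Fin n → ℝ) × ℝ => eval (z.1 + z.2 • (e - z.1)) g :=
    (MvPolynomial.continuous_eval g).comp (by fun_prop)
  obtain ⟨ε, h1, h2⟩ := near (P := fun x s => eval (x + s • (e - x)) g ≠ 0) (a := a)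
    (hc.continuousAt.eventually_ne (by simpa using h))
  refine ⟨ε, h1, Set.univ, fun ε' h3 _ => ?_, Set.subset_univ _, fun x _ hx s hs =>
    h2 x hx s ⟨hs.1.le, hs.2⟩⟩
  rw [Set.univ_inter]
  exact shadow_closedBall a h3.le

theorem good_mul {S : Set (Fin n → ℝ)} {e a : Fin n → ℝ} {g h : MvPolynomial (Fin n) ℝ}
    (hg : Good S e a g) (hh : Good S e a h) : Good S e a (g * h) := by
  obtain ⟨ε₁, p1, T₁, s1, i1, n1⟩ := hg
  obtain ⟨ε₂, p2, T₂, s2, i2, n2⟩ := hh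
  refine ⟨min ε₁ ε₂, lt_min p1 p2, T₁ ∩ T₂, fun ε e0 e1 => ?_, Set.subset_inter i1 i2, ?_⟩
  · rw [Set.inter_inter_distrib_right]
    exact (s1 ε e0 (e1.trans (min_le_left _ _))).inter (s2 ε e0 (e1.trans (min_le_right _ _)))
  · rintro x ⟨x1, x2⟩ hx s hs
    rw [map_mul]
    exact mul_ne_zero
      (n1 x x1 (Metric.closedBall_subset_closedBall (min_le_left _ _) hx) s
        ⟨hs.1, hs.2.trans (min_le_left _ _)⟩)
      (n2 x x2 (Metric.closedBall_subset_closedBall (min_le_right _ _) hx) s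
        ⟨hs.1, hs.2.trans (min_le_right _ _)⟩)

theorem good_active {q : MvPolynomial (Fin n) ℝ} {e a : Fin n → ℝ} {V : Set (Fin n → ℝ)}
    (hV : Convex ℝ V) (hVo : IsOpen V) (heV : e ∈ V) (hq : RZ q e) (he : 0 < eval e q)
    (hVU : V ⊆ U q e) (ha : a ∈ closure V) (h0 : eval a q = 0)
    (hg : (fun i => eval a (pderiv i q)) ≠ 0)
    (hline : ∀ v : Fin n → ℝ, v ≠ 0 → ∃ t : ℝ, eval (a + t • v) q ≠ 0) :
    Good (closure V) e a q := by
  have hgr := grad_pos hV hVo heV (fun x hx => pos_on_U he (hVU hx)) ha h0 hg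
  have hrz : ∀ δ ∈ Set.Ioc (0 : ℝ) 1, RZ q (a + δ • (e - a)) := fun δ hδ =>
    hq.interior (hVU (seg_mem hV hVo ha heV hδ))
  obtain ⟨ε₁, p1, s1⟩ := local_set a q h0 (by
    intro v hv htan
    have := sqc hrz h0 hgr v (by rw [eval_dD]; exact htan) (hline v hv)
    rwa [eval_dD_dD] at this)
  have hc : Continuous fun z : (Fin n → ℝ) × ℝ => eval (z.1 + z.2 • (e - z.1)) (dD (e - z.1) q) := by
    simp only [eval_dD]
    refine continuous_finsetSum _ fun i _ => ?_
    refine Continuous.mul (by simp only [Pi.sub_apply]; fun_prop) ?_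
    exact (MvPolynomial.continuous_eval (pderiv i q)).comp (by fun_prop)
  obtain ⟨ε₂, p2, n2⟩ := near (P := fun x s => 0 < eval (x + s • (e - x)) (dD (e - x) q)) (a := a)
    (hc.continuousAt.eventually_const_lt (by simpa using hgr))
  refine ⟨min ε₁ ε₂, lt_min p1 p2, {x | 0 ≤ eval x q},
    fun ε e0 e1 => s1 ε e0 (e1.trans (min_le_left _ _)), ?_, ?_⟩
  · intro x hx
    exact nonneg_on_closure he (closure_mono hVU hx)
  · intro x hx hxb s hs
    have hx0 : 0 ≤ eval x q := hx
    have hxb' := Metric.closedBall_subset_closedBall (min_le_right ε₁ ε₂) hxb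
    have hmono : StrictMonoOn (fun s : ℝ => eval (x + s • (e - x)) q) (Set.Icc 0 ε₂) := by
      refine strictMonoOn_of_deriv_pos (convex_Icc _ _)
        (fun t _ => (hasDerivAt_line q x (e - x) t).continuousAt.continuousWithinAt) ?_
      intro t ht
      rw [(hasDerivAt_line q x (e - x) t).deriv]
      exact n2 x hxb' t (interior_subset ht)
    have := hmono ⟨le_rfl, p2.le⟩ ⟨hs.1.le, hs.2.trans (min_le_right _ _)⟩ hs.1
    simp only [zero_smul, add_zero] at this
    exact (hx0.trans_lt this).ne'

theorem RZ.neg {q : MvPolynomial (Fin n) ℝ} {e : Fin n → ℝ} (h : RZ q e) : RZ (-q) e :=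
  ⟨by simpa using h.1, fun v z hz => h.2 v z (by simpa [cev] using hz)⟩

theorem good_active' {q : MvPolynomial (Fin n) ℝ} {e a : Fin n → ℝ} {V : Set (Fin n → ℝ)}
    (hV : Convex ℝ V) (hVo : IsOpen V) (heV : e ∈ V) (hq : RZ q e)
    (hVU : V ⊆ U q e) (ha : a ∈ closure V) (h0 : eval a q = 0)
    (hg : (fun i => eval a (pderiv i q)) ≠ 0)
    (hline : ∀ v : Fin n → ℝ, v ≠ 0 → ∃ t : ℝ, eval (a + t • v) q ≠ 0) :
    Good (closure V) e a q := by
  rcases lt_or_gt_of_ne hq.1 with he | he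
  · have : Good (closure V) e a (-q) := by
      refine good_active hV hVo heV hq.neg (by simpa using he) ?_ ha (by simpa using h0) ?_ ?_
      · intro b hb t ht
        simpa using hVU hb t ht
      · intro h
        apply hg
        ext i
        have := congrFun h i
        simpa using this
      · intro v hv
        obtain ⟨t, ht⟩ := hline v hv
        exact ⟨t, by simpa using ht⟩
    obtain ⟨ε, p1, T, s1, i1, n1⟩ := this
    refine ⟨ε, p1, T, s1, i1, fun x hx hxb s hs => ?_⟩
    simpa using n1 x hx hxb s hs
  · exact good_active hV hVo heV hq he hVU ha h0 hg hline

theorem good_dvd {p : MvPolynomial (Fin n) ℝ} {e a : Fin n → ℝ} (hp : RZ p e)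
    (ha : a ∈ closure (U p e))
    (hbd : ∀ q : MvPolynomial (Fin n) ℝ, Irreducible q → q ∣ p → eval a q = 0 →
        ((fun i => eval a (pderiv i q)) ≠ 0 ∧
          ∀ v : Fin n → ℝ, v ≠ 0 → ∃ t : ℝ, eval (a + t • v) q ≠ 0))
    (g : MvPolynomial (Fin n) ℝ) : g ∣ p → Good (closure (U p e)) e a g := by
  induction g using WfDvdMonoid.induction_on_irreducible with
  | zero =>
    intro h
    exact absurd (by rw [zero_dvd_iff.1 h]; simp) hp.1
  | unit u hu =>
    intro _
    exact good_inactive _ e a (hu.map (eval a)).ne_zero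
  | mul g i hg hi ih =>
    intro hd
    have hid : i ∣ p := (dvd_mul_right i g).trans hd
    refine good_mul ?_ (ih ((dvd_mul_left g i).trans hd))
    by_cases h0 : eval a i = 0
    · obtain ⟨h1, h2⟩ := hbd i hi hid h0
      exact good_active' (convex_U hp) (isOpen_U p e) (self_mem_U hp.1) (hp.factor hid)
        (U_factor e hid) ha h0 h1 h2
    · exact good_inactive _ e a h0

theorem local_at {p : MvPolynomial (Fin n) ℝ} {e a : Fin n → ℝ} (hp : RZ p e)
    (hS : rigidSet p e = closure (U p e)) (ha : a ∈ closure (U p e))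
    (hgood : Good (closure (U p e)) e a p) :
    ∃ ε > 0, Shadow (rigidSet p e ∩ Metric.closedBall a ε) := by
  obtain ⟨ε₀, p0, T, s0, i0, n0⟩ := hgood
  set σ := min ε₀ (1 / 2) with hσ
  have hσ0 : 0 < σ := lt_min p0 (by norm_num)
  have hσ1 : σ ≤ 1 / 2 := min_le_right _ _
  have hc : Continuous fun x : Fin n → ℝ => x + σ • (e - x) := by fun_prop
  have hmem := seg_mem (convex_U hp) (isOpen_U p e) ha (self_mem_U hp.1) (t := σ)
    ⟨hσ0, by linarith⟩
  have hev := hc.continuousAt.eventually_mem ((isOpen_U p e).mem_nhds hmem)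
  obtain ⟨ε₁, p1, h1⟩ := Metric.nhds_basis_closedBall.eventually_iff.1 hev
  refine ⟨min ε₀ ε₁, lt_min p0 p1, ?_⟩
  convert s0 (min ε₀ ε₁) (lt_min p0 p1) (min_le_left _ _) using 1
  ext x
  constructor
  · rintro ⟨hx, hxb⟩
    exact ⟨i0 (hS ▸ hx), hxb⟩
  · rintro ⟨hx, hxb⟩
    refine ⟨?_, hxb⟩
    rw [mem_rigidSet]
    intro t t0 t1
    have e1 : e + t • (x - e) = x + (1 - t) • (e - x) := by
      ext i; simp; ring
    by_cases hts : 1 - t ≤ σ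
    · rw [e1]
      exact n0 x hx (Metric.closedBall_subset_closedBall (min_le_left _ _) hxb) _
        ⟨by linarith, hts.trans (min_le_left _ _)⟩
    · push Not at hts
      have hy := @h1 x (Metric.closedBall_subset_closedBall (min_le_right _ _) hxb)
      have hσ2 : 0 < 1 - σ := by linarith
      have := hy (t / (1 - σ)) ⟨by positivity, by rw [div_le_one hσ2]; linarith⟩
      convert this using 3
      ext i
      simp
      field_simp
      ring

end final

theorem main {n : ℕ} (p : MvPolynomial (Fin n) ℝ) (e : Fin n → ℝ)
    (hrz : IsRealZero p e) (hcomp : IsCompact (rigidSet p e))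
    (hbd : ∀ a ∈ frontier (rigidSet p e),
      ∀ q : MvPolynomial (Fin n) ℝ, Irreducible q → q ∣ p → MvPolynomial.eval a q = 0 →
        ((fun i => MvPolynomial.eval a (MvPolynomial.pderiv i q)) ≠ 0 ∧
          ∀ v : Fin n → ℝ, v ≠ 0 → ∃ t : ℝ, MvPolynomial.eval (a + t • v) q ≠ 0)) :
    Shadow (rigidSet p e) := by
  have hp := rz_of hrz
  have hS : rigidSet p e = closure (U p e) :=
    (rigid_subset p e).antisymm (closure_minimal (U_subset_rigid p e) hcomp.isClosed)
  refine shadow_of_local ?_ hcomp ⟨e, U_subset_rigid p e (self_mem_U hp.1)⟩ ?_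
  · rw [hS]; exact (convex_U hp).closure
  · intro a ha
    by_cases hai : a ∈ interior (rigidSet p e)
    · obtain ⟨ε, h1, h2⟩ := Metric.nhds_basis_closedBall.mem_iff.1 (mem_interior_iff_mem_nhds.1 hai)
      refine ⟨ε, h1, ?_⟩
      rw [Set.inter_eq_right.2 h2]
      exact shadow_closedBall a h1.le
    · have hfr : a ∈ frontier (rigidSet p e) := ⟨subset_closure ha, hai⟩
      have ha' : a ∈ closure (U p e) := hS ▸ ha
      exact local_at hp hS ha' (good_dvd hp ha' (hbd a hfr) p dvd_rfl)

end RCS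

/-- If `p` is real-zero with respect to `e` with compact rigidly convex
set `S_e(p)`, and for every boundary point `a` of `S_e(p)` every irreducible factor of `p`
vanishing at `a` has `a` as a smooth point and does not vanish identically on any full
affine line through `a`, then `S_e(p)` is a spectrahedral shadow. -/
theorem rigidly_convex_set_is_spectrahedral_shadow
    {n : ℕ} (p : MvPolynomial (Fin n) ℝ) (e : Fin n → ℝ)
    (hrz : IsRealZero p e) (hcomp : IsCompact (rigidSet p e))
    (hbd : ∀ a ∈ frontier (rigidSet p e),
      ∀ q : MvPolynomial (Fin n) ℝ, Irreducible q → q ∣ p → MvPolynomial.eval a q = 0 →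
        ((fun i => MvPolynomial.eval a (MvPolynomial.pderiv i q)) ≠ 0 ∧
          ∀ v : Fin n → ℝ, v ≠ 0 → ∃ t : ℝ, MvPolynomial.eval (a + t • v) q ≠ 0)) :
    IsSpectrahedralShadow (rigidSet p e) := by
  exact RCS.Shadow.toFrozen (RCS.main p e hrz hcomp hbd)
end

section
/- Let h ∈ ℝ[x₁,…,xₙ] be a homogeneous polynomial hyperbolic with respect to e ∈ ℝⁿ, and let a ∈ ℝⁿ. For every f in the interior of the hyperbolicity cone Λ_e(h), the order of vanishing of the univariate polynomial h_{a,f}(t) := h(a − tf) at t = 0 equals the multiplicity of h at a (in particular, this order is independent of the choice of f in the interior of Λ_e(h)). -/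
open MvPolynomial

section HypAux

open Filter Topology

/-- Componentwise cast of a real vector to a complex one. -/
noncomputable def cvec {n : ℕ} (x : Fin n → ℝ) : Fin n → ℂ := fun i => (x i : ℂ)

/-- Complex evaluation of a real polynomial. -/
noncomputable def cev {n : ℕ} (h : MvPolynomial (Fin n) ℝ) (w : Fin n → ℂ) : ℂ :=
  MvPolynomial.aeval w h

/-- Complex line polynomial. -/
noncomputable def cline {n : ℕ} (h : MvPolynomial (Fin n) ℝ) (w v : Fin n → ℂ) :
    Polynomial ℂ :=
  MvPolynomial.aeval (fun i => Polynomial.C (w i) + Polynomial.C (v i) * Polynomial.X) h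

lemma cvec_add {n : ℕ} (x y : Fin n → ℝ) : cvec (x + y) = cvec x + cvec y := by
  ext i; simp [cvec]

lemma cvec_neg {n : ℕ} (x : Fin n → ℝ) : cvec (-x) = -cvec x := by
  ext i; simp [cvec]

lemma cvec_smul {n : ℕ} (c : ℝ) (x : Fin n → ℝ) : cvec (c • x) = (c : ℂ) • cvec x := by
  ext i; simp [cvec]

lemma cline_eval {n : ℕ} (h : MvPolynomial (Fin n) ℝ) (w v : Fin n → ℂ) (z : ℂ) :
    (cline h w v).eval z = cev h (w + z • v) := by
  unfold cline cev
  induction h using MvPolynomial.induction_on with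
  | C a => simp [Polynomial.algebraMap_apply]
  | add p q hp hq => simp [hp, hq]
  | mul_X p i hp => simp [hp, mul_comm z]

lemma linePoly_aeval {n : ℕ} (h : MvPolynomial (Fin n) ℝ) (a v : Fin n → ℝ) (z : ℂ) :
    Polynomial.aeval z (linePoly h a v) = cev h (cvec a + z • cvec v) := by
  unfold linePoly cev
  induction h using MvPolynomial.induction_on with
  | C a => simp [Polynomial.algebraMap_apply]
  | add p q hp hq => simp [hp, hq]
  | mul_X p i hp => simp [hp, mul_comm z, cvec]

lemma cev_continuous {n : ℕ} (h : MvPolynomial (Fin n) ℝ) : Continuous (cev h) := by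
  have : cev h = fun w => MvPolynomial.eval w (MvPolynomial.map (algebraMap ℝ ℂ) h) := by
    ext w; simp [cev, MvPolynomial.eval_map, MvPolynomial.aeval_def]
  rw [this]
  exact MvPolynomial.continuous_eval _

lemma cev_smul {n d : ℕ} {h : MvPolynomial (Fin n) ℝ} (hh : h.IsHomogeneous d) (c : ℂ)
    (w : Fin n → ℂ) : cev h (c • w) = c ^ d * cev h w := by
  unfold cev
  rw [MvPolynomial.aeval_def, MvPolynomial.aeval_def, MvPolynomial.eval₂_eq,
    MvPolynomial.eval₂_eq, Finset.mul_sum]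
  refine Finset.sum_congr rfl fun s hs => ?_
  have h1 : ∑ i ∈ s.support, s i = d := by
    have := hh (MvPolynomial.mem_support_iff.1 hs)
    rw [← this, Finsupp.weight_apply, Finsupp.sum]; simp
  simp only [Pi.smul_apply, smul_eq_mul, mul_pow, Finset.prod_mul_distrib,
    Finset.prod_pow_eq_pow_sum, h1]
  ring

lemma cev_cvec {n : ℕ} (h : MvPolynomial (Fin n) ℝ) (x : Fin n → ℝ) :
    cev h (cvec x) = ((MvPolynomial.eval x h : ℝ) : ℂ) := by
  unfold cev cvec
  induction h using MvPolynomial.induction_on with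
  | C a => simp
  | add p q hp hq => simp [hp, hq]
  | mul_X p i hp => simp [hp]

lemma cline_natDegree {n : ℕ} (h : MvPolynomial (Fin n) ℝ) :
    ∃ D : ℕ, ∀ w v, (cline h w v).natDegree ≤ D := by
  unfold cline
  induction h using MvPolynomial.induction_on with
  | C a => exact ⟨0, fun w v => by simp [Polynomial.algebraMap_apply]⟩
  | add p q hp hq =>
    obtain ⟨D, hD⟩ := hp
    obtain ⟨E, hE⟩ := hq
    refine ⟨max D E, fun w v => ?_⟩
    rw [map_add]
    exact (Polynomial.natDegree_add_le _ _).trans (max_le_max (hD w v) (hE w v))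
  | mul_X p i hp =>
    obtain ⟨D, hD⟩ := hp
    refine ⟨D + 1, fun w v => ?_⟩
    rw [map_mul, MvPolynomial.aeval_X]
    refine Polynomial.natDegree_mul_le.trans (add_le_add (hD w v) ?_)
    rw [add_comm]
    exact Polynomial.natDegree_linear_le

/-- Harnack-type inequality for polynomials without zeros in a disc. -/
lemma harnack (P : Polynomial ℂ) (D : ℕ) (hD : P.natDegree ≤ D) (z0 : ℂ) (r : ℝ) (hr : 0 < r)
    (hP : ∀ z, ‖z - z0‖ < r → P.eval z ≠ 0) (z : ℂ) :
    ‖P.eval z‖ ≤ ‖P.eval z0‖ * (1 + ‖z - z0‖ / r) ^ D := by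
  have hs : P.Splits := IsAlgClosed.splits P
  have h0 : P ≠ 0 := by
    rintro rfl
    exact hP z0 (by simpa using hr) (by simp)
  have key : ∀ s : Multiset ℂ, (∀ a ∈ s, r ≤ ‖z0 - a‖) →
      ‖(s.map (fun a => z - a)).prod‖ ≤
        ‖(s.map (fun a => z0 - a)).prod‖ * (1 + ‖z - z0‖ / r) ^ (Multiset.card s) := by
    intro s
    induction s using Multiset.induction_on with
    | empty => simp
    | cons a s ih =>
      intro hs
      have ih' := ih fun b hb => hs b (Multiset.mem_cons_of_mem hb)
      have ha := hs a (Multiset.mem_cons_self a s)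
      have h1 : ‖z - a‖ ≤ ‖z0 - a‖ * (1 + ‖z - z0‖ / r) := by
        have : ‖z - a‖ ≤ ‖z - z0‖ + ‖z0 - a‖ := by
          have := norm_add_le (z - z0) (z0 - a); simpa using this
        have h2 : ‖z - z0‖ ≤ ‖z0 - a‖ * (‖z - z0‖ / r) := by
          calc ‖z - z0‖ = r * (‖z - z0‖ / r) := by field_simp
            _ ≤ _ := by gcongr
        nlinarith
      simp only [Multiset.map_cons, Multiset.prod_cons, norm_mul, Multiset.card_cons, pow_succ]
      calc _ ≤ (‖z0 - a‖ * (1 + ‖z - z0‖ / r)) * (‖(s.map (fun a => z0 - a)).prod‖ *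
            (1 + ‖z - z0‖ / r) ^ (Multiset.card s)) := by gcongr
        _ = _ := by ring
  have hk := key P.roots (fun a ha => by
    by_contra hlt
    push Not at hlt
    rw [norm_sub_rev] at hlt
    exact hP a hlt ((Polynomial.mem_roots h0).1 ha))
  rw [hs.eval_eq_prod_roots, hs.eval_eq_prod_roots, norm_mul, norm_mul, mul_assoc]
  refine mul_le_mul_of_nonneg_left (hk.trans ?_) (norm_nonneg _)
  refine mul_le_mul_of_nonneg_left ?_ (norm_nonneg _)
  apply pow_le_pow_right₀
  · have : 0 ≤ ‖z - z0‖ / r := by positivity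
    linarith
  · exact (Polynomial.card_roots' P).trans hD

lemma coeff_aeval_line {n : ℕ} (p : MvPolynomial (Fin n) ℝ) (v : Fin n → ℝ) (j : ℕ) :
    (MvPolynomial.aeval (fun i => Polynomial.C (v i) * Polynomial.X) p : Polynomial ℝ).coeff j
      = MvPolynomial.eval v (MvPolynomial.homogeneousComponent j p) := by
  induction p using MvPolynomial.induction_on' with
  | monomial s c =>
    have h1 : (MvPolynomial.aeval (fun i => Polynomial.C (v i) * Polynomial.X)
        (MvPolynomial.monomial s c) : Polynomial ℝ) =
        Polynomial.C (c * s.prod fun i k => v i ^ k) * Polynomial.X ^ s.degree := by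
      rw [MvPolynomial.aeval_monomial, Finsupp.prod, Finsupp.prod, Finsupp.degree]
      simp only [mul_pow, Finset.prod_mul_distrib, Finset.prod_pow_eq_pow_sum,
        Polynomial.algebraMap_apply, map_mul, map_prod, map_pow]
      simp only [mul_assoc]
      rfl
    have hm : (MvPolynomial.monomial s c).IsHomogeneous s.degree :=
      MvPolynomial.isHomogeneous_monomial c rfl
    rw [h1, Polynomial.coeff_C_mul_X_pow, MvPolynomial.homogeneousComponent_of_mem hm]
    split_ifs with h2 h3
    · rw [MvPolynomial.eval_monomial]
    · simp
  | add p q hp hq => simp [hp, hq]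

lemma linePoly_coeff {n : ℕ} (h : MvPolynomial (Fin n) ℝ) (a v : Fin n → ℝ) (j : ℕ) :
    (linePoly h a v).coeff j = MvPolynomial.eval v (MvPolynomial.homogeneousComponent j
      (MvPolynomial.aeval (fun i => MvPolynomial.X i + MvPolynomial.C (a i)) h)) := by
  rw [← coeff_aeval_line]
  congr 1
  unfold linePoly
  induction h using MvPolynomial.induction_on with
  | C a => simp
  | add p q hp hq => simp [hp, hq]
  | mul_X p i hp => simp [hp, add_comm, Polynomial.algebraMap_apply]

lemma root_bound {n d : ℕ} {h : MvPolynomial (Fin n) ℝ} (hh : h.IsHomogeneous d)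
    (f : Fin n → ℂ) (hf : cev h f ≠ 0) (M : ℝ) :
    ∃ R : ℝ, 0 < R ∧ ∀ (w : Fin n → ℂ) (t : ℂ), ‖w‖ ≤ M → R < ‖t‖ → cev h (w + t • f) ≠ 0 := by
  have h1 : ∀ᶠ w in 𝓝 f, cev h w ≠ 0 := (cev_continuous h).continuousAt.eventually_ne hf
  obtain ⟨δ, hδ, hb⟩ := Metric.eventually_nhds_iff.1 h1
  refine ⟨(|M| + 1) / δ, by positivity, fun w t hw ht => ?_⟩
  have htp : 0 < ‖t‖ := lt_trans (by positivity) ht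
  have ht0 : t ≠ 0 := norm_pos_iff.1 htp
  have h2 : w + t • f = t • (t⁻¹ • w + f) := by
    rw [smul_add, smul_smul, mul_inv_cancel₀ ht0, one_smul]
  rw [h2, cev_smul hh]
  refine mul_ne_zero (pow_ne_zero _ ht0) (hb ?_)
  rw [dist_eq_norm, add_sub_cancel_right, norm_smul, norm_inv]
  rw [div_lt_iff₀ hδ] at ht
  rw [inv_mul_lt_iff₀ htp]
  have := le_abs_self M
  linarith

lemma step1 {n d : ℕ} {h : MvPolynomial (Fin n) ℝ} (hh : h.IsHomogeneous d)
    (e f : Fin n → ℝ)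
    (he : ∀ (x : Fin n → ℝ) (z : ℂ), z.im ≠ 0 → cev h (cvec x + z • cvec e) ≠ 0)
    (hpos : ∀ z : ℂ, cev h (cvec f - z • cvec e) = 0 → z.im = 0 ∧ 0 < z.re)
    (x : Fin n → ℝ) (α : ℝ) (hα : 0 < α) (t0 : ℂ) (ht0 : 0 < t0.im) :
    cev h ((cvec x + (α * Complex.I) • cvec e) + t0 • cvec f) ≠ 0 := by
  intro hzero
  have hf0 : cev h (cvec f) ≠ 0 := fun h0 => by
    have := hpos 0 (by simpa using h0)
    simp at this
  obtain ⟨R, hR, hbd⟩ := root_bound hh (cvec f) hf0 (‖cvec x‖ + ‖(α * Complex.I) • cvec e‖)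
  set Q : ℝ → ℂ → ℂ := fun s t =>
    cev h (((s : ℂ) • cvec x + (α * Complex.I) • cvec e) + t • cvec f) with hQ
  have hQc : Continuous fun p : ℝ × ℂ => Q p.1 p.2 := by
    refine (cev_continuous h).comp ?_
    fun_prop
  have hQR : ∀ s ∈ Set.Icc (0:ℝ) 1, ∀ t, Q s t = 0 → ‖t‖ ≤ R := by
    intro s hs t hq
    by_contra hlt
    push Not at hlt
    refine hbd _ t ?_ hlt hq
    refine (norm_add_le _ _).trans (add_le_add ?_ le_rfl)
    rw [norm_smul, Complex.norm_real, Real.norm_eq_abs, abs_of_nonneg hs.1]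
    exact mul_le_of_le_one_left (norm_nonneg _) hs.2
  have hreal : ∀ (s : ℝ) (t : ℂ), t.im = 0 → Q s t ≠ 0 := by
    intro s t ht
    have h1 : ((s : ℂ) • cvec x + (α * Complex.I) • cvec e) + t • cvec f =
        cvec (s • x + t.re • f) + (α * Complex.I) • cvec e := by
      have : t = (t.re : ℂ) := Complex.ext (by simp) (by simp [ht])
      rw [cvec_add, cvec_smul, cvec_smul, ← this]
      abel
    rw [hQ]; dsimp only
    rw [h1]
    exact he _ _ (by simp [hα.ne'])
  set Z : Set (ℝ × ℂ) := (Set.Icc (0:ℝ) 1 ×ˢ Metric.closedBall (0:ℂ) R) ∩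
    {p | 0 ≤ p.2.im ∧ Q p.1 p.2 = 0} with hZ
  have hZc : IsCompact Z := by
    refine (isCompact_Icc.prod (isCompact_closedBall _ _)).inter_right ?_
    refine IsClosed.inter ?_ ?_
    · exact isClosed_le continuous_const (Complex.continuous_im.comp continuous_snd)
    · exact isClosed_eq hQc continuous_const
  have hmem : ∀ s ∈ Set.Icc (0:ℝ) 1, ∀ t : ℂ, 0 ≤ t.im → Q s t = 0 → (s, t) ∈ Z := by
    intro s hs t ht hq
    exact ⟨⟨hs, by simpa using hQR s hs t hq⟩, ht, hq⟩
  have hZn : Z.Nonempty := ⟨(1, t0), hmem 1 (by simp) t0 ht0.le (by simpa [hQ] using hzero)⟩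
  obtain ⟨⟨s, t⟩, hst, hmin⟩ := hZc.exists_isMinOn hZn continuous_fst.continuousOn
  obtain ⟨⟨hs, -⟩, htim, hq⟩ := hst
  dsimp only at hs htim hq
  have htpos : 0 < t.im := lt_of_le_of_ne htim fun h0 => hreal s t h0.symm hq
  have hspos : 0 < s := by
    refine lt_of_le_of_ne hs.1 fun h0 => ?_
    subst h0
    have htne : t ≠ 0 := by rintro rfl; simp at htpos
    have h1 : (((0:ℝ) : ℂ) • cvec x + (α * Complex.I) • cvec e) + t • cvec f =
        t • (cvec f - (-(α * Complex.I) / t) • cvec e) := by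
      rw [smul_sub, smul_smul, mul_div_cancel₀ _ htne]
      simp [add_comm]
    rw [hQ] at hq; dsimp only at hq
    rw [h1, cev_smul hh] at hq
    obtain ⟨hz1, hz2⟩ := hpos _ ((mul_eq_zero.1 hq).resolve_left (pow_ne_zero _ htne))
    set z := (-(α * Complex.I) / t) with hz
    have h2 : z * t = -(α * Complex.I) := by rw [hz]; field_simp
    have h3 := congrArg Complex.im h2
    simp [Complex.mul_im, hz1] at h3
    nlinarith [mul_pos hz2 htpos]
  have hno : ∀ s' ∈ Set.Ico 0 s, ∀ t' : ℂ, 0 ≤ t'.im → Q s' t' ≠ 0 := by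
    intro s' hs' t' ht' hq'
    have := hmin (hmem s' ⟨hs'.1, hs'.2.le.trans hs.2⟩ t' ht' hq')
    exact absurd hs'.2 (not_lt.2 this)
  obtain ⟨D, hD⟩ := cline_natDegree h
  have hineq : ∀ s' ∈ Set.Ico 0 s, ‖Q s' 0‖ ≤ ‖Q s' t‖ * (1 + ‖0 - t‖ / t.im) ^ D := by
    intro s' hs'
    have := harnack (cline h ((s' : ℂ) • cvec x + (α * Complex.I) • cvec e) (cvec f)) D
      (hD _ _) t t.im htpos (fun z hz => by
        rw [cline_eval]
        refine hno s' hs' z ?_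
        have h1 := Complex.abs_im_le_norm (z - t)
        have h2 := neg_abs_le (z - t).im
        rw [Complex.sub_im] at h1 h2
        linarith) 0
    rw [cline_eval, cline_eval] at this
    exact this
  have hlim : ‖Q s 0‖ ≤ ‖Q s t‖ * (1 + ‖0 - t‖ / t.im) ^ D := by
    have hc : ∀ t, Continuous fun s' => Q s' t := fun t => by
      refine (cev_continuous h).comp ?_
      fun_prop
    have t1 : Tendsto (fun s' => ‖Q s' 0‖) (𝓝[<] s) (𝓝 ‖Q s 0‖) :=
      (hc 0).norm.continuousAt.continuousWithinAt
    have t2 : Tendsto (fun s' => ‖Q s' t‖ * (1 + ‖0 - t‖ / t.im) ^ D) (𝓝[<] s)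
        (𝓝 (‖Q s t‖ * (1 + ‖0 - t‖ / t.im) ^ D)) :=
      ((hc t).norm.mul continuous_const).continuousAt.continuousWithinAt
    refine le_of_tendsto_of_tendsto t1 t2 ?_
    filter_upwards [Ico_mem_nhdsLT hspos] with s' hs'
    exact hineq s' hs'
  rw [hq, norm_zero, zero_mul] at hlim
  exact hreal s 0 (by simp) (norm_le_zero_iff.1 hlim)

lemma step2 {n d : ℕ} {h : MvPolynomial (Fin n) ℝ} (hh : h.IsHomogeneous d)
    (e f : Fin n → ℝ)
    (he : ∀ (x : Fin n → ℝ) (z : ℂ), z.im ≠ 0 → cev h (cvec x + z • cvec e) ≠ 0)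
    (hpos : ∀ z : ℂ, cev h (cvec f - z • cvec e) = 0 → z.im = 0 ∧ 0 < z.re)
    (x : Fin n → ℝ) (t : ℂ) (ht : 0 < t.im) :
    cev h (cvec x + t • cvec f) ≠ 0 := by
  intro hzero
  have hf0 : cev h (cvec f) ≠ 0 := fun h0 => by
    have := hpos 0 (by simpa using h0)
    simp at this
  obtain ⟨R, hR, hbd⟩ := root_bound hh (cvec f) hf0 ‖cvec x‖
  obtain ⟨D, hD⟩ := cline_natDegree h
  set T : ℂ := ((R + 1 : ℝ) : ℂ) with hT
  have hTn : R < ‖T‖ := by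
    rw [hT, Complex.norm_real, Real.norm_eq_abs, abs_of_pos (by linarith)]; linarith
  set Q : ℝ → ℂ → ℂ := fun α t =>
    cev h ((cvec x + (α * Complex.I) • cvec e) + t • cvec f) with hQ
  have hineq : ∀ α : ℝ, 0 < α → ‖Q α T‖ ≤ ‖Q α t‖ * (1 + ‖T - t‖ / t.im) ^ D := by
    intro α hα
    have := harnack (cline h (cvec x + (α * Complex.I) • cvec e) (cvec f)) D
      (hD _ _) t t.im ht (fun z hz => by
        rw [cline_eval]
        refine step1 hh e f he hpos x α hα z ?_
        have h1 := Complex.abs_im_le_norm (z - t)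
        have h2 := neg_abs_le (z - t).im
        rw [Complex.sub_im] at h1 h2
        linarith) T
    rw [cline_eval, cline_eval] at this
    exact this
  have hlim : ‖Q 0 T‖ ≤ ‖Q 0 t‖ * (1 + ‖T - t‖ / t.im) ^ D := by
    have hc : ∀ t, Continuous fun s' => Q s' t := fun t => by
      refine (cev_continuous h).comp ?_
      fun_prop
    refine le_of_tendsto_of_tendsto
      (((hc T).norm.tendsto 0).mono_left (nhdsWithin_le_nhds (s := Set.Ioi 0)))
      ((((hc t).norm.mul continuous_const).tendsto 0).mono_left
        (nhdsWithin_le_nhds (s := Set.Ioi 0))) ?_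
    filter_upwards [self_mem_nhdsWithin] with s' hs'
    exact hineq s' hs'
  have e1 : ∀ t, Q 0 t = cev h (cvec x + t • cvec f) := fun t => by simp [hQ]
  rw [e1, e1, hzero, norm_zero, zero_mul] at hlim
  exact hbd _ T le_rfl hTn (norm_le_zero_iff.1 hlim)

lemma step3 {n d : ℕ} {h : MvPolynomial (Fin n) ℝ} {e : Fin n → ℝ} (hh : h.IsHomogeneous d)
    (hhyp : IsHyperbolic h e) {f : Fin n → ℝ} (hf : f ∈ interior (hypCone h e))
    (x : Fin n → ℝ) (t : ℂ) (ht : t.im ≠ 0) :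
    cev h (cvec x + t • cvec f) ≠ 0 := by
  have he : ∀ (x : Fin n → ℝ) (z : ℂ), z.im ≠ 0 → cev h (cvec x + z • cvec e) ≠ 0 := by
    intro x z hz h0
    have := hhyp.2 x (-z) (by rw [linePoly_aeval, cvec_neg]; simpa using h0)
    simp at this
    exact hz this
  have hpos : ∀ z : ℂ, cev h (cvec f - z • cvec e) = 0 → z.im = 0 ∧ 0 < z.re := by
    have hc : ∀ᶠ δ : ℝ in 𝓝 0, f - δ • e ∈ hypCone h e := by
      have hcont : Continuous fun δ : ℝ => f - δ • e := by fun_prop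
      refine hcont.continuousAt.eventually_mem (?_ : hypCone h e ∈ 𝓝 (f - (0:ℝ) • e))
      simpa using mem_interior_iff_mem_nhds.1 hf
    obtain ⟨δ, hδ, hδpos⟩ := ((hc.filter_mono nhdsWithin_le_nhds).and
      (self_mem_nhdsWithin : Set.Ioi (0:ℝ) ∈ 𝓝[>] 0)).exists
    intro z hz
    have := hδ (z - δ) (by
      rw [linePoly_aeval, cvec_neg, sub_eq_add_neg, ← neg_smul, cvec_add, cvec_smul, ← hz]
      congr 1
      push_cast
      module)
    simp at this
    have h3 : (0:ℝ) < δ := hδpos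
    exact ⟨this.1, by linarith⟩
  rcases lt_or_gt_of_ne ht with h1 | h1
  · have h2 := step2 hh e f he hpos (-x) (-t) (by simpa using h1)
    intro h0
    apply h2
    have : cvec (-x) + (-t) • cvec f = (-1 : ℂ) • (cvec x + t • cvec f) := by
      rw [cvec_neg]; module
    rw [this, cev_smul hh, h0, mul_zero]
  · exact step2 hh e f he hpos x t h1

lemma dominate {n d : ℕ} {h : MvPolynomial (Fin n) ℝ} {e : Fin n → ℝ} (hh : h.IsHomogeneous d)
    (hhyp : IsHyperbolic h e) {f : Fin n → ℝ} (hf : f ∈ interior (hypCone h e))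
    (a g : Fin n → ℝ) :
    ∃ K : ℝ, ∀ l : ℝ, 0 < l → ‖cev h (cvec a + (l * Complex.I) • cvec g)‖ ≤
      ‖cev h (cvec a + (l * Complex.I) • cvec (-f))‖ * K := by
  obtain ⟨D, hD⟩ := cline_natDegree h
  have hc : ∀ᶠ σ : ℝ in 𝓝 0, f - σ • (g + f) ∈ interior (hypCone h e) := by
    have hcont : Continuous fun σ : ℝ => f - σ • (g + f) := by fun_prop
    refine hcont.continuousAt.eventually_mem
      (?_ : interior (hypCone h e) ∈ 𝓝 (f - (0:ℝ) • (g + f)))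
    simpa using isOpen_interior.mem_nhds hf
  obtain ⟨ε, hε, hball⟩ := Metric.eventually_nhds_iff.1 hc
  refine ⟨(1 + ‖(1:ℂ) - 0‖ / ε) ^ D, fun l hl => ?_⟩
  have := harnack (cline h (cvec a + (l * Complex.I) • cvec (-f))
    ((l * Complex.I) • cvec (g + f))) D (hD _ _) 0 ε hε (fun z hz => by
      rw [cline_eval]
      have hz' : |z.re| < ε := (Complex.abs_re_le_norm z).trans_lt (by simpa using hz)
      have h1 : f - z.re • (g + f) ∈ interior (hypCone h e) :=
        hball (by simpa [dist_eq_norm] using hz')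
      have h2 := step3 hh hhyp h1 (a - (l * z.im) • (g + f)) (-(l * Complex.I))
        (by simp [hl.ne'])
      convert h2 using 2
      ext i
      simp only [cvec, Pi.add_apply, Pi.smul_apply, Pi.sub_apply, Pi.neg_apply, smul_eq_mul]
      push_cast
      have hzz := Complex.re_add_im z
      generalize (z.re : ℂ) = p at *
      generalize (z.im : ℂ) = q at *
      subst hzz
      linear_combination (l * q * (g i + f i) : ℂ) * Complex.I_sq) 1
  rw [cline_eval, cline_eval] at this
  have e1 : cvec a + (l * Complex.I) • cvec (-f) + (1:ℂ) • (l * Complex.I) • cvec (g + f) =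
      cvec a + (l * Complex.I) • cvec g := by
    rw [cvec_add, cvec_neg]
    module
  rw [e1, zero_smul, add_zero] at this
  exact this

lemma dvd_of_dominate (p q : Polynomial ℝ) (K : ℝ) (k : ℕ)
    (hK : ∀ l : ℝ, 0 < l → ‖Polynomial.aeval (l * Complex.I) p‖ ≤
      ‖Polynomial.aeval (l * Complex.I) q‖ * K)
    (hq : Polynomial.X ^ k ∣ q) : Polynomial.X ^ k ∣ p := by
  by_cases hp0 : p = 0
  · simp [hp0]
  obtain ⟨p1, hp, hp1⟩ := Polynomial.exists_eq_pow_rootMultiplicity_mul_and_not_dvd p hp0 0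
  set j := p.rootMultiplicity 0
  simp only [map_zero, sub_zero] at hp hp1
  by_cases hjk : k ≤ j
  · rw [hp]; exact (pow_dvd_pow _ hjk).mul_right _
  exfalso
  push Not at hjk
  obtain ⟨q1, rfl⟩ := hq
  obtain ⟨m, rfl⟩ := Nat.exists_eq_add_of_lt hjk
  have hc : ∀ r : Polynomial ℝ, Continuous fun l : ℝ => Polynomial.aeval ((l : ℂ) * Complex.I) r :=
    fun r => (Polynomial.continuous_aeval r).comp (by fun_prop)
  have hineq : ∀ l : ℝ, 0 < l → ‖Polynomial.aeval (l * Complex.I) p1‖ ≤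
      l ^ (m + 1) * ‖Polynomial.aeval (l * Complex.I) q1‖ * K := by
    intro l hl
    have := hK l hl
    rw [hp] at this
    simp only [map_mul, map_pow, Polynomial.aeval_X, norm_mul, norm_pow, Complex.norm_real,
      Complex.norm_I, mul_one, Real.norm_eq_abs, abs_of_pos hl] at this
    have hlj : 0 < l ^ j := pow_pos hl j
    refine le_of_mul_le_mul_left (this.trans (le_of_eq ?_)) hlj
    ring
  have hlim : ‖Polynomial.aeval (((0:ℝ) : ℂ) * Complex.I) p1‖ ≤
      (0:ℝ) ^ (m + 1) * ‖Polynomial.aeval (((0:ℝ) : ℂ) * Complex.I) q1‖ * K := by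
    have hc2 : Continuous fun l : ℝ =>
        l ^ (m + 1) * ‖Polynomial.aeval ((l : ℂ) * Complex.I) q1‖ * K :=
      ((continuous_id.pow _).mul (hc q1).norm).mul continuous_const
    refine le_of_tendsto_of_tendsto
      (((hc p1).norm.tendsto 0).mono_left (nhdsWithin_le_nhds (s := Set.Ioi 0)))
      ((hc2.tendsto 0).mono_left (nhdsWithin_le_nhds (s := Set.Ioi 0))) ?_
    filter_upwards [self_mem_nhdsWithin] with s' hs'
    exact hineq s' hs'
  simp only [Complex.ofReal_zero, zero_mul, ne_eq, Nat.add_eq_zero_iff, one_ne_zero, and_false,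
    not_false_eq_true, zero_pow, norm_le_zero_iff] at hlim
  apply hp1
  rw [Polynomial.X_dvd_iff]
  rw [← Polynomial.coeff_zero_eq_aeval_zero'] at hlim
  simpa using hlim

end HypAux

/-- For a homogeneous polynomial `h` hyperbolic with respect to `e` and
any `a`, the order of vanishing of `t ↦ h(a − t·f)` at `t = 0` equals the multiplicity of
`h` at `a`, for every `f` in the interior of the hyperbolicity cone. -/
theorem order_of_vanishing_eq_multiplicity
    {n d : ℕ} (h : MvPolynomial (Fin n) ℝ) (e : Fin n → ℝ)
    (hhom : h.IsHomogeneous d) (hhyp : IsHyperbolic h e)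
    (a : Fin n → ℝ) (f : Fin n → ℝ) (hf : f ∈ interior (hypCone h e)) :
    Polynomial.rootMultiplicity 0 (linePoly h a (-f)) = multAt h a := by
  have hq0 : linePoly h a (-f) ≠ 0 := by
    intro h0
    have h1 := linePoly_aeval h a (-f) Complex.I
    rw [h0, map_zero, cvec_neg, smul_neg, ← neg_smul] at h1
    exact step3 hhom hhyp hf a (-Complex.I) (by simp) h1.symm
  set q := linePoly h a (-f) with hq
  set k := q.rootMultiplicity 0 with hk
  have hdvd : Polynomial.X ^ k ∣ q := by
    have := Polynomial.pow_rootMultiplicity_dvd q 0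
    simpa using this
  have hlow : ∀ j < k, MvPolynomial.homogeneousComponent j
      (MvPolynomial.aeval (fun i => MvPolynomial.X i + MvPolynomial.C (a i)) h) = 0 := by
    intro j hj
    refine MvPolynomial.funext fun g => ?_
    rw [map_zero, ← linePoly_coeff h a g]
    obtain ⟨K, hK⟩ := dominate hhom hhyp hf a g
    have := dvd_of_dominate (linePoly h a g) q K k (fun l hl => by
      rw [linePoly_aeval, hq, linePoly_aeval]; exact hK l hl) hdvd
    exact Polynomial.X_pow_dvd_iff.1 this j hj
  have hkne : q.coeff k ≠ 0 := by
    intro h0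
    have h1 : Polynomial.X ^ (k + 1) ∣ q := by
      rw [Polynomial.X_pow_dvd_iff]
      intro j hj
      rcases Nat.lt_succ_iff_lt_or_eq.1 hj with h2 | h2
      · exact Polynomial.X_pow_dvd_iff.1 hdvd j h2
      · rw [h2, h0]
    have h2 := (Polynomial.le_rootMultiplicity_iff hq0 (a := 0) (n := k + 1)).2 (by simpa using h1)
    omega
  unfold multAt
  refine le_antisymm (le_csInf ⟨k, ?_⟩ ?_) (Nat.sInf_le ?_)
  · intro h0
    apply hkne
    rw [hq, linePoly_coeff, h0, map_zero]
  · intro j hj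
    by_contra hlt
    exact hj (hlow j (not_le.1 hlt))
  · intro h0
    apply hkne
    rw [hq, linePoly_coeff, h0, map_zero]
end

section
/- Let p ∈ ℝ[x₁,…,xₙ] be a real-zero polynomial with respect to e ∈ ℝⁿ and let a ∈ ℝⁿ. For every f in the interior of the rigidly convex set S_e(p), the multiplicity of p at a equals the order of vanishing of the univariate polynomial p_{a−f,f}(t) := p(f + t(a − f)) at t = 1. -/
open MvPolynomial

open Filter Topology

lemma aux_lineBound {σ : Type*} (h : MvPolynomial σ ℝ) :
    ∃ N : ℕ, ∀ A B : σ → ℂ, ∃ P : Polynomial ℂ, P.natDegree ≤ N ∧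
      ∀ z : ℂ, P.eval z = aeval (A + z • B) h := by
  induction h using MvPolynomial.induction_on with
  | C a => exact ⟨0, fun A B => ⟨Polynomial.C (a : ℂ), by simp, fun z => by simp⟩⟩
  | add p q hp hq =>
    obtain ⟨N, hN⟩ := hp
    obtain ⟨M, hM⟩ := hq
    refine ⟨max N M, fun A B => ?_⟩
    obtain ⟨P, hP, hP'⟩ := hN A B
    obtain ⟨Q, hQ, hQ'⟩ := hM A B
    exact ⟨P + Q, Polynomial.natDegree_add_le_of_le hP hQ, fun z => by
      simp [hP', hQ']⟩
  | mul_X p i hp =>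
    obtain ⟨N, hN⟩ := hp
    refine ⟨N + 1, fun A B => ?_⟩
    obtain ⟨P, hP, hP'⟩ := hN A B
    refine ⟨P * (Polynomial.C (B i) * Polynomial.X + Polynomial.C (A i)),
      Polynomial.natDegree_mul_le_of_le hP Polynomial.natDegree_linear_le, fun z => ?_⟩
    simp [hP']
    left; ring

lemma aux_polyBound (P : Polynomial ℂ) (N : ℕ) (hN : P.natDegree ≤ N) (c : ℂ) (r : ℝ)
    (hr : 0 < r) (hroot : ∀ z ∈ Metric.ball c r, P.eval z ≠ 0) (z : ℂ) :
    ‖P.eval z‖ ≤ ‖P.eval c‖ * (1 + ‖z - c‖ / r) ^ N := by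
  have hs := IsAlgClosed.splits P
  have h1 : 1 ≤ 1 + ‖z - c‖ / r := by
    have : 0 ≤ ‖z - c‖ / r := by positivity
    linarith
  have key : ∀ s : Multiset ℂ, (∀ w ∈ s, r ≤ ‖c - w‖) →
      ‖(s.map (fun w => z - w)).prod‖ ≤
        ‖(s.map (fun w => c - w)).prod‖ * (1 + ‖z - c‖ / r) ^ (Multiset.card s) := by
    intro s
    induction s using Multiset.induction_on with
    | empty => simp
    | cons w s ih =>
      intro hw
      have ih' := ih (fun x hx => hw x (Multiset.mem_cons_of_mem hx))
      have hw' := hw w (Multiset.mem_cons_self w s)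
      have : ‖z - w‖ ≤ ‖c - w‖ * (1 + ‖z - c‖ / r) := by
        have e1 : z - w = (z - c) + (c - w) := by ring
        have e2 := norm_add_le (z - c) (c - w)
        rw [← e1] at e2
        have : ‖z - c‖ ≤ ‖c - w‖ * (‖z - c‖ / r) := by
          rw [mul_div_assoc', le_div_iff₀ hr, mul_comm]
          gcongr
        linarith
      simp only [Multiset.map_cons, Multiset.prod_cons, norm_mul, Multiset.card_cons, pow_succ]
      calc _ ≤ (‖c - w‖ * (1 + ‖z - c‖ / r)) * (‖(s.map (fun w => c - w)).prod‖ * (1 + ‖z - c‖ / r) ^ (Multiset.card s)) := by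
            gcongr
        _ = _ := by ring
  by_cases hP : P = 0
  · simp [hP]
  rw [hs.eval_eq_prod_roots z, hs.eval_eq_prod_roots c, norm_mul, norm_mul, mul_assoc]
  gcongr
  refine (key P.roots ?_).trans ?_
  · intro w hw
    by_contra hlt
    push Not at hlt
    refine hroot w ?_ ((Polynomial.mem_roots hP).1 hw)
    rw [Metric.mem_ball, dist_comm, dist_eq_norm]; exact hlt
  · gcongr
    exact (Polynomial.card_roots' P).trans hN

lemma aux_cont {σ : Type*} (h : MvPolynomial σ ℝ) :
    Continuous (fun x : σ → ℂ => aeval x h) := by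
  have : (fun x : σ → ℂ => aeval x h) =
      fun x => eval x (MvPolynomial.map (algebraMap ℝ ℂ) h) := by
    funext x; rw [eval_map, aeval_def]
  rw [this]; exact MvPolynomial.continuous_eval _

lemma aux_hurwitz {σ ι : Type*} (h : MvPolynomial σ ℝ) (l : Filter ι) (A : ι → σ → ℂ)
    (A0 D : σ → ℂ) (hA : Tendsto A l (𝓝 A0)) (c : ℂ) (r : ℝ) (hr : 0 < r)
    (hfreq : ∃ᶠ i in l, ∀ z ∈ Metric.ball c r, aeval (A i + z • D) h ≠ 0)
    (h0 : aeval (A0 + c • D) h = 0) (z : ℂ) : aeval (A0 + z • D) h = 0 := by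
  obtain ⟨N, hN⟩ := aux_lineBound h
  have hT : ∀ z : ℂ, Tendsto (fun i => ‖aeval (A i + z • D) h‖) l (𝓝 ‖aeval (A0 + z • D) h‖) := by
    intro z
    have := ((aux_cont h).tendsto (A0 + z • D)).comp (hA.add_const (z • D))
    exact this.norm
  have hle : ‖aeval (A0 + z • D) h‖ ≤ ‖aeval (A0 + c • D) h‖ * (1 + ‖z - c‖ / r) ^ N := by
    refine le_of_tendsto_of_tendsto_of_frequently (hT z) ((hT c).mul_const _) ?_
    refine hfreq.mono fun i hi => ?_
    obtain ⟨P, hP, hP'⟩ := hN (A i) D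
    have := aux_polyBound P N hP c r hr (fun z hz => by rw [hP']; exact hi z hz) z
    rwa [hP', hP'] at this
  rw [h0] at hle
  simpa using hle

lemma aux_homog {n : ℕ} (p : MvPolynomial (Fin n) ℝ) :
    ∃ (d : ℕ) (h : MvPolynomial (Option (Fin n)) ℝ), ∀ x : Option (Fin n) → ℂ, x none ≠ 0 →
      aeval x h = x none ^ d * aeval (fun i => x (some i) / x none) p := by
  induction p using MvPolynomial.induction_on with
  | C a => exact ⟨0, C a, fun x hx => by simp⟩
  | add p q hp hq =>
    obtain ⟨d, h, hh⟩ := hp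
    obtain ⟨d', h', hh'⟩ := hq
    refine ⟨d + d', X none ^ d' * h + X none ^ d * h', fun x hx => ?_⟩
    simp [hh x hx, hh' x hx]; ring
  | mul_X p i hp =>
    obtain ⟨d, h, hh⟩ := hp
    refine ⟨d + 1, h * X (some i), fun x hx => ?_⟩
    simp [hh x hx]; field_simp; ring

lemma aux_linePoly_aeval {n : ℕ} (p : MvPolynomial (Fin n) ℝ) (a v : Fin n → ℝ)
    (z : ℂ) : Polynomial.aeval z (linePoly p a v) = aeval (fun i => (a i : ℂ) + z * v i) p := by
  unfold linePoly
  rw [← AlgHom.comp_apply]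
  congr 1
  ext i
  simp
  ring

lemma aux_coeff {n : ℕ} {S : Type*} [CommRing S] [Algebra ℝ S] (q : MvPolynomial (Fin n) ℝ)
    (y : Fin n → S) (k : ℕ) :
    (aeval (fun i => Polynomial.C (y i) * Polynomial.X) q : Polynomial S).coeff k =
      aeval y (homogeneousComponent k q) := by
  induction q using MvPolynomial.induction_on' with
  | monomial u c =>
    rw [homogeneousComponent_of_mem (isHomogeneous_monomial c rfl), aeval_monomial]
    have : (u.prod fun i e => (Polynomial.C (y i) * Polynomial.X : Polynomial S) ^ e) =
        Polynomial.C (u.prod fun i e => y i ^ e) * Polynomial.X ^ u.degree := by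
      simp only [Finsupp.prod, mul_pow, Finset.prod_mul_distrib, Finset.prod_pow_eq_pow_sum,
        Finsupp.degree, map_prod, map_pow]
      rfl
    rw [this, Polynomial.algebraMap_apply, ← mul_assoc, ← Polynomial.C_mul,
      Polynomial.coeff_C_mul_X_pow]
    split_ifs with h1 <;> simp [aeval_monomial]
  | add p q hp hq => simp [hp, hq]

/-- base point in the homogenised family -/
noncomputable def auxA {n : ℕ} (e v : Fin n → ℝ) (α s : ℝ) : Option (Fin n) → ℂ :=
  fun o => o.elim (Complex.I * α) (fun i => (s : ℂ) * v i + Complex.I * α * e i)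

/-- direction in the homogenised family -/
noncomputable def auxD {n : ℕ} (g : Fin n → ℝ) : Option (Fin n) → ℂ :=
  fun o => o.elim 1 (fun i => (g i : ℂ))

lemma auxA_cont {n : ℕ} (e v : Fin n → ℝ) : Continuous (fun x : ℝ × ℝ => auxA e v x.1 x.2) := by
  refine continuous_pi fun o => ?_
  cases o <;> simp only [auxA, Option.elim] <;> fun_prop

lemma aux_garding {n : ℕ} (p : MvPolynomial (Fin n) ℝ) (e g : Fin n → ℝ)
    (hrz : ∀ (v : Fin n → ℝ) (ζ : ℂ), ζ.im ≠ 0 → aeval (fun i => (e i : ℂ) + ζ * v i) p ≠ 0)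
    (hseg : ∀ τ : ℝ, 0 ≤ τ → τ ≤ 1 →
      aeval (fun i => (e i : ℂ) + τ * ((g i : ℂ) - e i)) p ≠ 0)
    (v : Fin n → ℝ) (ζ : ℂ) (hζ : ζ.im < 0) :
    aeval (fun i => (g i : ℂ) + ζ * v i) p ≠ 0 := by
  obtain ⟨d, h, hh⟩ := aux_homog p
  have hg : aeval (fun i => (g i : ℂ)) p ≠ 0 := by
    have := hseg 1 zero_le_one le_rfl
    simpa using this
  -- the basic formula
  have form : ∀ (α s : ℝ) (t : ℂ), t + Complex.I * α ≠ 0 →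
      aeval (auxA e v α s + t • auxD g) h = (t + Complex.I * α) ^ d *
        aeval (fun i => (e i : ℂ) + (t * ((g i : ℂ) - e i) + s * v i) / (t + Complex.I * α)) p := by
    intro α s t ht
    have e1 : (auxA e v α s + t • auxD g) none = t + Complex.I * α := by
      simp [auxA, auxD]; ring
    rw [hh _ (by rw [e1]; exact ht), e1]
    congr 3
    funext i
    simp only [auxA, auxD, Pi.add_apply, Pi.smul_apply, Option.elim, smul_eq_mul]
    field_simp
    ring
  have den : ∀ (α : ℝ) (t : ℂ), 0 < α → 0 ≤ t.im → t + Complex.I * α ≠ 0 := by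
    intro α t hα ht h0
    have := congrArg Complex.im h0
    simp at this
    linarith
  -- real t
  have hreal : ∀ (α s t : ℝ), 0 < α → aeval (auxA e v α s + (t : ℂ) • auxD g) h ≠ 0 := by
    intro α s t hα
    have hd := den α t hα (by simp)
    rw [form α s t hd]
    refine mul_ne_zero (pow_ne_zero _ hd) ?_
    have := hrz (fun i => t * (g i - e i) + s * v i) ((t + Complex.I * α)⁻¹) (by
      rw [Complex.inv_im]
      have : Complex.normSq (t + Complex.I * α) ≠ 0 := by simpa using hd
      simp [this, hα.ne'])
    convert this using 4
    push_cast
    rw [div_eq_inv_mul]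
  -- s = 0
  have hzero : ∀ (α : ℝ) (t : ℂ), 0 < α → 0 < t.im → aeval (auxA e v α 0 + t • auxD g) h ≠ 0 := by
    intro α t hα ht
    have hd := den α t hα ht.le
    rw [form α 0 t hd]
    refine mul_ne_zero (pow_ne_zero _ hd) ?_
    have e2 : (fun i => (e i : ℂ) + (t * ((g i : ℂ) - e i) + (0 : ℝ) * v i) / (t + Complex.I * α))
        = fun i => (e i : ℂ) + (t / (t + Complex.I * α)) * ((g i : ℂ) - e i) := by
      funext i
      simp
      ring
    rw [e2]
    by_cases him : (t / (t + Complex.I * α)).im = 0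
    · set τ := (t / (t + Complex.I * α)).re with hτ
      have e3 : t / (t + Complex.I * α) = (τ : ℂ) := by
        apply Complex.ext <;> simp [hτ, him]
      have e4 : t = τ * (t + Complex.I * α) := by
        rw [← e3]; field_simp
      have e5 := congrArg Complex.im e4
      simp at e5
      rw [e3]
      apply hseg
      · by_contra hneg
        push Not at hneg
        nlinarith
      · by_contra hneg
        push Not at hneg
        nlinarith
    · have := hrz (fun i => g i - e i) _ him
      simpa using this
  have hcontA : ∀ α : ℝ, Continuous (fun s : ℝ => auxA e v α s) := fun α =>
    (auxA_cont e v).comp (by fun_prop : Continuous fun s : ℝ => (α, s))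
  -- connectedness
  have hall : ∀ (α : ℝ), 0 < α → ∀ (s : ℝ) (t : ℂ), 0 < t.im →
      aeval (auxA e v α s + t • auxD g) h ≠ 0 := by
    intro α hα
    let B : Set ℝ := {s | ∃ t : ℂ, 0 < t.im ∧ aeval (auxA e v α s + t • auxD g) h = 0}
    have hopen : IsOpen B := by
      rw [isOpen_iff_mem_nhds]
      rintro s0 ⟨t0, ht0, hz⟩
      by_contra hnot
      have hfr : ∃ᶠ s in 𝓝 s0, s ∉ B := fun hc => hnot (hc.mono fun s hs => not_not.1 hs)
      have := aux_hurwitz h (𝓝 s0) (fun s => auxA e v α s) (auxA e v α s0) (auxD g)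
        ((hcontA α).tendsto s0) t0 t0.im ht0 (hfr.mono fun s hs z hzb h0 => hs ⟨z, ?_, h0⟩) hz (0 : ℝ)
      · exact hreal α s0 0 hα this
      · rw [Metric.mem_ball, dist_eq_norm] at hzb
        have := (Complex.abs_im_le_norm (z - t0)).trans_lt hzb
        rw [Complex.sub_im] at this
        have := (abs_lt.1 this).1
        linarith
    have hclosed : IsClosed B := by
      rw [← isOpen_compl_iff, isOpen_iff_mem_nhds]
      intro s0 hs0
      -- behaviour at infinity
      have hΦ : Continuous (fun x : ℝ × ℂ => aeval (x.2 • auxA e v α x.1 + auxD g) h) := by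
        refine (aux_cont h).comp ?_
        have := (hcontA α).comp (continuous_fst : Continuous fun x : ℝ × ℂ => x.1)
        exact (continuous_snd.smul this).add continuous_const
      have hΦ0 : aeval ((0 : ℂ) • auxA e v α s0 + auxD g) h ≠ 0 := by
        rw [zero_smul, zero_add, hh _ (by simp [auxD])]
        simpa [auxD] using hg
      have ev1 : ∀ᶠ x : ℝ × ℂ in 𝓝 (s0, 0), aeval (x.2 • auxA e v α x.1 + auxD g) h ≠ 0 :=
        hΦ.continuousAt.eventually_ne hΦ0
      rw [nhds_prod_eq, eventually_prod_iff] at ev1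
      obtain ⟨pa, hpa, pb, hpb, hab⟩ := ev1
      obtain ⟨δ, hδ, hδb⟩ := Metric.eventually_nhds_iff.1 hpb
      have hK : IsCompact (Metric.closedBall (0 : ℂ) (2 / δ) ∩ {t : ℂ | 0 ≤ t.im}) :=
        (isCompact_closedBall _ _).inter_right
          (isClosed_le continuous_const Complex.continuous_im)
      have ev2 := hK.eventually_forall_of_forall_eventually (x₀ := s0)
        (P := fun s t => aeval (auxA e v α s + t • auxD g) h ≠ 0) (by
          rintro t ⟨-, ht⟩
          have hne : aeval (auxA e v α s0 + t • auxD g) h ≠ 0 := by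
            rcases (show (0:ℝ) ≤ t.im from ht).eq_or_lt with h1 | h1
            · have : t = (t.re : ℂ) := by apply Complex.ext <;> simp [← h1]
              rw [this]; exact hreal α s0 t.re hα
            · exact fun h0 => hs0 ⟨t, h1, h0⟩
          have hc : Continuous (fun x : ℝ × ℂ => aeval (auxA e v α x.1 + x.2 • auxD g) h) := by
            refine (aux_cont h).comp ?_
            have := (hcontA α).comp (continuous_fst : Continuous fun x : ℝ × ℂ => x.1)
            exact this.add (continuous_snd.smul continuous_const)
          exact hc.continuousAt.eventually_ne hne)
      filter_upwards [hpa, ev2] with s hs1 hs2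
      rintro ⟨t, ht, h0⟩
      by_cases htb : ‖t‖ ≤ 2 / δ
      · exact hs2 t ⟨by simpa using htb, ht.le⟩ h0
      · push Not at htb
        have ht0 : t ≠ 0 := by rintro rfl; simp at ht
        have hsm : dist t⁻¹ 0 < δ := by
          rw [dist_zero_right, norm_inv]
          have : 0 < 2 / δ := by positivity
          rw [inv_lt_comm₀ (by positivity) hδ]
          refine lt_trans ?_ htb
          rw [inv_eq_one_div]
          gcongr
          norm_num
        refine hab hs1 (hδb hsm) ?_
        -- homogeneity
        have hd := den α t hα ht.le
        have e1 : (auxA e v α s + t • auxD g) none = t + Complex.I * α := by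
          simp [auxA, auxD]; ring
        have e2 : t⁻¹ • auxA e v α s + auxD g = t⁻¹ • (auxA e v α s + t • auxD g) := by
          rw [smul_add, smul_smul, inv_mul_cancel₀ ht0, one_smul]
        rw [hh _ (by rw [e1]; exact hd)] at h0
        have h0' := (mul_eq_zero.1 h0).resolve_left (pow_ne_zero _ (by rw [e1]; exact hd))
        show aeval (t⁻¹ • auxA e v α s + auxD g) h = 0
        rw [e2, hh _ (by
          rw [Pi.smul_apply, e1]; exact smul_ne_zero (inv_ne_zero ht0) hd)]
        refine mul_eq_zero_of_right _ ?_
        rw [← h0']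
        congr 2
        funext i
        simp only [Pi.smul_apply, smul_eq_mul]
        rw [mul_div_mul_left _ _ (inv_ne_zero ht0)]
    have h0B : (0 : ℝ) ∉ B := by
      rintro ⟨t, ht, h0⟩
      exact hzero α t hα ht h0
    rcases isClopen_iff.1 ⟨hclosed, hopen⟩ with hB | hB
    · intro s t ht h0
      have : s ∈ B := ⟨t, ht, h0⟩
      rw [hB] at this
      exact this
    · exact absurd (hB ▸ Set.mem_univ _) h0B
  -- α → 0
  have hlim : ∀ t : ℂ, 0 < t.im → aeval (auxA e v 0 1 + t • auxD g) h ≠ 0 := by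
    intro t ht h0
    have hcα : Continuous (fun α : ℝ => auxA e v α 1) :=
      (auxA_cont e v).comp (by fun_prop : Continuous fun s : ℝ => (s, (1:ℝ)))
    have hz := aux_hurwitz h (𝓝[>] (0:ℝ)) (fun α => auxA e v α 1) (auxA e v 0 1) (auxD g)
        ((hcα.tendsto 0).mono_left nhdsWithin_le_nhds) t t.im ht (by
          refine Eventually.frequently ?_
          filter_upwards [self_mem_nhdsWithin] with α hα z hzb
          refine hall α hα 1 z ?_
          rw [Metric.mem_ball, dist_eq_norm] at hzb
          have := (Complex.abs_im_le_norm (z - t)).trans_lt hzb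
          rw [Complex.sub_im] at this
          have := (abs_lt.1 this).1
          linarith) h0
    have hu : ∀ u : ℂ, u ≠ 0 → aeval (fun i => (g i : ℂ) + u * v i) p = 0 := by
      intro u hu
      have h1 := hz u⁻¹
      rw [form 0 1 u⁻¹ (by simpa using hu)] at h1
      have h2 := (mul_eq_zero.1 h1).resolve_left (pow_ne_zero _ (by simpa using hu))
      rw [← h2]
      congr 2
      funext i
      simp
      field_simp
      ring
    have hc : Continuous (fun u : ℂ => aeval (fun i => (g i : ℂ) + u * v i) p) :=
      (aux_cont p).comp (by fun_prop)
    have : (fun u : ℂ => aeval (fun i => (g i : ℂ) + u * v i) p) = fun _ => 0 :=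
      hc.ext_on (dense_compl_singleton (0 : ℂ)) continuous_const (fun u hu' => hu u hu')
    have := congrFun this 0
    simp at this
    exact hg this
  have hζ0 : ζ ≠ 0 := by rintro rfl; simp at hζ
  have hfin := hlim ζ⁻¹ (by
    rw [Complex.inv_im]
    have : 0 < Complex.normSq ζ := Complex.normSq_pos.2 hζ0
    apply div_pos _ this
    linarith)
  rw [form 0 1 ζ⁻¹ (by simpa using hζ0)] at hfin
  have := right_ne_zero_of_mul hfin
  convert this using 4
  simp
  field_simp
  ring

lemma aux_garding' {n : ℕ} (p : MvPolynomial (Fin n) ℝ) (e g : Fin n → ℝ)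
    (hrz : IsRealZero p e) (hg : g ∈ interior (rigidSet p e))
    (v : Fin n → ℝ) (ζ : ℂ) (hζ : ζ.im ≠ 0) :
    aeval (fun i => (g i : ℂ) + ζ * v i) p ≠ 0 := by
  have h1 : ∀ (v : Fin n → ℝ) (ζ : ℂ), ζ.im ≠ 0 → aeval (fun i => (e i : ℂ) + ζ * v i) p ≠ 0 := by
    intro v ζ hζ h0
    rw [← aux_linePoly_aeval] at h0
    exact hζ (hrz.2 v ζ h0)
  have h2 : ∀ τ : ℝ, 0 ≤ τ → τ ≤ 1 →
      aeval (fun i => (e i : ℂ) + τ * ((g i : ℂ) - e i)) p ≠ 0 := by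
    intro τ h0 h1 hz
    have hc : Continuous (fun δ : ℝ => g + δ • (g - e)) := by fun_prop
    have hev : ∀ᶠ δ in 𝓝[>] (0:ℝ), g + δ • (g - e) ∈ rigidSet p e := by
      have : ∀ᶠ x in 𝓝 (g + (0:ℝ) • (g - e)), x ∈ rigidSet p e := by
        rw [zero_smul, add_zero]; exact mem_interior_iff_mem_nhds.1 hg
      exact ((hc.tendsto 0).eventually this).filter_mono nhdsWithin_le_nhds
    obtain ⟨δ, hδ, hδ0⟩ := (hev.and self_mem_nhdsWithin).exists
    have hδ0 : 0 < δ := hδ0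
    refine hδ (τ / (1 + δ)) (by positivity) ?_ ?_
    · rw [div_lt_one (by positivity)]; linarith
    · rw [Polynomial.IsRoot]
      have : (algebraMap ℝ ℂ) ((linePoly p e (g + δ • (g - e) - e)).eval (τ / (1 + δ))) = 0 := by
        rw [← Polynomial.aeval_algebraMap_apply_eq_algebraMap_eval, aux_linePoly_aeval, ← hz]
        congr 2
        funext i
        have : (1 + δ : ℂ) ≠ 0 := by exact_mod_cast (by positivity : (1 + δ) ≠ 0)
        simp
        field_simp
        ring
      simpa using this
  rcases lt_or_gt_of_ne hζ with h | h
  · exact aux_garding p e g h1 h2 v ζ h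
  · have := aux_garding p e g h1 h2 (-v) (-ζ) (by simpa using h)
    simpa using this

/-- the translated polynomial `p(x + a)` -/
noncomputable def auxShift {n : ℕ} (p : MvPolynomial (Fin n) ℝ) (a : Fin n → ℝ) :
    MvPolynomial (Fin n) ℝ :=
  MvPolynomial.aeval (fun i => MvPolynomial.X i + MvPolynomial.C (a i)) p

lemma auxShift_aeval {n : ℕ} {S : Type*} [CommRing S] [Algebra ℝ S]
    (p : MvPolynomial (Fin n) ℝ) (a : Fin n → ℝ)
    (y : Fin n → S) : aeval y (auxShift p a) = aeval (fun i => y i + algebraMap ℝ S (a i)) p := by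
  unfold auxShift
  rw [← AlgHom.comp_apply]
  congr 1
  ext i
  simp

lemma aux_factor {n : ℕ} (p : MvPolynomial (Fin n) ℝ) (a : Fin n → ℝ) (m : ℕ)
    (hm : ∀ k < m, homogeneousComponent k (auxShift p a) = 0) (y : Fin n → ℂ) :
    ∃ M : Polynomial ℂ, (∀ z : ℂ, aeval (fun i => (a i : ℂ) + z * y i) p = z ^ m * M.eval z) ∧
      M.eval 0 = aeval y (homogeneousComponent m (auxShift p a)) := by
  set L : Polynomial ℂ := aeval (fun i => Polynomial.C (y i) * Polynomial.X) (auxShift p a) with hL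
  have hdvd : Polynomial.X ^ m ∣ L := by
    rw [Polynomial.X_pow_dvd_iff]
    intro k hk
    rw [hL, aux_coeff, hm k hk, map_zero]
  obtain ⟨M, hM⟩ := hdvd
  refine ⟨M, fun z => ?_, ?_⟩
  · have h1 : L.eval z = aeval (fun i => y i * z) (auxShift p a) := by
      rw [hL, ← Polynomial.coe_evalRingHom]
      change ((Polynomial.aeval z : Polynomial ℂ →ₐ[ℂ] ℂ).restrictScalars ℝ) _ = _
      rw [← AlgHom.comp_apply]
      congr 1
      ext i
      simp
    rw [auxShift_aeval] at h1
    rw [hM] at h1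
    simp only [Polynomial.eval_mul, Polynomial.eval_pow, Polynomial.eval_X] at h1
    rw [h1]
    congr 2
    funext i
    rw [Complex.coe_algebraMap]
    ring
  · rw [← aux_coeff, ← hL, hM, ← Polynomial.coeff_zero_eq_eval_zero]
    simp [Polynomial.coeff_X_pow_mul']

lemma aux_main {n : ℕ} (p : MvPolynomial (Fin n) ℝ) (e : Fin n → ℝ) (hrz : IsRealZero p e)
    (a : Fin n → ℝ) (f : Fin n → ℝ) (hf : f ∈ interior (rigidSet p e)) (m : ℕ)
    (hm : ∀ k < m, homogeneousComponent k (auxShift p a) = 0)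
    (h0 : aeval (a - f) (homogeneousComponent m (auxShift p a)) = 0) :
    homogeneousComponent m (auxShift p a) = 0 := by
  set Q := homogeneousComponent m (auxShift p a) with hQ
  have hhom : Q.IsHomogeneous m := homogeneousComponent_isHomogeneous _ _
  have hscale : ∀ (c : ℂ) (y : Fin n → ℂ), aeval (c • y) Q = c ^ m * aeval y Q := by
    intro c y
    rw [aeval_def, aeval_def, eval₂_eq', eval₂_eq', Finset.mul_sum]
    refine Finset.sum_congr rfl fun d hd => ?_
    have hdeg : ∑ i, d i = m := by
      rw [← hhom (mem_support_iff.1 hd), ← Finsupp.degree_eq_sum]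
      exact DFunLike.congr_fun Finsupp.degree_eq_weight_one d
    simp only [Pi.smul_apply, smul_eq_mul, mul_pow, Finset.prod_mul_distrib,
      Finset.prod_pow_eq_pow_sum, hdeg]
    ring
  let v : Fin n → ℂ := fun i => Complex.I * ((f i : ℂ) - a i)
  have hv0 : aeval v Q = 0 := by
    have e1 : v = (-Complex.I) • (algebraMap ℝ ℂ ∘ (a - f)) := by
      funext i; simp [v]; ring
    rw [e1, hscale, MvPolynomial.aeval_algebraMap_apply, h0]
    simp
  have hkey : ∀ (w : Fin n → ℝ) (z : ℂ), aeval (fun i => v i + z * w i) Q = 0 := by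
    intro w z
    have hc : Continuous (fun s : ℝ => f + s • w) := by fun_prop
    have hev : ∀ᶠ s in 𝓝 (0:ℝ), f + s • w ∈ interior (rigidSet p e) := by
      have : ∀ᶠ x in 𝓝 (f + (0:ℝ) • w), x ∈ interior (rigidSet p e) := by
        rw [zero_smul, add_zero]; exact isOpen_interior.mem_nhds hf
      exact (hc.tendsto 0).eventually this
    obtain ⟨δ, hδ, hδb⟩ := Metric.eventually_nhds_iff.1 hev
    obtain ⟨N, hN⟩ := aux_lineBound p
    have hr : 0 < δ / 2 := by positivity
    have bound : ∀ l : ℝ, 0 < l → l < 1 →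
        ‖aeval (fun i => (a i : ℂ) + l * (v i + z * w i)) p‖ ≤
          ‖aeval (fun i => (a i : ℂ) + l * v i) p‖ * (1 + ‖z‖ / (δ / 2)) ^ N := by
      intro l hl hl1
      obtain ⟨P, hP, hP'⟩ := hN (fun i => (a i : ℂ) + l * v i) (fun i => (l : ℂ) * w i)
      have hb := aux_polyBound P N hP 0 (δ / 2) hr (by
        intro u hu
        rw [hP']
        rw [mem_ball_zero_iff] at hu
        have hre := (Complex.abs_re_le_norm u).trans_lt hu
        have him := (Complex.abs_im_le_norm u).trans_lt hu
        have hs : dist (l * u.re + u.im) 0 < δ := by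
          rw [dist_zero_right, Real.norm_eq_abs]
          have h1 := abs_add_le (l * u.re) u.im
          rw [abs_mul, abs_of_pos hl] at h1
          nlinarith [abs_nonneg u.re]
        have := aux_garding' p e _ hrz (hδb hs) (fun i => (a i - f i) - u.im * w i)
          (1 - l * Complex.I) (by simpa using hl.ne')
        convert this using 3
        funext i
        have hu' := Complex.re_add_im u
        simp only [v, Pi.add_apply, Pi.smul_apply, smul_eq_mul]
        nth_rewrite 1 [← hu']
        push_cast
        ring) z
      rw [hP', hP', sub_zero] at hb
      convert hb using 4
      · congr 1
        funext i
        simp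
        ring
      · congr 1
        simp
    obtain ⟨M1, hM1, hM1'⟩ := aux_factor p a m hm (fun i => v i + z * w i)
    obtain ⟨M2, hM2, hM2'⟩ := aux_factor p a m hm v
    have tend : ∀ M : Polynomial ℂ, Tendsto (fun l : ℝ => ‖M.eval (l : ℂ)‖) (𝓝[>] 0) (𝓝 ‖M.eval 0‖) := by
      intro M
      have : Continuous (fun l : ℝ => ‖M.eval (l : ℂ)‖) := by fun_prop
      have := (this.tendsto 0).mono_left (nhdsWithin_le_nhds (s := Set.Ioi 0))
      simpa using this
    have hle : ‖M1.eval 0‖ ≤ ‖M2.eval 0‖ * (1 + ‖z‖ / (δ / 2)) ^ N := by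
      refine le_of_tendsto_of_tendsto (tend M1) ((tend M2).mul_const _) ?_
      filter_upwards [Ioo_mem_nhdsGT (zero_lt_one' ℝ)] with l hl
      have := bound l hl.1 hl.2
      rw [hM1, hM2, norm_mul, norm_mul, mul_assoc] at this
      refine le_of_mul_le_mul_left this ?_
      have := hl.1
      rw [norm_pow, Complex.norm_real, Real.norm_eq_abs, abs_of_pos this]
      positivity
    rw [hM1', hM2', hv0] at hle
    simpa using hle
  apply MvPolynomial.funext
  intro w
  have hu : ∀ u : ℂ, u ≠ 0 → aeval (fun i => u * v i + w i) Q = 0 := by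
    intro u hu
    have e1 : (fun i => u * v i + (w i : ℂ)) = u • (fun i => v i + u⁻¹ * w i) := by
      funext i
      simp
      field_simp
    rw [e1, hscale, hkey w u⁻¹, mul_zero]
  have hc : Continuous (fun u : ℂ => aeval (fun i => u * v i + (w i : ℂ)) Q) :=
    (aux_cont Q).comp (by fun_prop)
  have h1 : (fun u : ℂ => aeval (fun i => u * v i + (w i : ℂ)) Q) = fun _ => 0 :=
    hc.ext_on (dense_compl_singleton (0 : ℂ)) continuous_const (fun u hu' => hu u hu')
  have h2 := congrFun h1 0
  simp only [zero_mul, zero_add] at h2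
  have h3 : aeval (algebraMap ℝ ℂ ∘ w) Q = 0 := h2
  rw [MvPolynomial.aeval_algebraMap_apply] at h3
  have h4 : aeval w Q = 0 := by simpa using h3
  rw [map_zero, ← h4, aeval_eq_eval]

/-- For a real-zero polynomial `p` with respect to `e` and any point `a`,
the multiplicity of `p` at `a` equals the order of vanishing at `t = 1` of the univariate
polynomial `t ↦ p(f + t(a − f))`, for every `f` in the interior of `S_e(p)`. -/
theorem multiplicity_eq_order_of_vanishing_at_one
    {n : ℕ} (p : MvPolynomial (Fin n) ℝ) (e : Fin n → ℝ) (hrz : IsRealZero p e)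
    (a : Fin n → ℝ) (f : Fin n → ℝ) (hf : f ∈ interior (rigidSet p e)) :
    multAt p a = Polynomial.rootMultiplicity 1 (linePoly p f (a - f)) := by
  obtain ⟨hpe, -⟩ := id hrz
  have hne : auxShift p a ≠ 0 := by
    intro h
    have h1 := auxShift_aeval p a (fun i => e i - a i)
    rw [h, map_zero] at h1
    apply hpe
    rw [← MvPolynomial.aeval_eq_eval, h1]
    simp
  have hex : {m | homogeneousComponent m (auxShift p a) ≠ 0}.Nonempty := by
    by_contra hcon
    rw [Set.not_nonempty_iff_eq_empty] at hcon
    apply hne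
    rw [← MvPolynomial.sum_homogeneousComponent (auxShift p a)]
    refine Finset.sum_eq_zero fun k _ => ?_
    by_contra hk
    have : k ∈ {m | homogeneousComponent m (auxShift p a) ≠ 0} := hk
    rw [hcon] at this
    exact this
  set m := multAt p a with hmdef
  have hmin : homogeneousComponent m (auxShift p a) ≠ 0 := Nat.sInf_mem hex
  have hlt : ∀ k < m, homogeneousComponent k (auxShift p a) = 0 := by
    intro k hk
    by_contra hcon
    exact Nat.notMem_of_lt_sInf hk hcon
  have hnz : aeval (a - f) (homogeneousComponent m (auxShift p a)) ≠ 0 := fun h0 =>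
    hmin (aux_main p e hrz a f hf m hlt h0)
  rw [Polynomial.rootMultiplicity_eq_natTrailingDegree]
  have hcomp : (linePoly p f (a - f)).comp (Polynomial.X + Polynomial.C 1) =
      aeval (fun i => Polynomial.C ((a - f) i) * Polynomial.X) (auxShift p a) := by
    rw [auxShift_aeval, linePoly, Polynomial.comp_eq_aeval, ← AlgHom.comp_apply]
    congr 1
    ext1 i
    simp
    ring
  rw [hcomp]
  refine le_antisymm ?_ ?_
  · refine Polynomial.le_natTrailingDegree ?_ ?_
    · intro h
      apply hnz
      rw [← aux_coeff, h, Polynomial.coeff_zero]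
    · intro k hk
      rw [aux_coeff, hlt k hk, map_zero]
  · refine Polynomial.natTrailingDegree_le_of_ne_zero ?_
    rw [aux_coeff]
    exact hnz
end
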